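/- Comparison principle (Bellman case). Let Ω ⊂ ℝ^N be an open set of class W^{2,∞}, let the measures μ_x satisfy (M), the jump function j satisfy (J0) and (J1), and let H be a Hamiltonian of Bellman type satisfying (C), (L) and (B). If u is a bounded upper semicontinuous viscosity subsolution and v a bounded lower semicontinuous viscosity supersolution of u − I[u](x) + H(x,Du) = 0 in Ω with generalized Neumann boundary condition ∂u/∂n = 0 on ∂Ω, then u ≤ v on the closure of Ω. -/

import Mathlib

set_option autoImplicit false

/- Common framework for censored nonlocal Hamilton–Jacobi equations with
Neumann boundary conditions (Barles-type viscosity solutions). -/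

open Set Metric MeasureTheory Filter Topology Function
open scoped RealInnerProductSpace NNReal ENNReal

noncomputable section

namespace Censored

abbrev Euc (N : ℕ) : Type := EuclideanSpace ℝ (Fin N)

variable {N : ℕ}

/-- Signed distance to the boundary of `Ω`, positive inside `Ω`. -/
def sdist (Ω : Set (Euc N)) (x : Euc N) : ℝ := infDist x Ωᶜ - infDist x Ω

/-- A modulus of continuity. -/
def IsModulus (ω : ℝ → ℝ) : Prop :=
  (∀ s, 0 ≤ ω s) ∧ Monotone ω ∧ Tendsto ω (nhdsWithin 0 (Ioi 0)) (nhds 0)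

/-- A `W^{2,∞}` boundary chart for `Ω` at `s`, with radius `r`: a diffeomorphism of
class `W^{2,∞}` (i.e. `C^1` with Lipschitz differential, with inverse of the same
regularity) whose `N`-th component coincides with the signed distance. -/
def IsW2Chart (hN : 0 < N) (Ω : Set (Euc N)) (s : Euc N) (r : ℝ)
    (ψ ψinv : Euc N → Euc N) : Prop :=
  0 < r ∧
  ContDiffOn ℝ 1 ψ (ball s r) ∧
  (∃ L : ℝ≥0, LipschitzOnWith L (fun x => fderiv ℝ ψ x) (ball s r)) ∧
  ContDiffOn ℝ 1 ψinv (ψ '' ball s r) ∧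
  (∃ L : ℝ≥0, LipschitzOnWith L (fun x => fderiv ℝ ψinv x) (ψ '' ball s r)) ∧
  (∀ x ∈ ball s r, ψinv (ψ x) = x) ∧
  (∀ x ∈ ball s r, ψ x ⟨N - 1, Nat.sub_lt hN Nat.one_pos⟩ = sdist Ω x)

/-- Assumption (O): `Ω` is open of class `W^{2,∞}`. -/
def IsW2Domain (hN : 0 < N) (Ω : Set (Euc N)) : Prop :=
  IsOpen Ω ∧ ∀ s ∈ frontier Ω, ∃ r ψ ψinv, IsW2Chart hN Ω s r ψ ψinv

/-- `n` is the exterior unit normal vector field to `∂Ω`:  `n = -D d` where `d` is the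
signed distance (positive inside). -/
def IsExteriorNormal (Ω : Set (Euc N)) (n : Euc N → Euc N) : Prop :=
  ∀ x ∈ frontier Ω, ‖n x‖ = 1 ∧ HasGradientAt (sdist Ω) (-(n x)) x

/-- First part of assumption (M): the measures `μ_x` have a (measurable, nonnegative)
density `g x` with respect to Lebesgue measure, bounded by `Cμ |z|^{-(N+σ)}`. -/
def AssumptionM1 (Ω : Set (Euc N)) (g : Euc N → Euc N → ℝ) (Cμ σ : ℝ) : Prop :=
  0 < Cμ ∧ σ ∈ Ioo (0:ℝ) 1 ∧ (∀ x, Measurable (g x)) ∧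
  (∀ x ∈ closure Ω, ∀ z : Euc N, 0 ≤ g x z) ∧
  (∀ x ∈ closure Ω, ∀ z : Euc N, g x z ≤ Cμ * ‖z‖ ^ (-((N : ℝ) + σ)))

/-- Assumption (M). -/
def AssumptionM (Ω : Set (Euc N)) (g : Euc N → Euc N → ℝ) (Cμ Dμ σ : ℝ) : Prop :=
  AssumptionM1 Ω g Cμ σ ∧ 0 < Dμ ∧
  (∀ x ∈ closure Ω, ∀ y ∈ closure Ω, ∀ z : Euc N,
    |g x z - g y z| ≤ Dμ * ‖x - y‖ * ‖z‖ ^ (-((N : ℝ) + σ)))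

/-- Assumption (J0). -/
def AssumptionJ0 (Ω : Set (Euc N)) (j : Euc N → Euc N → Euc N) (Aj : ℝ) : Prop :=
  ∀ x ∈ closure Ω,
    ContDiff ℝ 1 (j x) ∧ Function.Bijective (j x) ∧
    ContDiff ℝ 1 (Function.invFun (j x)) ∧
    ∀ z : Euc N, ‖fderiv ℝ (Function.invFun (j x)) z‖ ≤ Aj

/-- Assumption (J1). -/
def AssumptionJ1 (Ω : Set (Euc N)) (j : Euc N → Euc N → Euc N) (Cj' Cj Dj : ℝ) : Prop :=
  0 < Cj' ∧ 0 < Cj ∧ 0 < Dj ∧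
  (∀ x ∈ closure Ω, ∀ z : Euc N, Cj' * ‖z‖ ≤ ‖j x z‖ ∧ ‖j x z‖ ≤ Cj * ‖z‖) ∧
  (∀ x ∈ closure Ω, ∀ y ∈ closure Ω, ∀ z : Euc N, ‖j x z - j y z‖ ≤ Dj * ‖z‖ * ‖x - y‖)

/-- The truncated censored nonlocal term over `{|z| ≥ ξ}` (`I^ξ`). -/
def Iout (Ω : Set (Euc N)) (j : Euc N → Euc N → Euc N) (g : Euc N → Euc N → ℝ)
    (ξ : ℝ) (u : Euc N → ℝ) (x : Euc N) : ℝ :=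
  ∫ z in {z : Euc N | ξ ≤ ‖z‖ ∧ x + j x z ∈ closure Ω}, (u (x + j x z) - u x) * g x z

/-- The truncated censored nonlocal term over `{|z| < ξ}` (`I_ξ`). -/
def Iin (Ω : Set (Euc N)) (j : Euc N → Euc N → Euc N) (g : Euc N → Euc N → ℝ)
    (ξ : ℝ) (φ : Euc N → ℝ) (x : Euc N) : ℝ :=
  ∫ z in {z : Euc N | ‖z‖ < ξ ∧ x + j x z ∈ closure Ω}, (φ (x + j x z) - φ x) * g x z

/-- The censored nonlocal operator of order `σ < 1`, as a principal value. -/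
def Ipv (Ω : Set (Euc N)) (j : Euc N → Euc N → Euc N) (g : Euc N → Euc N → ℝ)
    (u : Euc N → ℝ) (x : Euc N) : ℝ :=
  limUnder (nhdsWithin (0:ℝ) (Ioi 0)) (fun δ =>
    ∫ z in {z : Euc N | δ < ‖z‖ ∧ x + j x z ∈ closure Ω}, (u (x + j x z) - u x) * g x z)

/-- `u` is bounded on `S`. -/
def BddOn (u : Euc N → ℝ) (S : Set (Euc N)) : Prop := ∃ M, ∀ x ∈ S, |u x| ≤ M

/-- `u = u(x,t)` is bounded on `S × I`. -/
def BddOnT (u : Euc N → ℝ → ℝ) (S : Set (Euc N)) (I : Set ℝ) : Prop :=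
  ∃ M, ∀ x ∈ S, ∀ t ∈ I, |u x t| ≤ M

/-- Viscosity subsolution, with generalized Neumann boundary conditions, of the
stationary equation `F(x, u, Du, I[u]) = 0` in `Ω`, `∂u/∂n = 0` on `∂Ω`,
for the censored operator determined by `j, g` (with constant `Cj` from (J1)). -/
def IsSubSol (Ω : Set (Euc N)) (j : Euc N → Euc N → Euc N) (g : Euc N → Euc N → ℝ)
    (n : Euc N → Euc N) (Cj : ℝ) (F : Euc N → ℝ → Euc N → ℝ → ℝ) (u : Euc N → ℝ) : Prop :=
  ∀ ξ > (0:ℝ), ∀ φ : Euc N → ℝ, ContDiff ℝ 1 φ →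
    ∀ x ∈ closure Ω,
      (∀ y ∈ closedBall x (Cj * ξ) ∩ closure Ω, u y - φ y ≤ u x - φ x) →
      (x ∈ Ω → F x (u x) (gradient φ x) (Iin Ω j g ξ φ x + Iout Ω j g ξ u x) ≤ 0) ∧
      (x ∈ frontier Ω →
        min (F x (u x) (gradient φ x) (Iin Ω j g ξ φ x + Iout Ω j g ξ u x))
          ⟪gradient φ x, n x⟫ ≤ 0)

/-- Viscosity supersolution, with generalized Neumann boundary conditions. -/
def IsSuperSol (Ω : Set (Euc N)) (j : Euc N → Euc N → Euc N) (g : Euc N → Euc N → ℝ)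
    (n : Euc N → Euc N) (Cj : ℝ) (F : Euc N → ℝ → Euc N → ℝ → ℝ) (v : Euc N → ℝ) : Prop :=
  ∀ ξ > (0:ℝ), ∀ φ : Euc N → ℝ, ContDiff ℝ 1 φ →
    ∀ x ∈ closure Ω,
      (∀ y ∈ closedBall x (Cj * ξ) ∩ closure Ω, v x - φ x ≤ v y - φ y) →
      (x ∈ Ω → 0 ≤ F x (v x) (gradient φ x) (Iin Ω j g ξ φ x + Iout Ω j g ξ v x)) ∧
      (x ∈ frontier Ω →
        0 ≤ max (F x (v x) (gradient φ x) (Iin Ω j g ξ φ x + Iout Ω j g ξ v x))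
          ⟪gradient φ x, n x⟫)

/-- `F` corresponding to the stationary equation `u - I[u] + H(x,Du) = 0`. -/
def statF (H : Euc N → Euc N → ℝ) : Euc N → ℝ → Euc N → ℝ → ℝ :=
  fun x r p I => r - I + H x p

/-- `F` corresponding to the ergodic equation `λ - I[w] - H(x,Dw) = 0`. -/
def ergF (H : Euc N → Euc N → ℝ) (lam : ℝ) : Euc N → ℝ → Euc N → ℝ → ℝ :=
  fun x _ p I => lam - I - H x p

/-- Parabolic viscosity subsolution with generalized Neumann boundary conditions,
for `F(x, t, ∂_t u, u, Du, I[u(·,t)]) = 0` in `Ω × (0,∞)`. -/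
def IsParSubSol (Ω : Set (Euc N)) (j : Euc N → Euc N → Euc N) (g : Euc N → Euc N → ℝ)
    (n : Euc N → Euc N) (Cj : ℝ) (F : Euc N → ℝ → ℝ → ℝ → Euc N → ℝ → ℝ)
    (u : Euc N → ℝ → ℝ) : Prop :=
  ∀ ξ > (0:ℝ), ∀ φ : Euc N → ℝ → ℝ,
    ContDiff ℝ 1 (fun q : Euc N × ℝ => φ q.1 q.2) →
    ∀ x ∈ closure Ω, ∀ t ∈ Ioi (0:ℝ),
      (∀ y ∈ closedBall x (Cj * ξ) ∩ closure Ω, ∀ s ∈ Ioi (0:ℝ), |s - t| ≤ ξ →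
        u y s - φ y s ≤ u x t - φ x t) →
      (x ∈ Ω →
        F x t (deriv (φ x) t) (u x t) (gradient (fun y => φ y t) x)
          (Iin Ω j g ξ (fun y => φ y t) x + Iout Ω j g ξ (fun y => u y t) x) ≤ 0) ∧
      (x ∈ frontier Ω →
        min (F x t (deriv (φ x) t) (u x t) (gradient (fun y => φ y t) x)
              (Iin Ω j g ξ (fun y => φ y t) x + Iout Ω j g ξ (fun y => u y t) x))
          ⟪gradient (fun y => φ y t) x, n x⟫ ≤ 0)

/-- Parabolic viscosity supersolution with generalized Neumann boundary conditions. -/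
def IsParSuperSol (Ω : Set (Euc N)) (j : Euc N → Euc N → Euc N) (g : Euc N → Euc N → ℝ)
    (n : Euc N → Euc N) (Cj : ℝ) (F : Euc N → ℝ → ℝ → ℝ → Euc N → ℝ → ℝ)
    (v : Euc N → ℝ → ℝ) : Prop :=
  ∀ ξ > (0:ℝ), ∀ φ : Euc N → ℝ → ℝ,
    ContDiff ℝ 1 (fun q : Euc N × ℝ => φ q.1 q.2) →
    ∀ x ∈ closure Ω, ∀ t ∈ Ioi (0:ℝ),
      (∀ y ∈ closedBall x (Cj * ξ) ∩ closure Ω, ∀ s ∈ Ioi (0:ℝ), |s - t| ≤ ξ →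
        v x t - φ x t ≤ v y s - φ y s) →
      (x ∈ Ω →
        0 ≤ F x t (deriv (φ x) t) (v x t) (gradient (fun y => φ y t) x)
          (Iin Ω j g ξ (fun y => φ y t) x + Iout Ω j g ξ (fun y => v y t) x)) ∧
      (x ∈ frontier Ω →
        0 ≤ max (F x t (deriv (φ x) t) (v x t) (gradient (fun y => φ y t) x)
              (Iin Ω j g ξ (fun y => φ y t) x + Iout Ω j g ξ (fun y => v y t) x))
          ⟪gradient (fun y => φ y t) x, n x⟫)

/-- `F` for the parabolic equation `∂_t u - I[u] + H(x,t,u,Du) = 0`. -/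
def parF (H : Euc N → ℝ → ℝ → Euc N → ℝ) : Euc N → ℝ → ℝ → ℝ → Euc N → ℝ → ℝ :=
  fun x t pt r p I => pt - I + H x t r p

/-! ### Hamiltonians: Bellman form and coercive form (stationary) -/




/-- `H` is of Bellman type with drift `b` and cost `l` over the control set `A`. -/
def IsBellman {A : Type} (b : Euc N → A → Euc N) (l : Euc N → A → ℝ)
    (H : Euc N → Euc N → ℝ) : Prop :=
  ∀ x p, H x p = ⨆ α : A, (-⟪b x α, p⟫ - l x α)

/-- Continuity and boundedness of the Bellman data `b, l`. -/
def BellmanData {A : Type} [TopologicalSpace A]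
    (b : Euc N → A → Euc N) (l : Euc N → A → ℝ) : Prop :=
  Continuous (fun q : Euc N × A => b q.1 q.2) ∧ (∃ M, ∀ x α, ‖b x α‖ ≤ M) ∧
  Continuous (fun q : Euc N × A => l q.1 q.2) ∧ (∃ M, ∀ x α, |l x α| ≤ M)

/-- Assumption (C): uniform continuity of the cost `l`. -/
def AssumptionC (Ω : Set (Euc N)) {A : Type} (l : Euc N → A → ℝ) : Prop :=
  ∃ ω, IsModulus ω ∧ ∀ (α : A), ∀ x ∈ closure Ω, ∀ y ∈ closure Ω,
    |l x α - l y α| ≤ ω ‖x - y‖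

/-- Assumption (L): uniform Lipschitz continuity of the drift `b`. -/
def AssumptionL (Ω : Set (Euc N)) {A : Type} (b : Euc N → A → Euc N) : Prop :=
  ∃ C > (0:ℝ), ∀ (α : A), ∀ x ∈ closure Ω, ∀ y ∈ closure Ω,
    ‖b x α - b y α‖ ≤ C * ‖x - y‖

/-- The part of the boundary where the drift points inwards for every control. -/
def GammaIn (Ω : Set (Euc N)) (n : Euc N → Euc N) {A : Type}
    (b : Euc N → A → Euc N) : Set (Euc N) :=
  {x | x ∈ frontier Ω ∧ ∀ α : A, ⟪b x α, n x⟫ < 0}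

/-- The part of the boundary where the drift points outwards for every control. -/
def GammaOut (Ω : Set (Euc N)) (n : Euc N → Euc N) {A : Type}
    (b : Euc N → A → Euc N) : Set (Euc N) :=
  {x | x ∈ frontier Ω ∧ ∀ α : A, 0 < ⟪b x α, n x⟫}

/-- The part of the boundary where the drift points both inwards and outwards. -/
def GammaMix (Ω : Set (Euc N)) (n : Euc N → Euc N) {A : Type}
    (b : Euc N → A → Euc N) : Set (Euc N) :=
  {x | x ∈ frontier Ω ∧ ∃ α₁ α₂ : A, ⟪b x α₁, n x⟫ < 0 ∧ 0 < ⟪b x α₂, n x⟫}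

/-- `S` is a union of connected components of `T`. -/
def IsUnionOfComponents (S T : Set (Euc N)) : Prop :=
  S ⊆ T ∧ ∀ x ∈ S, connectedComponentIn T x ⊆ S

/-- Assumption (B). -/
def AssumptionB (Ω : Set (Euc N)) (n : Euc N → Euc N) {A : Type}
    (b : Euc N → A → Euc N) : Prop :=
  GammaIn Ω n b ∪ GammaOut Ω n b ∪ GammaMix Ω n b = frontier Ω ∧
  IsUnionOfComponents (GammaIn Ω n b) (frontier Ω) ∧
  IsUnionOfComponents (GammaOut Ω n b) (frontier Ω) ∧
  IsUnionOfComponents (GammaMix Ω n b) (frontier Ω)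

/-- All the structural assumptions on a Bellman Hamiltonian: (C), (L), (B) together
with continuity and boundedness of the data. -/
def StatBellmanOK (Ω : Set (Euc N)) (n : Euc N → Euc N) {A : Type} [TopologicalSpace A]
    (b : Euc N → A → Euc N) (l : Euc N → A → ℝ) (H : Euc N → Euc N → ℝ) : Prop :=
  BellmanData b l ∧ IsBellman b l H ∧ AssumptionC Ω l ∧ AssumptionL Ω b ∧ AssumptionB Ω n b

/-- Assumption (H1): superfractional coercivity of order `m > σ`. -/
def AssumptionH1 (Ω : Set (Euc N)) (H : Euc N → Euc N → ℝ) (σ m c₀ D : ℝ) : Prop :=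
  σ < m ∧ 0 < c₀ ∧ 0 < D ∧ ∀ x ∈ closure Ω, ∀ p : Euc N, c₀ * ‖p‖ ^ m - D ≤ H x p

/-- Assumption (Ha) (sublinear case) with constant `C` and modulus `ω₁`. -/
def AssumptionHa (H : Euc N → Euc N → ℝ) (C : ℝ) (ω₁ : ℝ → ℝ) : Prop :=
  0 < C ∧ IsModulus ω₁ ∧
  ∀ x y p q : Euc N, H y p - H x q ≤ ω₁ ‖x - y‖ * (1 + ‖p‖) + C * ‖p - q‖

/-- Assumption (Hb) (superlinear case) with constants `m, A, Cb`. -/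
def AssumptionHb (H : Euc N → Euc N → ℝ) (m A Cb : ℝ) : Prop :=
  1 < m ∧ 0 < A ∧ 0 < Cb ∧
  ∀ μ ∈ Ioo (0:ℝ) 1, ∀ x p : Euc N,
    H x p - μ * H x (μ⁻¹ • p) ≤ (1 - μ) * (Cb * (1 - m) * ‖p‖ ^ m + A)

/-- Assumption (Hc) with constant `C` and modulus `ω₁`. -/
def AssumptionHc (H : Euc N → Euc N → ℝ) (m C : ℝ) (ω₁ : ℝ → ℝ) : Prop :=
  0 < C ∧ IsModulus ω₁ ∧
  ∀ x y p q : Euc N,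
    H y p - H x q ≤ ω₁ ‖x - y‖ * (1 + (max ‖p‖ ‖q‖) ^ m)
      + C * ‖p - q‖ * (max ‖p‖ ‖q‖) ^ (m - 1)

/-- The structural assumptions on a coercive Hamiltonian:
(H1), (Ha) (sublinear) or (H1), (Hb), (Hc) (superlinear). -/
def StatCoerciveOK (Ω : Set (Euc N)) (H : Euc N → Euc N → ℝ) (σ : ℝ) : Prop :=
  ∃ m c₀ D, AssumptionH1 Ω H σ m c₀ D ∧
    ((m ≤ 1 ∧ ∃ C ω₁, AssumptionHa H C ω₁) ∨
     (∃ A Cb, AssumptionHb H m A Cb ∧ ∃ C ω₁, AssumptionHc H m C ω₁))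

/-- Assumption (E). -/
def AssumptionE (Ω : Set (Euc N)) (H : Euc N → Euc N → ℝ) : Prop :=
  ∀ R > (0:ℝ), ∃ HR : ℝ, ∀ x ∈ closure Ω, ∀ p : Euc N, ‖p‖ ≤ R → |H x p| ≤ HR

/-! ### Parabolic Hamiltonians and assumptions -/

/-- `H(x,t,r,p)` is of (time-dependent) Bellman type. -/
def IsParBellman {A : Type} (lam : Euc N → ℝ → A → ℝ) (b : Euc N → ℝ → A → Euc N)
    (l : Euc N → ℝ → A → ℝ) (H : Euc N → ℝ → ℝ → Euc N → ℝ) : Prop :=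
  ∀ x t r p, H x t r p = ⨆ α : A, (lam x t α * r - ⟪b x t α, p⟫ - l x t α)

/-- Continuity and boundedness of the parabolic Bellman data. -/
def ParBellmanData {A : Type} [TopologicalSpace A] (lam : Euc N → ℝ → A → ℝ)
    (b : Euc N → ℝ → A → Euc N) (l : Euc N → ℝ → A → ℝ) : Prop :=
  Continuous (fun q : Euc N × ℝ × A => lam q.1 q.2.1 q.2.2) ∧
  (∃ M, ∀ x t α, |lam x t α| ≤ M) ∧
  Continuous (fun q : Euc N × ℝ × A => b q.1 q.2.1 q.2.2) ∧
  (∃ M, ∀ x t α, ‖b x t α‖ ≤ M) ∧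
  Continuous (fun q : Euc N × ℝ × A => l q.1 q.2.1 q.2.2) ∧
  (∃ M, ∀ x t α, |l x t α| ≤ M)

/-- Assumption (C'): uniform continuity of `l` and `λ` in `(x,t)`, uniformly in `α`. -/
def AssumptionC' (Ω : Set (Euc N)) {A : Type} (lam l : Euc N → ℝ → A → ℝ) : Prop :=
  (∃ ω, IsModulus ω ∧ ∀ (α : A), ∀ x ∈ closure Ω, ∀ y ∈ closure Ω,
      ∀ t ∈ Ici (0:ℝ), ∀ s ∈ Ici (0:ℝ), |l x t α - l y s α| ≤ ω (‖x - y‖ + |t - s|)) ∧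
  (∃ ω, IsModulus ω ∧ ∀ (α : A), ∀ x ∈ closure Ω, ∀ y ∈ closure Ω,
      ∀ t ∈ Ici (0:ℝ), ∀ s ∈ Ici (0:ℝ), |lam x t α - lam y s α| ≤ ω (‖x - y‖ + |t - s|))

/-- Assumption (L'): uniform Lipschitz continuity of the drift `b` in `(x,t)`. -/
def AssumptionL' (Ω : Set (Euc N)) {A : Type} (b : Euc N → ℝ → A → Euc N) : Prop :=
  ∃ C > (0:ℝ), ∀ (α : A), ∀ x ∈ closure Ω, ∀ y ∈ closure Ω, ∀ s ∈ Ici (0:ℝ), ∀ t ∈ Ici (0:ℝ),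
    ‖b x s α - b y t α‖ ≤ C * (‖x - y‖ + |s - t|)

/-- Inward part of the boundary for time-dependent drift. -/
def GammaInT (Ω : Set (Euc N)) (n : Euc N → Euc N) {A : Type}
    (b : Euc N → ℝ → A → Euc N) : Set (Euc N) :=
  {x | x ∈ frontier Ω ∧ ∀ t ∈ Ici (0:ℝ), ∀ α : A, ⟪b x t α, n x⟫ < 0}

/-- Outward part of the boundary for time-dependent drift. -/
def GammaOutT (Ω : Set (Euc N)) (n : Euc N → Euc N) {A : Type}
    (b : Euc N → ℝ → A → Euc N) : Set (Euc N) :=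
  {x | x ∈ frontier Ω ∧ ∀ t ∈ Ici (0:ℝ), ∀ α : A, 0 < ⟪b x t α, n x⟫}

/-- Mixed part of the boundary for time-dependent drift. -/
def GammaMixT (Ω : Set (Euc N)) (n : Euc N → Euc N) {A : Type}
    (b : Euc N → ℝ → A → Euc N) : Set (Euc N) :=
  {x | x ∈ frontier Ω ∧ ∀ t ∈ Ici (0:ℝ),
    ∃ α₁ α₂ : A, ⟪b x t α₁, n x⟫ < 0 ∧ 0 < ⟪b x t α₂, n x⟫}

/-- Assumption (B'). -/
def AssumptionB' (Ω : Set (Euc N)) (n : Euc N → Euc N) {A : Type}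
    (b : Euc N → ℝ → A → Euc N) : Prop :=
  GammaInT Ω n b ∪ GammaOutT Ω n b ∪ GammaMixT Ω n b = frontier Ω ∧
  IsUnionOfComponents (GammaInT Ω n b) (frontier Ω) ∧
  IsUnionOfComponents (GammaOutT Ω n b) (frontier Ω) ∧
  IsUnionOfComponents (GammaMixT Ω n b) (frontier Ω)

/-- All the structural assumptions on a parabolic Bellman Hamiltonian: (C'), (L'), (B'). -/
def ParBellmanOK (Ω : Set (Euc N)) (n : Euc N → Euc N) {A : Type} [TopologicalSpace A]
    (lam : Euc N → ℝ → A → ℝ) (b : Euc N → ℝ → A → Euc N) (l : Euc N → ℝ → A → ℝ)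
    (H : Euc N → ℝ → ℝ → Euc N → ℝ) : Prop :=
  ParBellmanData lam b l ∧ IsParBellman lam b l H ∧
  AssumptionC' Ω lam l ∧ AssumptionL' Ω b ∧ AssumptionB' Ω n b

/-- Assumption (H'): monotonicity of `H` in the `u` variable. -/
def AssumptionH' (Ω : Set (Euc N)) (H : Euc N → ℝ → ℝ → Euc N → ℝ) : Prop :=
  ∃ K : ℝ, ∀ R > (0:ℝ), ∃ γ, -K ≤ γ ∧
    ∀ x ∈ closure Ω, ∀ t ∈ Icc (0:ℝ) R, ∀ r s : ℝ, |r| ≤ R → |s| ≤ R → s ≤ r →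
      ∀ p : Euc N, γ * (r - s) ≤ H x t r p - H x t s p

/-- Assumption (H''): the monotonicity constants `γ_R` are bounded below by some `γ₀ > 0`. -/
def AssumptionH'' (Ω : Set (Euc N)) (H : Euc N → ℝ → ℝ → Euc N → ℝ) : Prop :=
  ∃ γ₀ > (0:ℝ), ∀ R > (0:ℝ), ∃ γ, γ₀ ≤ γ ∧
    ∀ x ∈ closure Ω, ∀ t ∈ Icc (0:ℝ) R, ∀ r s : ℝ, |r| ≤ R → |s| ≤ R → s ≤ r →
      ∀ p : Euc N, γ * (r - s) ≤ H x t r p - H x t s p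

/-- Assumption (E'). -/
def AssumptionE' (Ω : Set (Euc N)) (H : Euc N → ℝ → ℝ → Euc N → ℝ) : Prop :=
  ∀ T > (0:ℝ), ∀ R > (0:ℝ), ∃ HR : ℝ, ∀ x ∈ Ω, ∀ t ∈ Icc (0:ℝ) T, ∀ r : ℝ, ∀ p : Euc N,
    |r| ≤ R → ‖p‖ ≤ R → |H x t r p| ≤ HR

/-- Assumption (H0'): separated structure `H(x,t,r,p) = H₀(x,r,p) - f(x,t)`. -/
def AssumptionH0' (H : Euc N → ℝ → ℝ → Euc N → ℝ) : Prop :=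
  ∃ (H₀ : Euc N → ℝ → Euc N → ℝ) (f : Euc N → ℝ → ℝ),
    Continuous (fun q : Euc N × ℝ × Euc N => H₀ q.1 q.2.1 q.2.2) ∧
    UniformContinuous (fun q : Euc N × ℝ => f q.1 q.2) ∧
    (∃ M, ∀ x t, |f x t| ≤ M) ∧
    ∀ x t r p, H x t r p = H₀ x r p - f x t

/-- Assumption (He'): `H` satisfies (H1), (Ha) in `x`, uniformly in `t`
and uniformly on compact sets in `r` (sublinearly coercive case). -/
def AssumptionHe' (Ω : Set (Euc N)) (H : Euc N → ℝ → ℝ → Euc N → ℝ) (σ : ℝ) : Prop :=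
  ∃ m : ℝ, σ < m ∧ m ≤ 1 ∧
    ∀ R > (0:ℝ),
      (∃ c₀ > (0:ℝ), ∃ D > (0:ℝ), ∀ x ∈ closure Ω, ∀ t ∈ Ici (0:ℝ), ∀ r : ℝ, |r| ≤ R →
        ∀ p : Euc N, c₀ * ‖p‖ ^ m - D ≤ H x t r p) ∧
      (∃ C > (0:ℝ), ∃ ω₁, IsModulus ω₁ ∧ ∀ x y : Euc N, ∀ t ∈ Ici (0:ℝ), ∀ r : ℝ, |r| ≤ R →
        ∀ p q : Euc N, H y t r p - H x t r q ≤ ω₁ ‖x - y‖ * (1 + ‖p‖) + C * ‖p - q‖)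

/-- Assumption (He''): `H` satisfies (H1), (Hb), (Hc) in `x`, uniformly in `t`
and uniformly on compact sets in `r` (superlinearly coercive case, exponent `m`). -/
def AssumptionHe'' (Ω : Set (Euc N)) (H : Euc N → ℝ → ℝ → Euc N → ℝ) (σ m : ℝ) : Prop :=
  1 < m ∧ σ < m ∧
  ∀ R > (0:ℝ),
    (∃ c₀ > (0:ℝ), ∃ D > (0:ℝ), ∀ x ∈ closure Ω, ∀ t ∈ Ici (0:ℝ), ∀ r : ℝ, |r| ≤ R →
      ∀ p : Euc N, c₀ * ‖p‖ ^ m - D ≤ H x t r p) ∧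
    (∃ A > (0:ℝ), ∃ Cb > (0:ℝ), ∀ μ ∈ Ioo (0:ℝ) 1, ∀ x ∈ closure Ω, ∀ t ∈ Ici (0:ℝ),
      ∀ r : ℝ, |r| ≤ R → ∀ p : Euc N,
        H x t r p - μ * H x t r (μ⁻¹ • p) ≤ (1 - μ) * (Cb * (1 - m) * ‖p‖ ^ m + A)) ∧
    (∃ C > (0:ℝ), ∃ ω₁, IsModulus ω₁ ∧ ∀ x y : Euc N, ∀ t ∈ Ici (0:ℝ), ∀ r : ℝ, |r| ≤ R →
      ∀ p q : Euc N, H y t r p - H x t r q ≤ ω₁ ‖x - y‖ * (1 + (max ‖p‖ ‖q‖) ^ m)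
        + C * ‖p - q‖ * (max ‖p‖ ‖q‖) ^ (m - 1))

/-- Structural parabolic coercive assumptions: (H0') and (He') or (He''). -/
def ParCoerciveOK (Ω : Set (Euc N)) (H : Euc N → ℝ → ℝ → Euc N → ℝ) (σ : ℝ) : Prop :=
  AssumptionH0' H ∧ (AssumptionHe' Ω H σ ∨ ∃ m, AssumptionHe'' Ω H σ m)

/-! ### Iterative covering property -/

/-- The iterated reachable sets `X_r(x)` of the censored jump process. -/
def Xiter (Ω : Set (Euc N)) (j : Euc N → Euc N → Euc N) (g : Euc N → Euc N → ℝ)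
    (x : Euc N) : ℕ → Set (Euc N)
  | 0 => {x}
  | r + 1 => (⋃ ξ ∈ Xiter Ω j g x r,
      (fun z => ξ + j ξ z) '' closure (Function.support (g ξ))) ∩ closure Ω

/-- Iterative covering property: `𝒳(x) = Ω` (i.e. the closure of the reachable set
is all of `closure Ω`) for every `x ∈ Ω`. -/
def CoveringProperty (Ω : Set (Euc N)) (j : Euc N → Euc N → Euc N)
    (g : Euc N → Euc N → ℝ) : Prop :=
  ∀ x ∈ Ω, closure (⋃ r : ℕ, Xiter Ω j g x r) = closure Ω


section
def kerN (N : ℕ) (σ : ℝ) (z : Euc N) : ℝ := ‖z‖ ^ (-((N : ℝ) + σ))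

def chi (σ : ℝ) (z : Euc N) : ℝ := min (‖z‖ ^ (σ / 2)) (‖z‖ ^ ((1 + σ) / 2))

def kk (σ : ℝ) (z : Euc N) : ℝ := chi σ z * kerN N σ z

lemma kerN_nonneg (σ : ℝ) (z : Euc N) : 0 ≤ kerN N σ z := Real.rpow_nonneg (norm_nonneg _) _
lemma chi_nonneg (σ : ℝ) (z : Euc N) : 0 ≤ chi σ z :=
  le_min (Real.rpow_nonneg (norm_nonneg _) _) (Real.rpow_nonneg (norm_nonneg _) _)
lemma kk_nonneg (σ : ℝ) (z : Euc N) : 0 ≤ kk σ z := mul_nonneg (chi_nonneg _ _) (kerN_nonneg _ _)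

lemma kerN_meas (σ : ℝ) : Measurable (kerN N σ) := by
  unfold kerN; fun_prop
lemma chi_meas (σ : ℝ) : Measurable (chi (N := N) σ) := by
  unfold chi; fun_prop
lemma kk_meas (σ : ℝ) : Measurable (kk (N := N) σ) := (chi_meas σ).mul (kerN_meas σ)

lemma kk_int (hN : 0 < N) {σ : ℝ} (hσ : σ ∈ Ioo (0:ℝ) 1) : Integrable (kk (N := N) σ) := by
  have : Nonempty (Fin N) := ⟨⟨0, hN⟩⟩
  have : Nontrivial (Euc N) := inferInstance
  obtain ⟨h0, h1⟩ := hσ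
  have := (integrable_fun_norm_addHaar (volume : Measure (Euc N))
    (f := fun r : ℝ => min (r ^ (σ / 2)) (r ^ ((1 + σ) / 2)) * r ^ (-((N : ℝ) + σ)))).2 ?_
  · exact this
  simp only [finrank_euclideanSpace, Fintype.card_fin, smul_eq_mul]
  rw [← Ioc_union_Ioi_eq_Ioi (zero_le_one (α := ℝ))]
  have hpow : ∀ y : ℝ, 0 < y → y ^ (N - 1) = y ^ ((N : ℝ) - 1) := by
    intro y hy
    rw [← Real.rpow_natCast]; congr 1
    rw [Nat.cast_sub hN]; simp
  have hm : Measurable (fun y : ℝ => y ^ (N - 1) *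
      (min (y ^ (σ / 2)) (y ^ ((1 + σ) / 2)) * y ^ (-((N : ℝ) + σ)))) := by fun_prop
  refine IntegrableOn.union ?_ ?_
  · have hi : IntegrableOn (fun y : ℝ => y ^ ((1 + σ) / 2 - σ - 1)) (Ioc 0 1) := by
      rw [← intervalIntegrable_iff_integrableOn_Ioc_of_le zero_le_one]
      exact intervalIntegral.intervalIntegrable_rpow' (by linarith)
    refine Integrable.mono' hi hm.aestronglyMeasurable ?_
    refine ae_restrict_of_forall_mem measurableSet_Ioc fun y hy => ?_
    have hy0 := hy.1
    rw [Real.norm_of_nonneg (by positivity), hpow y hy0]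
    calc _ ≤ y ^ ((N:ℝ) - 1) * (y ^ ((1 + σ) / 2) * y ^ (-((N : ℝ) + σ))) := by
          gcongr; exact min_le_right _ _
      _ = _ := by rw [← Real.rpow_add hy0, ← Real.rpow_add hy0]; ring_nf
      _ ≤ _ := le_rfl
  · have hi : IntegrableOn (fun y : ℝ => y ^ (σ / 2 - σ - 1)) (Ioi 1) :=
      integrableOn_Ioi_rpow_of_lt (by linarith) one_pos
    refine Integrable.mono' hi hm.aestronglyMeasurable ?_
    refine ae_restrict_of_forall_mem measurableSet_Ioi fun y hy => ?_
    have hy0 : 0 < y := lt_trans one_pos hy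
    rw [Real.norm_of_nonneg (by positivity), hpow y hy0]
    calc _ ≤ y ^ ((N:ℝ) - 1) * (y ^ (σ / 2) * y ^ (-((N : ℝ) + σ))) := by
          gcongr; exact min_le_left _ _
      _ = _ := by rw [← Real.rpow_add hy0, ← Real.rpow_add hy0]; ring_nf
      _ ≤ _ := le_rfl

lemma chi_lower {σ : ℝ} (h0 : 0 < σ) {η : ℝ} (hη : 0 < η) :
    ∃ c > 0, ∀ z : Euc N, η ≤ ‖z‖ → c ≤ chi σ z := by
  refine ⟨min (η ^ (σ / 2)) (η ^ ((1 + σ) / 2)), ?_, fun z hz => ?_⟩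
  · exact lt_min (Real.rpow_pos_of_pos hη _) (Real.rpow_pos_of_pos hη _)
  · unfold chi
    gcongr

lemma ker_le_kk {σ : ℝ} (h0 : 0 < σ) {η : ℝ} (hη : 0 < η) :
    ∃ c > 0, ∀ z : Euc N, η ≤ ‖z‖ → kerN N σ z ≤ c * kk σ z := by
  obtain ⟨c, hc, h⟩ := chi_lower (N := N) h0 hη
  refine ⟨c⁻¹, by positivity, fun z hz => ?_⟩
  have := mul_le_mul_of_nonneg_right (h z hz) (kerN_nonneg σ z)
  unfold kk
  rw [inv_mul_eq_div, le_div_iff₀ hc]; linarith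

lemma ker_int_far (hN : 0 < N) {σ : ℝ} (hσ : σ ∈ Ioo (0:ℝ) 1) {η : ℝ} (hη : 0 < η) :
    IntegrableOn (kerN N σ) {z | η ≤ ‖z‖} := by
  obtain ⟨c, hc, h⟩ := ker_le_kk (N := N) hσ.1 hη
  refine Integrable.mono' ((kk_int hN hσ).const_mul c).integrableOn
    (kerN_meas σ).aestronglyMeasurable ?_
  refine ae_restrict_of_forall_mem (measurableSet_le measurable_const measurable_norm) fun y hy => ?_
  rw [Real.norm_of_nonneg (kerN_nonneg _ _)]
  exact h y hy

lemma min_one_le_rpow {s p : ℝ} (hs : 0 ≤ s) (hp0 : 0 ≤ p) (hp : p ≤ 1) : min 1 s ≤ s ^ p := by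
  rcases le_total 1 s with h | h
  · exact (min_le_left _ _).trans (Real.one_le_rpow h hp0)
  · refine (min_le_right _ _).trans ?_
    rcases hs.eq_or_lt with rfl | hs
    · positivity
    · simpa using Real.rpow_le_rpow_of_exponent_ge hs h hp

lemma min_div_le {σ : ℝ} (hσ : σ ∈ Ioo (0:ℝ) 1) {ε : ℝ} (hε : 0 < ε) (hε1 : ε ≤ 1) (z : Euc N) :
    min 1 (‖z‖ / ε) ≤ ε ^ (-((1 + σ) / 2)) * chi σ z := by
  obtain ⟨h0, h1⟩ := hσ
  have key : ∀ p : ℝ, 0 ≤ p → p ≤ (1 + σ) / 2 →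
      min 1 (‖z‖ / ε) ≤ ε ^ (-((1 + σ) / 2)) * ‖z‖ ^ p := by
    intro p hp hp'
    refine (min_one_le_rpow (by positivity) hp (by linarith)).trans ?_
    rw [Real.div_rpow (norm_nonneg _) hε.le, div_eq_mul_inv, mul_comm, ← Real.rpow_neg hε.le]
    refine mul_le_mul_of_nonneg_right ?_ (by positivity)
    exact Real.rpow_le_rpow_of_exponent_ge hε hε1 (by linarith)
  unfold chi
  rw [mul_min_of_nonneg _ _ (by positivity)]
  exact le_min (key _ (by linarith) (by linarith)) (key _ (by linarith) le_rfl)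

lemma min_theta_le {σ : ℝ} (hσ : σ ∈ Ioo (0:ℝ) 1) {θ : ℝ} (hθ : 0 ≤ θ) (hθ1 : θ ≤ 1) (z : Euc N) :
    min 1 (θ * (‖z‖ + ‖z‖ ^ 2)) ≤ 2 * θ ^ (σ / 4) * chi σ z := by
  obtain ⟨h0, h1⟩ := hσ
  set t := ‖z‖ with ht
  have ht0 : 0 ≤ t := norm_nonneg _
  rcases hθ.eq_or_lt with rfl | hθ0
  · rw [Real.zero_rpow (by linarith)]; simp
  have h2 : ∀ p : ℝ, 0 ≤ p → p ≤ 1 → (2:ℝ) ^ p ≤ 2 := fun p _ hp => by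
    simpa using Real.rpow_le_rpow_of_exponent_le (one_le_two) hp
  have key : ∀ p : ℝ, σ / 2 ≤ p → p ≤ (1 + σ) / 2 →
      min 1 (θ * (t + t ^ 2)) ≤ 2 * θ ^ (σ / 4) * t ^ p := by
    intro p hp hp'
    rcases le_total t 1 with h | h
    · calc min 1 (θ * (t + t ^ 2)) ≤ min 1 (2 * θ * t) := by
            refine min_le_min le_rfl ?_
            nlinarith [mul_nonneg hθ ht0]
        _ ≤ (2 * θ * t) ^ p := min_one_le_rpow (by positivity) (by linarith) (by linarith)
        _ = 2 ^ p * θ ^ p * t ^ p := by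
            rw [Real.mul_rpow (by positivity) ht0, Real.mul_rpow (by positivity) hθ]
        _ ≤ _ := by
            refine mul_le_mul_of_nonneg_right (mul_le_mul (h2 p (by linarith) (by linarith)) ?_ (by positivity) (by positivity)) (by positivity)
            · exact Real.rpow_le_rpow_of_exponent_ge hθ0 hθ1 (by linarith)
    · calc min 1 (θ * (t + t ^ 2)) ≤ min 1 (2 * θ * t ^ 2) := by
            refine min_le_min le_rfl ?_
            nlinarith [mul_nonneg hθ (sub_nonneg.2 h), mul_nonneg (mul_nonneg hθ ht0) (sub_nonneg.2 h)]
        _ ≤ (2 * θ * t ^ 2) ^ (p / 2) := min_one_le_rpow (by positivity) (by linarith) (by linarith)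
        _ = 2 ^ (p / 2) * θ ^ (p / 2) * t ^ p := by
            rw [Real.mul_rpow (by positivity) (by positivity), Real.mul_rpow (by positivity) hθ,
              ← Real.rpow_natCast_mul ht0]
            congr 2; push_cast; ring
        _ ≤ _ := by
            refine mul_le_mul_of_nonneg_right (mul_le_mul (h2 _ (by linarith) (by linarith)) ?_ (by positivity) (by positivity)) (by positivity)
            · exact Real.rpow_le_rpow_of_exponent_ge hθ0 hθ1 (by linarith)
  unfold chi
  rw [mul_min_of_nonneg _ _ (by positivity)]
  exact le_min (key _ le_rfl (by linarith)) (key _ (by linarith) le_rfl)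

/-- smallness of the kernel mass near the origin -/
lemma kk_small (hN : 0 < N) {σ : ℝ} (hσ : σ ∈ Ioo (0:ℝ) 1) {κ : ℝ} (hκ : 0 < κ) :
    ∃ ξ0 > 0, ∀ ξ ≤ ξ0, ∫ z in {z : Euc N | ‖z‖ < ξ}, kk σ z ≤ κ := by
  have : Nonempty (Fin N) := ⟨⟨0, hN⟩⟩
  have hi := kk_int hN hσ
  have hmeas : ∀ r : ℝ, MeasurableSet {z : Euc N | ‖z‖ < r} := fun r =>
    measurableSet_lt measurable_norm measurable_const
  have ht : Tendsto (fun k : ℕ => ∫ z in {z : Euc N | ‖z‖ < 1 / ((k:ℝ) + 1)}, kk σ z) atTop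
      (𝓝 (∫ z in ⋂ k : ℕ, {z : Euc N | ‖z‖ < 1 / ((k:ℝ) + 1)}, kk σ z)) := by
    refine tendsto_setIntegral_of_antitone (fun k => hmeas _) ?_ ⟨0, hi.integrableOn⟩
    intro a b hab z hz
    have hz' : ‖z‖ < 1 / ((b:ℝ) + 1) := hz
    have : 1 / ((b:ℝ) + 1) ≤ 1 / ((a:ℝ) + 1) := by gcongr
    exact lt_of_lt_of_le hz' this
  have hz : (⋂ k : ℕ, {z : Euc N | ‖z‖ < 1 / ((k:ℝ) + 1)}) = {0} := by
    ext z
    simp only [mem_iInter, mem_ofPred_eq, mem_singleton_iff]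
    constructor
    · intro h
      by_contra hne
      obtain ⟨k, hk⟩ := exists_nat_one_div_lt (norm_pos_iff.2 hne)
      exact absurd (h k) (not_lt.2 hk.le)
    · rintro rfl k; simp; positivity
  rw [hz] at ht
  have h0 : ∫ z in ({0} : Set (Euc N)), kk σ z = 0 := by
    apply setIntegral_measure_zero
    exact measure_singleton _
  rw [h0] at ht
  obtain ⟨k, hk⟩ := ((tendsto_order.1 ht).2 κ hκ).exists
  refine ⟨1 / ((k:ℝ) + 1), by positivity, fun ξ hξ => le_trans ?_ hk.le⟩
  refine setIntegral_mono_set hi.integrableOn (ae_of_all _ fun z => kk_nonneg σ z) ?_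
  exact Eventually.of_forall fun z (hz : ‖z‖ < ξ) => lt_of_lt_of_le hz hξ


end

section
/-- Volume of strips `{|D| ≤ t}` inside balls. -/
lemma strip_vol (hN : 0 < N) {D : Euc N → ℝ} (hDc : Continuous D) {s e : Euc N} {r : ℝ}
    (he : ‖e‖ ≤ 1)
    (hmono : ∀ X ∈ ball s r, ∀ t : ℝ, 0 ≤ t → X + t • e ∈ ball s r → t / 2 ≤ D (X + t • e) - D X) :
    ∃ C ≥ 0, ∀ (p : Euc N) (ρ t : ℝ), 0 < ρ → 0 < t → ball p ρ ⊆ ball s r →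
      (volume : Measure (Euc N)).real {X | X ∈ ball p ρ ∧ |D X| ≤ t} ≤ C * t * ρ ^ (N - 1) := by
  refine ⟨5 * 2 ^ N * (volume : Measure (Euc N)).real (ball 0 1), by positivity, ?_⟩
  intro p ρ t hρ ht hsub
  set T : Set (Euc N) := {X | X ∈ ball p ρ ∧ |D X| ≤ t} with hT
  have hTm : MeasurableSet T :=
    measurableSet_ball.inter (measurableSet_le (hDc.abs.measurable) measurable_const)
  set m : ℕ := ⌊ρ / (5 * t)⌋₊ + 1 with hm
  have hm1 : ρ / (5 * t) ≤ m := by rw [hm]; push_cast; exact (Nat.lt_floor_add_one _).le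
  have htr : ∀ i : ℕ, i < m → 5 * t * i ≤ ρ := by
    intro i hi
    have h1 : i ≤ ⌊ρ / (5 * t)⌋₊ := by omega
    have h2 : (i:ℝ) ≤ ρ / (5 * t) := (Nat.le_floor_iff (by positivity)).1 h1
    rw [le_div_iff₀ (by positivity)] at h2; linarith
  let f : Fin m → Set (Euc N) := fun i => (fun X => X + (5 * t * (i:ℕ)) • e) ⁻¹' T
  have hfm : ∀ i, MeasurableSet (f i) := fun i => hTm.preimage (measurable_add_const _)
  have hfv : ∀ i, volume (f i) = volume T := fun i => measure_preimage_add_right _ _ _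
  have hmon2 : ∀ i k : Fin m, (i:ℕ) < k → ∀ Y, Y ∈ f i → Y ∈ f k → False := by
    intro i k hik Y hi hk
    have hi' : Y + (5 * t * (i:ℕ)) • e ∈ ball p ρ ∧ |D (Y + (5 * t * (i:ℕ)) • e)| ≤ t := hi
    have hk' : Y + (5 * t * (k:ℕ)) • e ∈ ball p ρ ∧ |D (Y + (5 * t * (k:ℕ)) • e)| ≤ t := hk
    have hik' : ((i:ℕ):ℝ) + 1 ≤ (k:ℕ) := by exact_mod_cast hik
    have heq : Y + (5 * t * (k:ℕ)) • e
        = (Y + (5 * t * (i:ℕ)) • e) + (5 * t * ((k:ℕ) - (i:ℕ) : ℝ)) • e := by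
      rw [add_assoc, ← add_smul]; congr 2; ring
    have h0 : 0 ≤ 5 * t * ((k:ℕ) - (i:ℕ) : ℝ) := by
      apply mul_nonneg (by positivity); linarith
    have := hmono _ (hsub hi'.1) _ h0 (heq ▸ hsub hk'.1)
    rw [← heq] at this
    have a1 := (abs_le.1 hi'.2).1
    have a2 := (abs_le.1 hk'.2).2
    have : 5 * t * 1 ≤ 5 * t * ((k:ℕ) - (i:ℕ) : ℝ) := by gcongr; linarith
    linarith
  have hdisj : Pairwise (Function.onFun Disjoint f) := by
    intro i k hik
    rw [Function.onFun, Set.disjoint_left]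
    intro Y hi hk
    rcases lt_or_gt_of_ne (fun h => hik (Fin.ext h) : (i:ℕ) ≠ k) with h | h
    · exact hmon2 i k h Y hi hk
    · exact hmon2 k i h Y hk hi
  have hU : (⋃ i, f i) ⊆ ball p (2 * ρ) := by
    intro Y hY
    obtain ⟨i, hi⟩ := mem_iUnion.1 hY
    have hi' : Y + (5 * t * (i:ℕ)) • e ∈ ball p ρ ∧ |D (Y + (5 * t * (i:ℕ)) • e)| ≤ t := hi
    have h1 := hi'.1
    rw [mem_ball, dist_eq_norm] at h1 ⊢
    have h2 : ‖(5 * t * (i:ℕ)) • e‖ ≤ ρ := by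
      rw [norm_smul, Real.norm_of_nonneg (by positivity)]
      have := htr i i.2
      nlinarith [norm_nonneg e, mul_nonneg (mul_nonneg (by norm_num : (0:ℝ) ≤ 5) ht.le) (Nat.cast_nonneg (α := ℝ) (i:ℕ))]
    calc ‖Y - p‖ = ‖(Y + (5 * t * (i:ℕ)) • e - p) - (5 * t * (i:ℕ)) • e‖ := by congr 1; abel
      _ ≤ _ := norm_sub_le _ _
      _ < 2 * ρ := by linarith
  have hsum : (m : ℝ) * (volume : Measure (Euc N)).real T ≤
      (2 * ρ) ^ N * (volume : Measure (Euc N)).real (ball 0 1) := by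
    have h1 : volume (⋃ i, f i) = m * volume T := by
      rw [measure_iUnion hdisj hfm, tsum_fintype]
      simp [hfv]
    have h2 : (m:ℝ≥0∞) * volume T ≤
        ENNReal.ofReal ((2 * ρ) ^ N) * volume (ball (0 : Euc N) 1) := by
      rw [← h1]
      refine (measure_mono hU).trans ?_
      have : Nonempty (Fin N) := ⟨⟨0, hN⟩⟩
      rw [Measure.addHaar_ball _ _ (by positivity)]
      simp
    have h3 := ENNReal.toReal_mono (ENNReal.mul_ne_top ENNReal.ofReal_ne_top measure_ball_lt_top.ne) h2
    rw [ENNReal.toReal_mul, ENNReal.toReal_mul, ENNReal.toReal_ofReal (by positivity)] at h3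
    simpa [Measure.real] using h3
  have hv0 : 0 ≤ (volume : Measure (Euc N)).real T := measureReal_nonneg
  have h4 : ρ / (5 * t) * (volume : Measure (Euc N)).real T ≤
      (2 * ρ) ^ N * (volume : Measure (Euc N)).real (ball 0 1) :=
    (mul_le_mul_of_nonneg_right hm1 hv0).trans hsum
  obtain ⟨k, rfl⟩ : ∃ k, N = k + 1 := ⟨N - 1, by omega⟩
  rw [mul_pow, pow_succ ρ k, div_mul_eq_mul_div, div_le_iff₀ (by positivity)] at h4
  simp only [Nat.add_sub_cancel]
  have : ρ * (volume : Measure (Euc (k+1))).real T ≤ ρ * (5 * 2 ^ (k+1) * (volume : Measure (Euc (k+1))).real (ball 0 1) * t * ρ ^ k) := by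
    refine h4.trans (le_of_eq ?_); ring
  exact le_of_mul_le_mul_left this hρ

lemma image_vol_le (K : ℝ≥0) : ∀ (f : Euc N → Euc N), LipschitzWith K f →
    ∀ s : Set (Euc N), volume (f '' s) ≤ (K:ℝ≥0∞) ^ N * volume s := by
  intro f hf s
  have h1 := Measure.isAddLeftInvariant_eq_smul (volume : Measure (Euc N))
    (Measure.hausdorffMeasure (X := Euc N) (Module.finrank ℝ (Euc N)))
  rw [h1]
  simp only [Measure.smul_apply, finrank_euclideanSpace, Fintype.card_fin]
  have h2 := (hf.lipschitzOnWith (s := s)).hausdorffMeasure_image_le (d := (N:ℝ)) (by positivity)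
  rw [ENNReal.rpow_natCast] at h2
  calc _ ≤ _ := smul_le_smul_of_nonneg_left h2 (by positivity)
    _ = _ := by rw [mul_smul_comm]

end

section
structure GoodD (D : Euc N → ℝ) (s : Euc N) (r CD : ℝ) : Prop where
  r_pos : 0 < r
  CD_nonneg : 0 ≤ CD
  lip : ∀ x y, |D x - D y| ≤ 2 * ‖x - y‖
  cd : ContDiffOn ℝ 1 D (ball s r)
  dlip : ∀ x ∈ ball s r, ∀ y ∈ ball s r, ‖fderiv ℝ D x - fderiv ℝ D y‖ ≤ CD * ‖x - y‖

lemma sdist_lip (Ω : Set (Euc N)) (x y : Euc N) : |sdist Ω x - sdist Ω y| ≤ 2 * ‖x - y‖ := by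
  unfold sdist
  have h1 := (Metric.lipschitz_infDist_pt (Ωᶜ)).dist_le_mul x y
  have h2 := (Metric.lipschitz_infDist_pt Ω).dist_le_mul x y
  rw [Real.dist_eq, dist_eq_norm] at h1 h2
  simp only [NNReal.coe_one, one_mul] at h1 h2
  rw [abs_le] at *
  constructor <;> linarith

lemma sdist_nonneg {Ω : Set (Euc N)} {x : Euc N} (hx : x ∈ closure Ω) : 0 ≤ sdist Ω x := by
  unfold sdist
  rw [infDist_zero_of_mem_closure hx]; simpa using infDist_nonneg

lemma sdist_nonpos {Ω : Set (Euc N)} {x : Euc N} (hx : x ∉ Ω) : sdist Ω x ≤ 0 := by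
  unfold sdist
  rw [infDist_zero_of_mem (show x ∈ Ωᶜ from hx)]; simpa using infDist_nonneg

lemma sdist_frontier {Ω : Set (Euc N)} (ho : IsOpen Ω) {x : Euc N} (hx : x ∈ frontier Ω) :
    sdist Ω x = 0 := by
  have h1 := sdist_nonneg (frontier_subset_closure hx)
  have h2 : x ∉ Ω := by
    rw [ho.frontier_eq] at hx; exact hx.2
  exact le_antisymm (sdist_nonpos h2) h1

lemma goodD_sdist {hN : 0 < N} {Ω : Set (Euc N)} (hΩ : IsW2Domain hN Ω) {s : Euc N}
    (hs : s ∈ frontier Ω) : ∃ r CD, GoodD (sdist Ω) s r CD := by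
  obtain ⟨r, ψ, ψi, hr, hc, ⟨L, hL⟩, -, -, -, hd⟩ := hΩ.2 s hs
  set i : Fin N := ⟨N - 1, Nat.sub_lt hN Nat.one_pos⟩
  let P : Euc N →L[ℝ] ℝ := EuclideanSpace.proj i
  have heq : ∀ x ∈ ball s r, sdist Ω x = P (ψ x) := fun x hx => (hd x hx).symm
  have hcd : ContDiffOn ℝ 1 (sdist Ω) (ball s r) :=
    (P.contDiff.comp_contDiffOn hc).congr heq
  have hf : ∀ x ∈ ball s r, fderiv ℝ (sdist Ω) x = P.comp (fderiv ℝ ψ x) := by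
    intro x hx
    have h1 : sdist Ω =ᶠ[𝓝 x] fun x => P (ψ x) := by
      filter_upwards [isOpen_ball.mem_nhds hx] with y hy using heq y hy
    rw [h1.fderiv_eq]
    have h2 : DifferentiableAt ℝ ψ x :=
      (hc.differentiableOn one_ne_zero).differentiableAt (isOpen_ball.mem_nhds hx)
    exact (P.hasFDerivAt.comp x h2.hasFDerivAt).fderiv
  refine ⟨r, ‖P‖ * L, hr, by positivity, sdist_lip Ω, hcd, ?_⟩
  intro x hx y hy
  rw [hf x hx, hf y hy, ← ContinuousLinearMap.comp_sub]
  refine (ContinuousLinearMap.opNorm_comp_le _ _).trans ?_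
  rw [mul_assoc]
  refine mul_le_mul_of_nonneg_left ?_ (norm_nonneg _)
  have := hL.dist_le_mul x hx y hy
  rwa [dist_eq_norm, dist_eq_norm] at this

lemma goodD_zero (s : Euc N) : GoodD (fun _ : Euc N => (0:ℝ)) s 1 0 where
  r_pos := one_pos
  CD_nonneg := le_rfl
  lip := by intro x y; simp
  cd := contDiffOn_const
  dlip := by intro x _ y _; simp

namespace GoodD
variable {D : Euc N → ℝ} {s : Euc N} {r CD : ℝ}

lemma mono (h : GoodD D s r CD) {r' : ℝ} (hr' : 0 < r') (hle : r' ≤ r) : GoodD D s r' CD where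
  r_pos := hr'
  CD_nonneg := h.CD_nonneg
  lip := h.lip
  cd := h.cd.mono (ball_subset_ball hle)
  dlip := fun x hx y hy => h.dlip x (ball_subset_ball hle hx) y (ball_subset_ball hle hy)

lemma continuous (h : GoodD D s r CD) : Continuous D := by
  have : LipschitzWith 2 D := LipschitzWith.of_dist_le_mul fun x y => by
    rw [Real.dist_eq, dist_eq_norm]; exact h.lip x y
  exact this.continuous

lemma diffAt (h : GoodD D s r CD) {x : Euc N} (hx : x ∈ ball s r) : DifferentiableAt ℝ D x :=
  (h.cd.differentiableOn one_ne_zero).differentiableAt (isOpen_ball.mem_nhds hx)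

lemma norm_fderiv_le (h : GoodD D s r CD) (x : Euc N) : ‖fderiv ℝ D x‖ ≤ 2 := by
  have : LipschitzWith 2 D := LipschitzWith.of_dist_le_mul fun x y => by
    rw [Real.dist_eq, dist_eq_norm]; exact h.lip x y
  simpa using norm_fderiv_le_of_lipschitz ℝ this

lemma taylor (h : GoodD D s r CD) {x y : Euc N} (hx : x ∈ ball s r) (hy : y ∈ ball s r) :
    |D y - D x - fderiv ℝ D x (y - x)| ≤ CD * ‖y - x‖ ^ 2 := by
  have hseg : segment ℝ x y ⊆ ball s r := (convex_ball s r).segment_subset hx hy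
  have := (convex_segment x y).norm_image_sub_le_of_norm_fderiv_le' (𝕜 := ℝ)
    (f := D) (C := CD * ‖y - x‖) (φ := fderiv ℝ D x) (fun w hw => h.diffAt (hseg hw))
    (fun w hw => (h.dlip w (hseg hw) x hx).trans ?_)
    (left_mem_segment ℝ x y) (right_mem_segment ℝ x y)
  · rw [Real.norm_eq_abs] at this; rw [pow_two, ← mul_assoc]; exact this
  · refine mul_le_mul_of_nonneg_left ?_ h.CD_nonneg
    have := norm_sub_le_of_mem_segment (hw)
    simpa [norm_sub_rev] using this

lemma four (h : GoodD D s r CD) {x y a b : Euc N} (hx : x ∈ ball s r) (hy : y ∈ ball s r)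
    (hxa : x + a ∈ ball s r) (hya : y + a ∈ ball s r) :
    |D (x + a) - D x - (D (y + b) - D y)| ≤ CD * ‖a‖ * ‖x - y‖ + 2 * ‖a - b‖ := by
  have hseg : segment ℝ x y ⊆ ball s r := (convex_ball s r).segment_subset hx hy
  have hsega : ∀ w ∈ segment ℝ x y, w + a ∈ ball s r := by
    intro w hw
    refine (convex_ball s r).segment_subset hxa hya ?_
    rw [add_comm w, add_comm x, add_comm y]
    exact (mem_segment_translate ℝ a).2 hw
  have hd : ∀ w ∈ segment ℝ x y, HasFDerivAt (fun w => D (w + a) - D w)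
      (fderiv ℝ D (w + a) - fderiv ℝ D w) w := by
    intro w hw
    have h1 := (h.diffAt (hsega w hw)).hasFDerivAt
    have h2 := (h.diffAt (hseg hw)).hasFDerivAt
    have h3 : HasFDerivAt (fun w => D (w + a)) (fderiv ℝ D (w + a)) w := by
      have := h1.comp w ((hasFDerivAt_id w).add_const a)
      simpa [Function.comp_def] using this
    exact h3.sub h2
  have := (convex_segment x y).norm_image_sub_le_of_norm_fderiv_le (𝕜 := ℝ)
    (f := fun w => D (w + a) - D w) (C := CD * ‖a‖) (fun w hw => (hd w hw).differentiableAt)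
    (fun w hw => ?_)
    (right_mem_segment ℝ x y) (left_mem_segment ℝ x y)
  · rw [Real.norm_eq_abs] at this
    have h2 := h.lip (y + a) (y + b)
    rw [add_sub_add_left_eq_sub] at h2
    have e : D (x + a) - D x - (D (y + b) - D y) =
      (D (x + a) - D x - (D (y + a) - D y)) + (D (y + a) - D (y + b)) := by ring
    rw [e]
    exact (abs_add_le _ _).trans (add_le_add this h2)
  · rw [(hd w hw).fderiv]
    refine (h.dlip _ (hsega w hw) _ (hseg hw)).trans ?_
    simp

lemma strip_mono (h : GoodD D s r CD) {e : Euc N} (he : ‖e‖ ≤ 1) (hde : 1 ≤ fderiv ℝ D s e)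
    (hr : CD * r ≤ 1 / 2) :
    ∀ X ∈ ball s r, ∀ t : ℝ, 0 ≤ t → X + t • e ∈ ball s r → t / 2 ≤ D (X + t • e) - D X := by
  intro X hX t ht hX'
  have hs : s ∈ ball s r := mem_ball_self h.r_pos
  have := (convex_ball s r).norm_image_sub_le_of_norm_fderiv_le' (𝕜 := ℝ)
    (f := D) (C := 1 / 2) (φ := fderiv ℝ D s) (fun w hw => h.diffAt hw)
    (fun w hw => (h.dlip w hw s hs).trans ?_) hX hX'
  · rw [Real.norm_eq_abs, add_sub_cancel_left, map_smul, smul_eq_mul, norm_smul,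
      Real.norm_of_nonneg ht] at this
    have h1 := (abs_le.1 this).1
    nlinarith [mul_le_mul_of_nonneg_left he ht]
  · refine le_trans ?_ hr
    refine mul_le_mul_of_nonneg_left ?_ h.CD_nonneg
    rw [← dist_eq_norm]; exact (mem_ball.1 hw).le

end GoodD

end

section
lemma strip_z {Ω : Set (Euc N)} {j : Euc N → Euc N → Euc N} {Aj : ℝ}
    (hJ0 : AssumptionJ0 Ω j Aj) {Cj' Cj Dj : ℝ} (hJ1 : AssumptionJ1 Ω j Cj' Cj Dj)
    (hN : 0 < N) {D : Euc N → ℝ} (hDc : Continuous D) {s e : Euc N} {r : ℝ}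
    (he : ‖e‖ ≤ 1)
    (hmono : ∀ X ∈ ball s r, ∀ t : ℝ, 0 ≤ t → X + t • e ∈ ball s r → t / 2 ≤ D (X + t • e) - D X) :
    ∃ C ≥ 0, ∀ x ∈ closure Ω, ∀ (ρ t : ℝ), 0 < ρ → 0 < t → ball x (Cj * ρ) ⊆ ball s r →
      (volume : Measure (Euc N)).real {z | ‖z‖ < ρ ∧ |D (x + j x z)| ≤ t} ≤ C * t * ρ ^ (N - 1) := by
  obtain ⟨C, hC, h⟩ := strip_vol hN hDc he hmono
  obtain ⟨-, hCj, -, hjb, -⟩ := hJ1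
  refine ⟨(Aj.toNNReal:ℝ) ^ N * C * Cj ^ (N - 1), by positivity, ?_⟩
  intro x hx ρ t hρ ht hsub
  obtain ⟨hj1, hj2, hj3, hj4⟩ := hJ0 x hx
  set K := Aj.toNNReal
  have hLip : LipschitzWith K (Function.invFun (j x)) := by
    refine lipschitzWith_of_nnnorm_fderiv_le (𝕜 := ℝ) (hj3.differentiable one_ne_zero) fun z => ?_
    rw [← NNReal.coe_le_coe]
    exact (hj4 z).trans (Real.le_coe_toNNReal Aj)
  have hLip2 : LipschitzWith K (fun X => Function.invFun (j x) (X - x)) :=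
    LipschitzWith.of_dist_le_mul fun X Y => by
      have := hLip.dist_le_mul (X - x) (Y - x)
      simpa using this
  set T : Set (Euc N) := {X | X ∈ ball x (Cj * ρ) ∧ |D X| ≤ t}
  have hss : {z | ‖z‖ < ρ ∧ |D (x + j x z)| ≤ t} ⊆ (fun X => Function.invFun (j x) (X - x)) '' T := by
    rintro z ⟨hz, hz2⟩
    refine ⟨x + j x z, ⟨?_, hz2⟩, ?_⟩
    · rw [mem_ball, dist_eq_norm, add_sub_cancel_left]
      exact ((hjb x hx z).2).trans_lt (by gcongr)
    · simp only [add_sub_cancel_left]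
      exact Function.leftInverse_invFun hj2.1 z
  have hT : volume T ≠ ∞ := ((measure_mono (fun X hX => hX.1)).trans_lt measure_ball_lt_top).ne
  have h1 := (measure_mono hss).trans (image_vol_le K _ hLip2 T)
  have h2 := ENNReal.toReal_mono (ENNReal.mul_ne_top (by simp) hT) h1
  rw [ENNReal.toReal_mul] at h2
  have h3 := h x (Cj * ρ) t (by positivity) ht hsub
  have h4 : (((K:ℝ≥0∞) ^ N).toReal) = (K:ℝ) ^ N := by simp
  rw [h4] at h2
  calc _ ≤ _ := h2
    _ ≤ (K:ℝ) ^ N * (C * t * (Cj * ρ) ^ (N - 1)) := by gcongr; exact h3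
    _ = _ := by rw [mul_pow]; ring

lemma strip_int {Ω : Set (Euc N)} {j : Euc N → Euc N → Euc N} {Aj : ℝ}
    (hJ0 : AssumptionJ0 Ω j Aj) {Cj' Cj Dj : ℝ} (hJ1 : AssumptionJ1 Ω j Cj' Cj Dj)
    {σ : ℝ} (hσ : σ ∈ Ioo (0:ℝ) 1)
    (hN : 0 < N) {D : Euc N → ℝ} (hDc : Continuous D) {s e : Euc N} {r : ℝ}
    (he : ‖e‖ ≤ 1)
    (hmono : ∀ X ∈ ball s r, ∀ t : ℝ, 0 ≤ t → X + t • e ∈ ball s r → t / 2 ≤ D (X + t • e) - D X) :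
    ∃ C ≥ 0, ∀ x ∈ closure Ω, ∀ (η a : ℝ), 0 < η → η ≤ 1 → 0 < a → ball x (Cj * η) ⊆ ball s r →
      ∫ z in {z | ‖z‖ < η ∧ |D (x + j x z)| ≤ a * ‖z‖}, kk σ z ≤ C * a := by
  obtain ⟨C, hC, h⟩ := strip_z hJ0 hJ1 hN hDc he hmono
  have hCj := hJ1.2.1
  have hNr : (1:ℝ) ≤ N := by exact_mod_cast hN
  obtain ⟨hσ0, hσ1⟩ := hσ
  set p : ℝ := (1 - σ) / 2 with hp
  have hp0 : 0 < p := by rw [hp]; linarith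
  set q : ℝ := p - N with hq
  have hq0 : q < 0 := by rw [hq]; linarith
  set C1 := 2 ^ (-q) * C with hC1
  have h2p : (2:ℝ) ^ (-p) < 1 := by
    apply Real.rpow_lt_one_of_one_lt_of_neg <;> linarith
  set C2 := C1 / (1 - 2 ^ (-p)) with hC2
  have hC1' : 0 ≤ C1 := by positivity
  have hC2' : 0 ≤ C2 := div_nonneg hC1' (by linarith)
  have hC12 : C1 = C2 - C2 * 2 ^ (-p) := by
    rw [hC2]; field_simp [(by linarith : (1:ℝ) - 2 ^ (-p) ≠ 0)]
  refine ⟨C2, hC2', ?_⟩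
  intro x hx η a hη hη1 ha hsub
  have hji : Continuous (j x) := (hJ0 x hx).1.continuous
  have hki := kk_int hN ⟨hσ0, hσ1⟩
  let S : ℝ → Set (Euc N) := fun ρ => {z | ‖z‖ < ρ ∧ |D (x + j x z)| ≤ a * ‖z‖}
  have hSm : ∀ ρ, MeasurableSet (S ρ) := fun ρ =>
    (measurableSet_lt measurable_norm measurable_const).inter
      (measurableSet_le (f := fun z => |D (x + j x z)|) (g := fun z => a * ‖z‖)
        (Continuous.measurable (by fun_prop)) (by fun_prop))
  let F : ℝ → ℝ := fun ρ => ∫ z in S ρ, kk σ z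
  have step : ∀ ρ, 0 < ρ → ρ ≤ η → F ρ ≤ F (ρ / 2) + C1 * a * ρ ^ p := by
    intro ρ hρ hρη
    have hSS : S (ρ / 2) ⊆ S ρ := fun z hz => ⟨by have := hz.1; linarith, hz.2⟩
    have e1 : F ρ = F (ρ / 2) + ∫ z in S ρ \ S (ρ / 2), kk σ z := by
      have := integral_inter_add_sdiff (hSm (ρ / 2)) (hki.integrableOn (s := S ρ))
      rw [inter_eq_self_of_subset_right hSS] at this
      exact this.symm
    rw [e1]
    gcongr
    have hfin : volume (S ρ) < ∞ := by
      refine (measure_mono (fun z hz => ?_)).trans_lt (measure_ball_lt_top (x := (0 : Euc N)) (r := ρ))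
      simpa using hz.1
    have hfin2 : volume (S ρ \ S (ρ / 2)) < ∞ := (measure_mono sdiff_subset).trans_lt hfin
    have hb : ∀ z ∈ S ρ \ S (ρ / 2), ‖kk σ z‖ ≤ (ρ / 2) ^ q := by
      rintro z ⟨hz1, hz2⟩
      have hz3 : ρ / 2 ≤ ‖z‖ := by
        by_contra hcon
        exact hz2 ⟨not_le.1 hcon, hz1.2⟩
      have hz0 : 0 < ‖z‖ := by linarith
      rw [Real.norm_of_nonneg (kk_nonneg _ _)]
      calc kk σ z ≤ ‖z‖ ^ ((1 + σ) / 2) * ‖z‖ ^ (-((N:ℝ) + σ)) :=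
            mul_le_mul_of_nonneg_right (min_le_right _ _) (kerN_nonneg _ _)
        _ = ‖z‖ ^ q := by rw [← Real.rpow_add hz0]; congr 1; rw [hq, hp]; ring
        _ ≤ _ := Real.rpow_le_rpow_of_nonpos (by linarith) hz3 hq0.le
    have h1 := norm_setIntegral_le_of_norm_le_const hfin2 hb
    have h2 : (volume : Measure (Euc N)).real (S ρ \ S (ρ / 2)) ≤ C * (a * ρ) * ρ ^ (N - 1) := by
      refine le_trans ?_ (h x hx ρ (a * ρ) hρ (by positivity) ((ball_subset_ball (by gcongr)).trans hsub))
      refine measureReal_mono (fun z hz => ⟨hz.1.1, hz.1.2.trans ?_⟩) ?_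
      · have := hz.1.1; gcongr
      · refine ((measure_mono (fun z hz => ?_)).trans_lt (measure_ball_lt_top (x := (0 : Euc N)) (r := ρ))).ne
        simpa using hz.1
    have h3 := (le_abs_self _).trans h1
    refine h3.trans ?_
    calc _ ≤ (ρ / 2) ^ q * (C * (a * ρ) * ρ ^ (N - 1)) := by gcongr
      _ = C1 * a * ρ ^ p := by
        have : ρ * ρ ^ (N - 1) = ρ ^ (N : ℝ) := by
          rw [Real.rpow_natCast, ← pow_succ', Nat.sub_add_cancel hN]
        have h5 : ρ ^ p = ρ ^ q * ρ ^ (N:ℝ) := by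
          rw [← Real.rpow_add hρ]; congr 1; rw [hq]; ring
        rw [h5, ← this, hC1, Real.div_rpow hρ.le (by norm_num), Real.rpow_neg (by norm_num)]
        field_simp
  have iter : ∀ n : ℕ, F η - C2 * a * η ^ p ≤ F (η / 2 ^ n) - C2 * a * (η / 2 ^ n) ^ p := by
    intro n
    induction n with
    | zero => simp
    | succ n ih =>
      refine ih.trans ?_
      have h1 := step (η / 2 ^ n) (by positivity) (div_le_self hη.le (one_le_pow₀ one_le_two))
      have h2 : η / 2 ^ (n + 1) = η / 2 ^ n / 2 := by rw [pow_succ]; field_simp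
      rw [h2, Real.div_rpow (x := η / 2 ^ n) (y := 2) (by positivity) (by norm_num)]
      have h3 : (2:ℝ) ^ (-p) = (2 ^ p)⁻¹ := Real.rpow_neg (by norm_num) _
      rw [hC12, h3] at h1
      rw [div_eq_mul_inv ((η / 2 ^ n) ^ p)]
      nlinarith
  have hF : F η ≤ C2 * a * η ^ p := by
    refine le_of_forall_pos_le_add fun κ hκ => ?_
    obtain ⟨ξ0, hξ0, hs⟩ := kk_small hN ⟨hσ0, hσ1⟩ hκ
    obtain ⟨n, hn⟩ := exists_pow_lt_of_lt_one (div_pos hξ0 hη) (by norm_num : (1/2 : ℝ) < 1)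
    have h1 := iter n
    have h2 : F (η / 2 ^ n) ≤ κ := by
      refine le_trans ?_ (hs (η / 2 ^ n) ?_)
      · exact setIntegral_mono_set hki.integrableOn (ae_of_all _ fun z => kk_nonneg σ z)
          (Eventually.of_forall fun z hz => hz.1)
      · rw [lt_div_iff₀ hη] at hn
        calc η / 2 ^ n = (1 / 2) ^ n * η := by rw [div_pow, one_pow]; field_simp
          _ ≤ _ := hn.le
    have h3 : 0 ≤ C2 * a * (η / 2 ^ n) ^ p := by positivity
    linarith
  refine hF.trans ?_
  calc C2 * a * η ^ p ≤ C2 * a * 1 := by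
        gcongr; exact Real.rpow_le_one hη.le hη1 hp0.le
    _ = _ := mul_one _

lemma frontier_null {hN : 0 < N} {Ω : Set (Euc N)} (hΩ : IsW2Domain hN Ω)
    {n : Euc N → Euc N} (hn : IsExteriorNormal Ω n) : volume (frontier Ω) = 0 := by
  apply measure_null_of_locally_null
  intro s hs
  obtain ⟨r, CD, hD⟩ := goodD_sdist hΩ hs
  set r' := min r (1 / (2 * (CD + 1)))
  have hCD := hD.CD_nonneg
  have hr' : 0 < r' := lt_min hD.r_pos (by positivity)
  have hD' := hD.mono hr' (min_le_left _ _)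
  obtain ⟨hn1, hng⟩ := hn s hs
  have hde : 1 ≤ fderiv ℝ (sdist Ω) s (-(n s)) := by
    rw [hng.hasFDerivAt.fderiv]
    simp [hn1]
  have hr2 : CD * r' ≤ 1 / 2 := by
    calc CD * r' ≤ CD * (1 / (2 * (CD + 1))) := by gcongr; exact min_le_right _ _
      _ ≤ 1 / 2 := by rw [mul_one_div, div_le_div_iff₀ (by positivity) (by norm_num)]; linarith
  obtain ⟨C, hC, h⟩ := strip_vol hN hD.continuous (by simp [hn1] : ‖-(n s)‖ ≤ 1)
    (hD'.strip_mono (by simp [hn1]) hde hr2)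
  refine ⟨ball s r' ∩ frontier Ω, inter_mem (mem_nhdsWithin_of_mem_nhds (ball_mem_nhds _ hr')) self_mem_nhdsWithin, ?_⟩
  have hfin : volume (ball s r' ∩ frontier Ω) ≠ ∞ :=
    ((measure_mono inter_subset_left).trans_lt measure_ball_lt_top).ne
  have h0 : (volume : Measure (Euc N)).real (ball s r' ∩ frontier Ω) ≤ 0 := by
    refine le_of_forall_pos_le_add fun κ hκ => ?_
    set t := κ / (C * r' ^ (N - 1) + 1)
    have ht : 0 < t := by positivity
    have h1 := h s r' t hr' ht subset_rfl
    have h2 : (volume : Measure (Euc N)).real (ball s r' ∩ frontier Ω) ≤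
        (volume : Measure (Euc N)).real {X | X ∈ ball s r' ∧ |sdist Ω X| ≤ t} := by
      refine measureReal_mono (fun X hX => ⟨hX.1, ?_⟩)
        ((measure_mono (fun X hX => hX.1)).trans_lt measure_ball_lt_top).ne
      rw [sdist_frontier hΩ.1 hX.2]; simpa using ht.le
    refine (h2.trans h1).trans ?_
    have : C * t * r' ^ (N - 1) = t * (C * r' ^ (N - 1)) := by ring
    rw [this, zero_add]
    calc t * (C * r' ^ (N - 1)) ≤ t * (C * r' ^ (N - 1) + 1) := by gcongr; linarith
      _ = κ := by simp only [t]; field_simp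
  have h1 := le_antisymm h0 measureReal_nonneg
  rw [measureReal_def, ENNReal.toReal_eq_zero_iff] at h1
  exact h1.resolve_right hfin


end

section
def bad (Ω : Set (Euc N)) (j : Euc N → Euc N → Euc N) (x y : Euc N) : Set (Euc N) :=
  {z | ¬ (x + j x z ∈ closure Ω ↔ y + j y z ∈ closure Ω)}

lemma inSet_meas {Ω : Set (Euc N)} {j : Euc N → Euc N → Euc N} {Aj : ℝ}
    (hJ0 : AssumptionJ0 Ω j Aj) {x : Euc N} (hx : x ∈ closure Ω) :
    MeasurableSet {z | x + j x z ∈ closure Ω} := by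
  have hji : Continuous (j x) := (hJ0 x hx).1.continuous
  exact (isClosed_closure.preimage (by fun_prop : Continuous fun z => x + j x z)).measurableSet

lemma bad_meas {Ω : Set (Euc N)} {j : Euc N → Euc N → Euc N} {Aj : ℝ}
    (hJ0 : AssumptionJ0 Ω j Aj) {x y : Euc N} (hx : x ∈ closure Ω) (hy : y ∈ closure Ω) :
    MeasurableSet (bad Ω j x y) := by
  have h1 := inSet_meas hJ0 hx
  have h2 := inSet_meas hJ0 hy
  exact (h1.iff h2).compl

lemma far_meas (η : ℝ) : MeasurableSet {z : Euc N | η ≤ ‖z‖} :=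
  measurableSet_le measurable_const measurable_norm
lemma near_meas (η : ℝ) : MeasurableSet {z : Euc N | ‖z‖ < η} :=
  measurableSet_lt measurable_norm measurable_const

lemma landing_null {Ω : Set (Euc N)} {j : Euc N → Euc N → Euc N} {Aj : ℝ}
    (hJ0 : AssumptionJ0 Ω j Aj) (hfr : volume (frontier Ω) = 0) {x : Euc N} (hx : x ∈ closure Ω) :
    volume {z | x + j x z ∈ frontier Ω} = 0 := by
  obtain ⟨hj1, hj2, hj3, hj4⟩ := hJ0 x hx
  have hLip : LipschitzWith Aj.toNNReal (Function.invFun (j x)) := by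
    refine lipschitzWith_of_nnnorm_fderiv_le (𝕜 := ℝ) (hj3.differentiable one_ne_zero) fun z => ?_
    rw [← NNReal.coe_le_coe]
    exact (hj4 z).trans (Real.le_coe_toNNReal Aj)
  have hLip2 : LipschitzWith Aj.toNNReal (fun X => Function.invFun (j x) (X - x)) :=
    LipschitzWith.of_dist_le_mul fun X Y => by
      have := hLip.dist_le_mul (X - x) (Y - x)
      simpa using this
  have hss : {z | x + j x z ∈ frontier Ω} ⊆
      (fun X => Function.invFun (j x) (X - x)) '' frontier Ω := by
    intro z hz
    refine ⟨x + j x z, hz, ?_⟩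
    simp only [add_sub_cancel_left]
    exact Function.leftInverse_invFun hj2.1 z
  have h1 := (measure_mono hss).trans (image_vol_le _ _ hLip2 (frontier Ω))
  rw [hfr, mul_zero] at h1
  exact le_antisymm h1 (by simp)

lemma bad_far (hN : 0 < N) {Ω : Set (Euc N)} {j : Euc N → Euc N → Euc N} {Aj : ℝ}
    (hJ0 : AssumptionJ0 Ω j Aj) {Cj' Cj Dj : ℝ} (hJ1 : AssumptionJ1 Ω j Cj' Cj Dj)
    (hΩo : IsOpen Ω)
    {σ : ℝ} (hσ : σ ∈ Ioo (0:ℝ) 1) (hfr : volume (frontier Ω) = 0)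
    {s : Euc N} (hs : s ∈ closure Ω) {η : ℝ} (hη : 0 < η) {κ : ℝ} (hκ : 0 < κ) :
    ∃ r > 0, ∀ x ∈ closure Ω, ∀ y ∈ closure Ω, ‖x - s‖ < r → ‖y - s‖ < r →
      ∫ z in bad Ω j x y ∩ {z | η ≤ ‖z‖}, kerN N σ z ≤ κ := by
  set l : Filter (Euc N × Euc N) := 𝓝[closure Ω ×ˢ closure Ω] (s, s) with hl
  have h_int := ker_int_far hN hσ hη
  have hmem : ∀ᶠ q in l, q.1 ∈ closure Ω ∧ q.2 ∈ closure Ω := self_mem_nhdsWithin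
  have hcont : ∀ z, Tendsto (fun x => x + j x z) (𝓝[closure Ω] s) (𝓝 (s + j s z)) := by
    intro z
    have hid : Tendsto (fun x : Euc N => x) (𝓝[closure Ω] s) (𝓝 s) := tendsto_id.mono_left nhdsWithin_le_nhds
    refine hid.add ?_
    rw [tendsto_iff_norm_sub_tendsto_zero]
    have h1 : Tendsto (fun x : Euc N => Dj * ‖z‖ * ‖x - s‖) (𝓝[closure Ω] s) (𝓝 0) := by
      have := (tendsto_iff_norm_sub_tendsto_zero.1 hid).const_mul (Dj * ‖z‖)
      simpa using this
    refine squeeze_zero' (Eventually.of_forall fun _ => norm_nonneg _) ?_ h1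
    filter_upwards [self_mem_nhdsWithin] with x hx using hJ1.2.2.2.2 x hx s hs z
  have hfst : Tendsto (Prod.fst : Euc N × Euc N → Euc N) l (𝓝[closure Ω] s) := by
    rw [hl, nhdsWithin_prod_eq]; exact tendsto_fst
  have hsnd : Tendsto (Prod.snd : Euc N × Euc N → Euc N) l (𝓝[closure Ω] s) := by
    rw [hl, nhdsWithin_prod_eq]; exact tendsto_snd
  have ht : Tendsto (fun q : Euc N × Euc N =>
      ∫ z in {z | η ≤ ‖z‖}, (bad Ω j q.1 q.2).indicator (kerN N σ) z) l
      (𝓝 (∫ z in {z : Euc N | η ≤ ‖z‖}, (0:ℝ))) := by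
    refine tendsto_integral_filter_of_dominated_convergence (kerN N σ) ?_ ?_ h_int ?_
    · filter_upwards [hmem] with q hq
      exact ((kerN_meas σ).indicator (bad_meas hJ0 hq.1 hq.2)).aestronglyMeasurable
    · refine Eventually.of_forall fun q => ae_of_all _ fun z => ?_
      refine (norm_indicator_le_norm_self _ _).trans ?_
      rw [Real.norm_of_nonneg (kerN_nonneg _ _)]
    · refine ae_restrict_of_ae ?_
      have hnull := landing_null hJ0 hfr hs
      filter_upwards [compl_mem_ae_iff.2 hnull] with z hz
      refine tendsto_const_nhds.congr' ?_
      have hz' : s + j s z ∉ frontier Ω := hz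
      have e1 := (hcont z).comp hfst
      have e2 := (hcont z).comp hsnd
      by_cases hin : s + j s z ∈ closure Ω
      · have hO : s + j s z ∈ Ω := by
          by_contra hno
          exact hz' (by rw [hΩo.frontier_eq]; exact ⟨hin, hno⟩)
        filter_upwards [e1.eventually (hΩo.mem_nhds hO), e2.eventually (hΩo.mem_nhds hO)] with q h1 h2
        rw [indicator_of_notMem]
        simp only [bad, mem_ofPred_eq, not_not]
        exact iff_of_true (subset_closure h1) (subset_closure h2)
      · have hO := isClosed_closure.isOpen_compl.mem_nhds hin
        filter_upwards [e1.eventually hO, e2.eventually hO] with q h1 h2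
        rw [indicator_of_notMem]
        simp only [bad, mem_ofPred_eq, not_not]
        exact iff_of_false h1 h2
  rw [integral_zero] at ht
  have hev := (tendsto_order.1 ht).2 κ hκ
  rw [hl, Filter.Eventually, mem_nhdsWithin] at hev
  obtain ⟨U, hUo, hsU, hU⟩ := hev
  obtain ⟨r, hr, hrU⟩ := Metric.isOpen_iff.1 hUo _ hsU
  refine ⟨r, hr, fun x hx y hy hxs hys => ?_⟩
  have hq : (x, y) ∈ U ∩ closure Ω ×ˢ closure Ω := by
    refine ⟨hrU ?_, hx, hy⟩
    rw [mem_ball, Prod.dist_eq, max_lt_iff, dist_eq_norm, dist_eq_norm]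
    exact ⟨hxs, hys⟩
  have h3 := hU hq
  simp only [mem_ofPred_eq] at h3
  rw [setIntegral_indicator (bad_meas hJ0 hx hy), inter_comm] at h3
  exact h3.le

def BadNear (Ω : Set (Euc N)) (j : Euc N → Euc N → Euc N) (σ : ℝ) (D : Euc N → ℝ) (s : Euc N)
    (C5 η r1 : ℝ) : Prop :=
  ∀ ε, 0 < ε → ε ≤ 1 → ∃ τ0 > 0, ∀ x ∈ closure Ω, ∀ y ∈ closure Ω, ‖x - s‖ < r1 → ‖y - s‖ < r1 →
    ‖x - y‖ ≤ ε → |D x - D y| ≤ τ0 → ∫ z in bad Ω j x y ∩ {z | ‖z‖ < η}, kk σ z ≤ C5 * ε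

lemma badNear_int {Ω : Set (Euc N)} {j : Euc N → Euc N → Euc N}
    {Cj' Cj Dj : ℝ} (hJ1 : AssumptionJ1 Ω j Cj' Cj Dj)
    (hΩo : IsOpen Ω) {σ : ℝ} {s : Euc N} (hs : s ∈ Ω) (D : Euc N → ℝ) :
    ∃ C5 ≥ 0, ∃ η > 0, ∃ r1 > 0, BadNear Ω j σ D s C5 η r1 := by
  obtain ⟨r, hr, hrU⟩ := Metric.isOpen_iff.1 hΩo _ hs
  have hCj := hJ1.2.1
  refine ⟨0, le_rfl, r / (2 * Cj), by positivity, r / 2, by positivity, ?_⟩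
  intro ε hε hε1
  refine ⟨1, one_pos, fun x hx y hy hxs hys hxy _ => ?_⟩
  have hh : ∀ x ∈ closure Ω, ‖x - s‖ < r / 2 → ∀ z : Euc N, ‖z‖ < r / (2 * Cj) →
      x + j x z ∈ closure Ω := by
    intro x hx hxs z hz
    apply subset_closure; apply hrU
    rw [mem_ball, dist_eq_norm]
    have h1 := (hJ1.2.2.2.1 x hx z).2
    have h2 : Cj * ‖z‖ < r / 2 := by
      rw [lt_div_iff₀ (by positivity)] at hz; linarith
    calc ‖x + j x z - s‖ = ‖(x - s) + j x z‖ := by congr 1; abel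
      _ ≤ _ := norm_add_le _ _
      _ < r := by linarith
  have he : bad Ω j x y ∩ {z | ‖z‖ < r / (2 * Cj)} = ∅ := by
    ext z
    simp only [bad, mem_inter_iff, mem_ofPred_eq, mem_empty_iff_false, iff_false, not_and]
    intro hb hz
    exact hb (iff_of_true (hh x hx hxs z hz) (hh y hy hys z hz))
  rw [he]; simp

lemma badNear_bdry {hN : 0 < N} {Ω : Set (Euc N)} (hΩ : IsW2Domain hN Ω)
    {n : Euc N → Euc N} (hn : IsExteriorNormal Ω n) {j : Euc N → Euc N → Euc N} {Aj : ℝ}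
    (hJ0 : AssumptionJ0 Ω j Aj) {Cj' Cj Dj : ℝ} (hJ1 : AssumptionJ1 Ω j Cj' Cj Dj)
    {σ : ℝ} (hσ : σ ∈ Ioo (0:ℝ) 1) {s : Euc N} (hs : s ∈ frontier Ω) :
    ∃ C5 ≥ 0, ∃ η > 0, ∃ r1 > 0, BadNear Ω j σ (sdist Ω) s C5 η r1 := by
  obtain ⟨r0, CD, hD0⟩ := goodD_sdist hΩ hs
  set r := min r0 (1 / (2 * (CD + 1)))
  have hCD := hD0.CD_nonneg
  have hr : 0 < r := lt_min hD0.r_pos (by positivity)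
  have hD := hD0.mono hr (min_le_left _ _)
  obtain ⟨hn1, hng⟩ := hn s hs
  have hde : 1 ≤ fderiv ℝ (sdist Ω) s (-(n s)) := by
    rw [hng.hasFDerivAt.fderiv]
    simp [hn1]
  have hr2 : CD * r ≤ 1 / 2 := by
    calc CD * r ≤ CD * (1 / (2 * (CD + 1))) := by gcongr; exact min_le_right _ _
      _ ≤ 1 / 2 := by rw [mul_one_div, div_le_div_iff₀ (by positivity) (by norm_num)]; linarith
  obtain ⟨C, hC, hstrip⟩ := strip_int hJ0 hJ1 hσ hN hD.continuous (by simp [hn1] : ‖-(n s)‖ ≤ 1)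
    (hD.strip_mono (by simp [hn1]) hde hr2)
  obtain ⟨-, hCj, hDj, hjb, hjl⟩ := hJ1
  set C2 := CD * Cj + 2 * Dj with hC2
  have hC2p : 0 ≤ C2 := by positivity
  set η := min 1 (r / (2 * Cj)) with hη
  have hηp : 0 < η := lt_min one_pos (by positivity)
  have hηr : Cj * η ≤ r / 2 := by
    calc Cj * η ≤ Cj * (r / (2 * Cj)) := by gcongr; exact min_le_right _ _
      _ = r / 2 := by field_simp
  refine ⟨1 + C * (C2 + 1), by positivity, η, hηp, r / 2, by positivity, ?_⟩
  intro ε hε hε1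
  obtain ⟨ξ0, hξ0, hsm⟩ := kk_small hN hσ hε
  refine ⟨ε * ξ0, by positivity, fun x hx y hy hxs hys hxy hDxy => ?_⟩
  have hki := kk_int hN hσ
  have hball : ∀ w : Euc N, ‖w - s‖ < r / 2 → ∀ a : Euc N, ‖a‖ < r / 2 → w + a ∈ ball s r := by
    intro w hw a ha
    rw [mem_ball, dist_eq_norm]
    calc ‖w + a - s‖ = ‖(w - s) + a‖ := by congr 1; abel
      _ ≤ _ := norm_add_le _ _
      _ < r := by linarith
  have hsub : bad Ω j x y ∩ {z | ‖z‖ < η} ⊆ {z | ‖z‖ < ξ0} ∪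
      {z | ‖z‖ < η ∧ |sdist Ω (x + j x z)| ≤ ((C2 + 1) * ε) * ‖z‖} := by
    rintro z ⟨hzb, hzη⟩
    by_cases hz : ‖z‖ < ξ0
    · exact Or.inl hz
    refine Or.inr ⟨hzη, ?_⟩
    have ha : ‖j x z‖ < r / 2 :=
      ((hjb x hx z).2).trans_lt (lt_of_lt_of_le (by gcongr; exact hzη) hηr)
    have h4 := hD.four (x := x) (y := y) (a := j x z) (b := j y z)
      (by simpa using hball x hxs 0 (by simpa using half_pos hr))
      (by simpa using hball y hys 0 (by simpa using half_pos hr)) (hball x hxs _ ha) (hball y hys _ ha)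
    have h5 : CD * ‖j x z‖ * ‖x - y‖ + 2 * ‖j x z - j y z‖ ≤ C2 * ε * ‖z‖ := by
      have e1 := (hjb x hx z).2
      have e2 := hjl x hx y hy z
      calc CD * ‖j x z‖ * ‖x - y‖ + 2 * ‖j x z - j y z‖
          ≤ CD * (Cj * ‖z‖) * ‖x - y‖ + 2 * (Dj * ‖z‖ * ‖x - y‖) := by gcongr
        _ = C2 * ‖z‖ * ‖x - y‖ := by rw [hC2]; ring
        _ ≤ C2 * ‖z‖ * ε := by gcongr
        _ = _ := by ring
    have h6 : |sdist Ω x - sdist Ω y| ≤ ε * ‖z‖ :=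
      hDxy.trans (mul_le_mul_of_nonneg_left (not_lt.1 hz) hε.le)
    have h7 := abs_le.1 (h4.trans h5)
    have h8 := abs_le.1 h6
    rw [abs_le]
    by_cases hX : x + j x z ∈ closure Ω
    · have hY : y + j y z ∉ closure Ω := fun hY => hzb (iff_of_true hX hY)
      have d1 := sdist_nonneg hX
      have d2 := sdist_nonpos (fun h => hY (subset_closure h))
      constructor <;> nlinarith [h7.1, h7.2, h8.1, h8.2]
    · have hY : y + j y z ∈ closure Ω := by
        by_contra hY; exact hzb (iff_of_false hX hY)
      have d1 := sdist_nonneg hY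
      have d2 := sdist_nonpos (fun h => hX (subset_closure h))
      constructor <;> nlinarith [h7.1, h7.2, h8.1, h8.2]
  have hxb : ball x (Cj * η) ⊆ ball s r := by
    apply ball_subset_ball'
    rw [dist_eq_norm]; linarith
  have hst := hstrip x hx η ((C2 + 1) * ε) hηp (min_le_left _ _) (by positivity) hxb
  have hnn : ∀ S : Set (Euc N), 0 ≤ᵐ[volume.restrict S] kk σ := fun S => ae_of_all _ fun z => kk_nonneg σ z
  have hji : Continuous (j x) := (hJ0 x hx).1.continuous
  calc _ ≤ ∫ z in {z | ‖z‖ < ξ0} ∪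
      {z | ‖z‖ < η ∧ |sdist Ω (x + j x z)| ≤ ((C2 + 1) * ε) * ‖z‖}, kk σ z :=
        setIntegral_mono_set hki.integrableOn (hnn _) (Eventually.of_forall hsub)
    _ ≤ (∫ z in {z | ‖z‖ < ξ0}, kk σ z) + ∫ z in
      {z | ‖z‖ < η ∧ |sdist Ω (x + j x z)| ≤ ((C2 + 1) * ε) * ‖z‖}, kk σ z := by
        rw [← integral_add_measure hki.integrableOn hki.integrableOn]
        refine integral_mono_measure (Measure.restrict_union_le _ _) ?_ ?_
        · exact ae_of_all _ fun z => kk_nonneg σ z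
        · exact Integrable.add_measure hki.integrableOn hki.integrableOn
    _ ≤ ε + C * ((C2 + 1) * ε) := add_le_add (hsm ξ0 le_rfl) hst
    _ = _ := by ring


end

section
lemma ext_C1 {φ : Euc N → ℝ} {x : Euc N} {ρ : ℝ} (hρ : 0 < ρ) (h : ContDiffOn ℝ 1 φ (ball x ρ)) :
    ∃ Φ : Euc N → ℝ, ContDiff ℝ 1 Φ ∧ ∀ y ∈ closedBall x (ρ / 2), Φ y = φ y := by
  let c : ContDiffBump x := ⟨ρ / 2, 3 * ρ / 4, by positivity, by linarith⟩
  refine ⟨fun y => c y * φ y, ?_, fun y hy => ?_⟩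
  · rw [contDiff_iff_contDiffAt]
    intro y
    by_cases hy : y ∈ ball x ρ
    · exact c.contDiff.contDiffAt.mul (h.contDiffAt (isOpen_ball.mem_nhds hy))
    · have hy2 : y ∈ (closedBall x (3 * ρ / 4))ᶜ := by
        simp only [mem_ball, not_lt, mem_compl_iff, mem_closedBall, not_le] at hy ⊢
        linarith
      have he : (fun y => c y * φ y) =ᶠ[𝓝 y] fun _ => 0 := by
        filter_upwards [isClosed_closedBall.isOpen_compl.mem_nhds hy2] with w hw
        have : c w = 0 := c.zero_of_le_dist (by simp only [mem_compl_iff, mem_closedBall, not_le] at hw; exact hw.le)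
        simp [this]
      exact contDiffAt_const.congr_of_eventuallyEq he
  · simp [c.one_of_mem_closedBall hy]

lemma norm_le_chi {σ : ℝ} (hσ : σ ∈ Ioo (0:ℝ) 1) (z : Euc N) (hz : ‖z‖ ≤ 1) : ‖z‖ ≤ chi σ z := by
  obtain ⟨h0, h1⟩ := hσ
  have key : ∀ p : ℝ, p ≤ 1 → 0 < p → ‖z‖ ≤ ‖z‖ ^ p := by
    intro p hp hp0
    rcases (norm_nonneg z).eq_or_lt with h | h
    · rw [← h, Real.zero_rpow hp0.ne']
    · simpa using Real.rpow_le_rpow_of_exponent_ge h hz hp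
  exact le_min (key _ (by linarith) (by linarith)) (key _ (by linarith) (by linarith))

lemma Iin_small (hN : 0 < N) {Ω : Set (Euc N)} {g : Euc N → Euc N → ℝ} {Cμ σ : ℝ}
    (hM : AssumptionM1 Ω g Cμ σ) {j : Euc N → Euc N → Euc N} {Aj : ℝ} (hJ0 : AssumptionJ0 Ω j Aj)
    {Cj' Cj Dj : ℝ} (hJ1 : AssumptionJ1 Ω j Cj' Cj Dj) {Φ : Euc N → ℝ}
    {x : Euc N} (hΦ : DifferentiableAt ℝ Φ x) (hx : x ∈ closure Ω) {κ : ℝ} (hκ : 0 < κ) :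
    ∃ ξ0 > 0, ∀ ξ, 0 < ξ → ξ < ξ0 → Iin Ω j g ξ Φ x ≤ κ := by
  obtain ⟨hCμ, hσ, hgm, hg0, hg⟩ := hM
  have hO := hΦ.hasFDerivAt.isBigO_sub
  obtain ⟨K, hK, hO⟩ := hO.exists_pos
  rw [Asymptotics.IsBigOWith, Metric.eventually_nhds_iff] at hO
  obtain ⟨r, hr, hO⟩ := hO
  have hCj := hJ1.2.1
  obtain ⟨ξ1, hξ1, hs⟩ := kk_small hN hσ (by positivity : 0 < κ / (K * Cj * Cμ))
  refine ⟨min (min 1 (r / Cj)) ξ1, by positivity, fun ξ hξ hξ0 => ?_⟩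
  have hξa : ξ < 1 := hξ0.trans_le ((min_le_left _ _).trans (min_le_left _ _))
  have hξb : ξ < r / Cj := hξ0.trans_le ((min_le_left _ _).trans (min_le_right _ _))
  have hξc : ξ ≤ ξ1 := (hξ0.trans_le (min_le_right _ _)).le
  have hki := kk_int hN hσ
  have hSm : MeasurableSet {z : Euc N | ‖z‖ < ξ ∧ x + j x z ∈ closure Ω} :=
    (near_meas ξ).inter (inSet_meas hJ0 hx)
  refine (le_abs_self _).trans ?_
  rw [← Real.norm_eq_abs]
  have h1 : ‖Iin Ω j g ξ Φ x‖ ≤ ∫ z in {z : Euc N | ‖z‖ < ξ ∧ x + j x z ∈ closure Ω},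
      K * Cj * Cμ * kk σ z := by
    refine norm_integral_le_of_norm_le (hki.const_mul _).integrableOn ?_
    refine ae_restrict_of_forall_mem hSm fun z hz => ?_
    have hz1 : ‖z‖ ≤ 1 := by have := hz.1; linarith
    have hj := (hJ1.2.2.2.1 x hx z).2
    have hd : dist (x + j x z) x < r := by
      rw [dist_eq_norm, add_sub_cancel_left]
      refine hj.trans_lt ?_
      rw [lt_div_iff₀ hCj] at hξb
      have := hz.1
      nlinarith
    have h2 := hO hd
    rw [add_sub_cancel_left] at h2
    rw [norm_mul, Real.norm_of_nonneg (hg0 x hx z)]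
    calc _ ≤ (K * (Cj * ‖z‖)) * (Cμ * kerN N σ z) := by
          refine mul_le_mul (h2.trans (by gcongr)) (hg x hx z) (hg0 x hx z) (by positivity)
      _ = K * Cj * Cμ * (‖z‖ * kerN N σ z) := by ring
      _ ≤ _ := by
        unfold kk
        gcongr
        · exact kerN_nonneg _ _
        · exact norm_le_chi hσ z hz1
  refine h1.trans ?_
  rw [integral_const_mul]
  have h3 : ∫ z in {z : Euc N | ‖z‖ < ξ ∧ x + j x z ∈ closure Ω}, kk σ z ≤ κ / (K * Cj * Cμ) := by
    refine le_trans ?_ (hs ξ hξc)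
    exact setIntegral_mono_set hki.integrableOn (ae_of_all _ fun z => kk_nonneg σ z)
      (Eventually.of_forall fun z hz => hz.1)
  calc _ ≤ K * Cj * Cμ * (κ / (K * Cj * Cμ)) := by gcongr
    _ = κ := by field_simp

lemma sub_ineq (hN : 0 < N) {Ω : Set (Euc N)} {g : Euc N → Euc N → ℝ} {Cμ σ : ℝ}
    (hM : AssumptionM1 Ω g Cμ σ) {j : Euc N → Euc N → Euc N} {Aj : ℝ} (hJ0 : AssumptionJ0 Ω j Aj)
    {Cj' Cj Dj : ℝ} (hJ1 : AssumptionJ1 Ω j Cj' Cj Dj) {n : Euc N → Euc N}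
    (hΩo : IsOpen Ω)
    {H : Euc N → Euc N → ℝ} {u : Euc N → ℝ} (hsub : IsSubSol Ω j g n Cj (statF H) u)
    {x : Euc N} (hx : x ∈ closure Ω) {φ : Euc N → ℝ} {ρ : ℝ} (hρ : 0 < ρ)
    (hφ : ContDiffOn ℝ 1 φ (ball x ρ)) {p : Euc N} (hp : HasGradientAt φ p x)
    (hmax : ∀ y ∈ ball x ρ, y ∈ closure Ω → u y - φ y ≤ u x - φ x)
    (hbd : x ∈ frontier Ω → 0 < ⟪p, n x⟫) {κ : ℝ} (hκ : 0 < κ) :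
    ∃ ξ0 > 0, ∀ ξ, 0 < ξ → ξ < ξ0 → u x + H x p ≤ κ + Iout Ω j g ξ u x := by
  obtain ⟨Φ, hΦ, hΦe⟩ := ext_C1 hρ hφ
  have hev : Φ =ᶠ[𝓝 x] φ := by
    filter_upwards [closedBall_mem_nhds x (half_pos hρ)] with y hy using hΦe y hy
  have hgr : gradient Φ x = p := (hp.congr_of_eventuallyEq hev).gradient
  obtain ⟨ξ1, hξ1, hI⟩ := Iin_small hN hM hJ0 hJ1 (hΦ.differentiable one_ne_zero x) hx hκ
  have hCj := hJ1.2.1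
  refine ⟨min ξ1 (ρ / (2 * Cj)), by positivity, fun ξ hξ hξ0 => ?_⟩
  have h1 := hI ξ hξ (hξ0.trans_le (min_le_left _ _))
  have h2 : Cj * ξ ≤ ρ / 2 := by
    have := hξ0.trans_le (min_le_right _ _)
    rw [lt_div_iff₀ (by positivity)] at this
    linarith
  have hs := hsub ξ hξ Φ hΦ x hx (by
    rintro y ⟨hy, hyc⟩
    have hy' : y ∈ closedBall x (ρ / 2) := closedBall_subset_closedBall h2 hy
    rw [hΦe y hy', hΦe x (mem_closedBall_self (by positivity))]
    refine hmax y (closedBall_subset_ball (by linarith) hy') hyc)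
  rw [hgr] at hs
  simp only [statF] at hs
  by_cases hxΩ : x ∈ Ω
  · have := hs.1 hxΩ
    linarith
  · have hxf : x ∈ frontier Ω := by rw [hΩo.frontier_eq]; exact ⟨hx, hxΩ⟩
    have h3 := hs.2 hxf
    have h4 := hbd hxf
    rcases min_le_iff.1 h3 with h | h
    · linarith
    · linarith

lemma gradient_neg' (φ : Euc N → ℝ) (x : Euc N) : gradient (fun y => - φ y) x = - gradient φ x := by
  unfold gradient
  rw [← map_neg]
  congr 1
  exact fderiv_neg

lemma super_to_sub {Ω : Set (Euc N)} {g : Euc N → Euc N → ℝ}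
    {j : Euc N → Euc N → Euc N} {Cj : ℝ} {n : Euc N → Euc N}
    {H : Euc N → Euc N → ℝ} {v : Euc N → ℝ} (hsup : IsSuperSol Ω j g n Cj (statF H) v) :
    IsSubSol Ω j g n Cj (statF (fun x p => - H x (-p))) (fun x => - v x) := by
  intro ξ hξ φ hφ x hx hmax
  have h := hsup ξ hξ (fun y => - φ y) hφ.neg x hx (by
    intro y hy
    have := hmax y hy
    linarith)
  have e1 : Iin Ω j g ξ (fun y => - φ y) x = - Iin Ω j g ξ φ x := by
    unfold Iin
    rw [← integral_neg]; congr 1; ext z; ring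
  have e2 : Iout Ω j g ξ (fun y => - v y) x = - Iout Ω j g ξ v x := by
    unfold Iout
    rw [← integral_neg]; congr 1; ext z; ring
  rw [gradient_neg', e1] at h
  simp only [statF] at h ⊢
  rw [e2]
  refine ⟨fun hxo => ?_, fun hxf => ?_⟩
  · have := h.1 hxo; linarith
  · have := h.2 hxf
    rw [inner_neg_left] at this
    rcases le_max_iff.1 this with h' | h'
    · exact min_le_iff.2 (Or.inl (by linarith))
    · exact min_le_iff.2 (Or.inr (by linarith))


end

section
/-- A bounded smooth localisation function. -/
def zeta (x : Euc N) : ℝ := ‖x‖ ^ 2 / (1 + ‖x‖ ^ 2)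

lemma zeta_nonneg (x : Euc N) : 0 ≤ zeta x := by unfold zeta; positivity

lemma zeta_zero : zeta (0 : Euc N) = 0 := by simp [zeta]

lemma zeta_pos {x : Euc N} (hx : x ≠ 0) : 0 < zeta x := by
  have := norm_pos_iff.2 hx
  unfold zeta; positivity

lemma zeta_lip (x y : Euc N) : |zeta x - zeta y| ≤ ‖x - y‖ := by
  have h0 := abs_norm_sub_norm_le x y
  refine le_trans ?_ h0
  unfold zeta
  set s := ‖x‖
  set t := ‖y‖
  have e : s ^ 2 / (1 + s ^ 2) - t ^ 2 / (1 + t ^ 2)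
      = (s - t) * ((s + t) / ((1 + s ^ 2) * (1 + t ^ 2))) := by
    field_simp; ring
  rw [e, abs_mul]
  have hs : 0 ≤ s := norm_nonneg x
  have ht : 0 ≤ t := norm_nonneg y
  refine mul_le_of_le_one_right (abs_nonneg _) ?_
  rw [abs_of_nonneg (by positivity), div_le_one (by positivity)]
  nlinarith [sq_nonneg (s - 1), sq_nonneg (t - 1), mul_nonneg hs ht, sq_nonneg (s * t)]

lemma zeta_contDiff : ContDiff ℝ 1 (zeta : Euc N → ℝ) := by
  have h : ContDiff ℝ 1 (fun x : Euc N => ‖x‖ ^ 2) := contDiff_norm_sq ℝ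
  exact h.div (contDiff_const.add h) (fun x => by positivity)

lemma zeta_far (x : Euc N) (hx : 1 ≤ ‖x‖) : 1 / 2 ≤ zeta x := by
  unfold zeta
  rw [div_le_div_iff₀ (by norm_num) (by positivity)]
  nlinarith

/-- Localisation: a small perturbation with a strict maximum. -/
lemma exists_L {S : Set (Euc N)} (hS : IsClosed S) {w : Euc N → ℝ}
    (hw : UpperSemicontinuousOn w S) {B : ℝ} (hB : ∀ x ∈ S, |w x| ≤ B)
    {x1 : Euc N} (hx1 : x1 ∈ S) (ha : 0 < w x1) {lam : ℝ} (hl : 0 < lam) :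
    ∃ xh ∈ S, ∃ L : Euc N → ℝ, ContDiff ℝ 1 L ∧ (∀ x y, |L x - L y| ≤ lam * ‖x - y‖) ∧
      (∀ x, 0 ≤ L x) ∧ (∀ x ∈ S, x ≠ xh → w x - L x < w xh - L xh) ∧
      w x1 / 2 ≤ w xh - L xh ∧ ∃ R, ∀ x, R < ‖x‖ → B + 5 ≤ L x := by
  have hB0 : 0 ≤ B := (abs_nonneg _).trans (hB x1 hx1)
  set K := 2 * B + 10 with hK
  have hKp : 0 < K := by positivity
  obtain ⟨t, ht, ht1, ht2, ht3⟩ : ∃ t : ℝ, 0 < t ∧ K * t ≤ lam / 2 ∧ t ≤ lam / 2 ∧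
      K * t * ‖x1‖ ≤ w x1 / 2 := by
    refine ⟨min (min (lam / 2 / K) (lam / 2)) (w x1 / 2 / (K * (‖x1‖ + 1))), ?_, ?_, ?_, ?_⟩
    · positivity
    · have : min (min (lam / 2 / K) (lam / 2)) (w x1 / 2 / (K * (‖x1‖ + 1))) ≤ lam / 2 / K :=
        (min_le_left _ _).trans (min_le_left _ _)
      rw [le_div_iff₀ hKp] at this; linarith
    · exact (min_le_left _ _).trans (min_le_right _ _)
    · have h1 : min (min (lam / 2 / K) (lam / 2)) (w x1 / 2 / (K * (‖x1‖ + 1)))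
        ≤ w x1 / 2 / (K * (‖x1‖ + 1)) := min_le_right _ _
      rw [le_div_iff₀ (by positivity)] at h1
      have h2 : 0 ≤ min (min (lam / 2 / K) (lam / 2)) (w x1 / 2 / (K * (‖x1‖ + 1))) := by
        positivity
      nlinarith [mul_nonneg h2 hKp.le]
  set f : Euc N → ℝ := fun x => K * zeta (t • x) with hf
  have hfc : ContDiff ℝ 1 f := contDiff_const.mul (zeta_contDiff.comp (contDiff_const_smul t))
  have hflip : ∀ x y, |f x - f y| ≤ K * t * ‖x - y‖ := by
    intro x y
    have := zeta_lip (t • x) (t • y)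
    rw [← smul_sub, norm_smul, Real.norm_eq_abs, abs_of_pos ht] at this
    simp only [hf]
    rw [← mul_sub, abs_mul, abs_of_pos hKp, mul_assoc]
    exact mul_le_mul_of_nonneg_left this hKp.le
  have hf0 : ∀ x, 0 ≤ f x := fun x => mul_nonneg hKp.le (zeta_nonneg _)
  have hffar : ∀ x, 1 / t < ‖x‖ → B + 5 ≤ f x := by
    intro x hx
    have : 1 ≤ ‖t • x‖ := by
      rw [norm_smul, Real.norm_eq_abs, abs_of_pos ht]
      rw [div_lt_iff₀ ht] at hx; linarith
    have := zeta_far _ this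
    simp only [hf]; nlinarith
  have hfx1 : f x1 ≤ w x1 / 2 := by
    have := hflip x1 0
    have h0 : f 0 = 0 := by simp [hf, zeta_zero]
    rw [h0, sub_zero, sub_zero] at this
    exact (le_abs_self _).trans (this.trans ht3)
  -- maximum
  set R0 := max (1 / t) ‖x1‖
  have hcomp : IsCompact (S ∩ closedBall 0 R0) := (isCompact_closedBall 0 R0).inter_left hS
  have hne : (S ∩ closedBall (0 : Euc N) R0).Nonempty :=
    ⟨x1, hx1, by simp [R0]⟩
  have husc : UpperSemicontinuousOn (fun x => w x + (- f x)) (S ∩ closedBall 0 R0) :=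
    (hw.mono inter_subset_left).add hfc.continuous.neg.continuousOn.upperSemicontinuousOn
  obtain ⟨xh, hxh, hmax⟩ := husc.exists_isMaxOn hne hcomp
  have hmax1 : w x1 - f x1 ≤ w xh - f xh := by
    have := hmax (show x1 ∈ S ∩ closedBall 0 R0 from ⟨hx1, by simp [R0]⟩)
    simp only [mem_ofPred_eq] at this
    linarith
  have hmax2 : ∀ x ∈ S, w x - f x ≤ w xh - f xh := by
    intro x hx
    by_cases hxb : ‖x‖ ≤ R0
    · have := hmax (show x ∈ S ∩ closedBall 0 R0 from ⟨hx, by simpa using hxb⟩)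
      simp only [mem_ofPred_eq] at this
      linarith
    · have h1 := hffar x ((le_max_left _ _).trans_lt (not_le.1 hxb))
      have h2 := (abs_le.1 (hB x hx)).2
      linarith
  refine ⟨xh, hxh.1, fun x => f x + t * zeta (x - xh), ?_, ?_, ?_, ?_, ?_, 1 / t, ?_⟩
  · exact hfc.add (contDiff_const.mul (zeta_contDiff.comp (contDiff_id.sub contDiff_const)))
  · intro x y
    have h1 := hflip x y
    have h2 := zeta_lip (x - xh) (y - xh)
    rw [sub_sub_sub_cancel_right] at h2
    have h3 : |t * zeta (x - xh) - t * zeta (y - xh)| ≤ t * ‖x - y‖ := by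
      rw [← mul_sub, abs_mul, abs_of_pos ht]
      exact mul_le_mul_of_nonneg_left h2 ht.le
    have h4 := abs_add_le (f x - f y) (t * zeta (x - xh) - t * zeta (y - xh))
    have e : f x + t * zeta (x - xh) - (f y + t * zeta (y - xh))
      = (f x - f y) + (t * zeta (x - xh) - t * zeta (y - xh)) := by ring
    rw [e]
    have := norm_nonneg (x - y)
    nlinarith
  · intro x
    have := hf0 x
    have := mul_nonneg ht.le (zeta_nonneg (x - xh))
    linarith
  · intro x hx hne
    have h1 := hmax2 x hx
    have h2 := mul_pos ht (zeta_pos (sub_ne_zero.2 hne))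
    simp only [sub_self, zeta_zero, mul_zero, add_zero]
    linarith
  · simp only [sub_self, zeta_zero, mul_zero, add_zero]
    linarith
  · intro x hx
    have h1 := hffar x hx
    have h2 := mul_nonneg ht.le (zeta_nonneg (x - xh))
    linarith

/-- Existence of near-optimal doubling points. -/
lemma doubling {S : Set (Euc N)} (hS : IsClosed S) {u v L : Euc N → ℝ}
    (hu : UpperSemicontinuousOn u S) (hv : LowerSemicontinuousOn v S)
    (hL : Continuous L) {B : ℝ} (hBu : ∀ x ∈ S, |u x| ≤ B) (hBv : ∀ x ∈ S, |v x| ≤ B)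
    (hL0 : ∀ x, 0 ≤ L x) {xh : Euc N} (hxh : xh ∈ S)
    (hstrict : ∀ x ∈ S, x ≠ xh → u x - v x - L x < u xh - v xh - L xh)
    (hpos : 0 ≤ u xh - v xh - L xh)
    {R : ℝ} (hR : ∀ x, R < ‖x‖ → 2 * B + 5 ≤ L x) {η : ℝ} (hη : 0 < η) :
    ∃ e0 > 0, e0 ≤ 1 ∧ ∀ ε e, 0 < ε → ε ≤ e0 → e ≤ e0 → ∀ x ∈ S, ∀ y ∈ S,
      u xh - v xh - L xh - e ≤ u x - v y - L x - ‖x - y‖ ^ 2 / ε ^ 2 →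
      ‖x - xh‖ < η ∧ ‖y - xh‖ < η ∧ ‖x - y‖ ≤ η * ε ∧ u xh - v xh - L xh - η ≤ u x - v y := by
  have hB0 : 0 ≤ B := (abs_nonneg _).trans (hBu xh hxh)
  set w0 := u xh - v xh - L xh with hw0
  have husc : UpperSemicontinuousOn (fun q : Euc N × Euc N => u q.1 + (-(v q.2)) + -(L q.1))
      (S ×ˢ S) := by
    refine UpperSemicontinuousOn.add (UpperSemicontinuousOn.add ?_ ?_) ?_
    · exact hu.comp continuous_fst.continuousOn (fun q hq => hq.1)
    · have : UpperSemicontinuousOn (fun x => - v x) S := hv.neg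
      exact this.comp continuous_snd.continuousOn (fun q hq => hq.2)
    · exact (hL.comp continuous_fst).neg.continuousOn.upperSemicontinuousOn
  by_contra hcon
  push Not at hcon
  have hex : ∀ k : ℕ, ∃ ε e : ℝ, ∃ x y : Euc N, 0 < ε ∧ ε ≤ 1 / ((k:ℝ) + 1) ∧
      e ≤ 1 / ((k:ℝ) + 1) ∧ x ∈ S ∧ y ∈ S ∧ w0 - e ≤ u x - v y - L x - ‖x - y‖ ^ 2 / ε ^ 2 ∧
      (‖x - xh‖ < η → ‖y - xh‖ < η → ‖x - y‖ ≤ η * ε → u x - v y < w0 - η) := by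
    intro k
    have hk1 : 1 / ((k:ℝ) + 1) ≤ 1 := by
      rw [div_le_one (by positivity)]; linarith [(Nat.cast_nonneg k : (0:ℝ) ≤ k)]
    obtain ⟨ε, e, h1, h2, h3, x, hx, y, hy, h4, h5⟩ := hcon (1 / ((k:ℝ) + 1)) (by positivity) hk1
    exact ⟨ε, e, x, y, h1, h2, h3, hx, hy, h4, h5⟩
  choose ε e x y hε hε1 he hx hy hge hfail using hex
  have hk1 : ∀ k : ℕ, 1 / ((k:ℝ) + 1) ≤ 1 := by
    intro k; rw [div_le_one (by positivity)]; linarith [(Nat.cast_nonneg k : (0:ℝ) ≤ k)]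
  have hsq : ∀ k, ‖x k - y k‖ ^ 2 ≤ (2 * B + 1) * ε k ^ 2 := by
    intro k
    have h1 := (abs_le.1 (hBu _ (hx k))).2
    have h2 := (abs_le.1 (hBv _ (hy k))).1
    have h3 := hL0 (x k)
    have h4 := hge k
    have h5 := (he k).trans (hk1 k)
    have h6 : ‖x k - y k‖ ^ 2 / ε k ^ 2 ≤ 2 * B + 1 := by linarith
    rwa [div_le_iff₀ (by have := hε k; positivity)] at h6
  have hxR : ∀ k, ‖x k‖ ≤ R := by
    intro k
    by_contra hc
    have h0 := hR _ (not_le.1 hc)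
    have h1 := (abs_le.1 (hBu _ (hx k))).2
    have h2 := (abs_le.1 (hBv _ (hy k))).1
    have h4 := hge k
    have h5 := (he k).trans (hk1 k)
    have h6 : 0 ≤ ‖x k - y k‖ ^ 2 / ε k ^ 2 := by positivity
    linarith
  obtain ⟨xs, hxs, φ, hφ, hlim⟩ := (isCompact_closedBall (0 : Euc N) R).tendsto_subseq
    (x := x) (fun k => by simpa using hxR k)
  have hone : Tendsto (fun k : ℕ => 1 / ((k:ℝ) + 1)) atTop (𝓝 0) := tendsto_one_div_add_atTop_nhds_zero_nat
  have hε0 : Tendsto ε atTop (𝓝 0) := squeeze_zero (fun k => (hε k).le) hε1 hone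
  have hxy : Tendsto (fun k => x k - y k) atTop (𝓝 0) := by
    rw [tendsto_zero_iff_norm_tendsto_zero]
    have h1 : Tendsto (fun k => (2 * B + 1) * ε k) atTop (𝓝 0) := by
      simpa using hε0.const_mul (2 * B + 1)
    refine squeeze_zero (fun k => norm_nonneg _) (fun k => ?_) h1
    refine abs_le_of_sq_le_sq' ?_ (by have := (hε k).le; positivity) |>.2
    refine (hsq k).trans ?_
    rw [mul_pow]
    refine mul_le_mul_of_nonneg_right ?_ (by positivity)
    nlinarith
  have hylim : Tendsto (y ∘ φ) atTop (𝓝 xs) := by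
    have := hlim.sub (hxy.comp hφ.tendsto_atTop)
    simpa [Function.comp_def] using this
  have hxsS : xs ∈ S := hS.mem_of_tendsto hlim (Eventually.of_forall fun k => hx _)
  have hpair : Tendsto (fun k => (x (φ k), y (φ k))) atTop (𝓝[S ×ˢ S] (xs, xs)) := by
    refine tendsto_nhdsWithin_iff.2 ⟨hlim.prodMk_nhds hylim, Eventually.of_forall fun k => ⟨hx _, hy _⟩⟩
  have hupper : ∀ c, u xs - v xs - L xs < c →
      ∀ᶠ k in atTop, u (x (φ k)) - v (y (φ k)) - L (x (φ k)) < c := by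
    intro c hc
    have := husc (xs, xs) ⟨hxsS, hxsS⟩ c (by simpa [sub_eq_add_neg] using hc)
    filter_upwards [hpair.eventually this] with k hk
    simpa [sub_eq_add_neg] using hk
  have heφ : ∀ c > 0, ∀ᶠ k in atTop, e (φ k) < c := by
    intro c hc
    have := (hone.comp hφ.tendsto_atTop).eventually (gt_mem_nhds hc)
    filter_upwards [this] with k hk
    exact (he _).trans_lt hk
  have hxseq : xs = xh := by
    by_contra hne
    have h1 := hstrict xs hxsS hne
    set m := (w0 - (u xs - v xs - L xs)) / 2 with hm
    have hmp : 0 < m := by rw [hm]; linarith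
    obtain ⟨k, hk1, hk2⟩ := ((hupper (u xs - v xs - L xs + m) (by linarith)).and (heφ m hmp)).exists
    have h2 := hge (φ k)
    have h3 : 0 ≤ ‖x (φ k) - y (φ k)‖ ^ 2 / ε (φ k) ^ 2 := by positivity
    linarith
  subst hxseq
  have hu2 := hupper (w0 + η ^ 2 / 2) (by rw [hw0]; linarith [sq_pos_of_pos hη])
  have hxn : ∀ᶠ k in atTop, ‖x (φ k) - xs‖ < η := by
    have := (Metric.tendsto_nhds.1 hlim) η hη
    simpa [dist_eq_norm] using this
  have hyn : ∀ᶠ k in atTop, ‖y (φ k) - xs‖ < η := by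
    have := (Metric.tendsto_nhds.1 hylim) η hη
    simpa [dist_eq_norm] using this
  obtain ⟨k, ⟨⟨⟨h1, h2⟩, h3⟩, h4⟩, h5⟩ := ((((hu2.and hxn).and hyn).and
    (heφ (η ^ 2 / 2) (by positivity))).and (heφ η hη)).exists
  have h6 := hge (φ k)
  have h7 := hfail (φ k) h2 h3
  have hεk := hε (φ k)
  have h8 : ‖x (φ k) - y (φ k)‖ ≤ η * ε (φ k) := by
    refine abs_le_of_sq_le_sq' ?_ (by positivity) |>.2
    have : ‖x (φ k) - y (φ k)‖ ^ 2 / ε (φ k) ^ 2 ≤ η ^ 2 := by linarith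
    rw [div_le_iff₀ (by positivity)] at this
    rw [mul_pow]; exact this
  have h9 := h7 h8
  have h10 := hL0 (x (φ k))
  have h11 : 0 ≤ ‖x (φ k) - y (φ k)‖ ^ 2 / ε (φ k) ^ 2 := by positivity
  linarith

/-- Existence of a maximum point of the doubled functional. -/
lemma exists_max {S : Set (Euc N)} (hS : IsClosed S) {u v L : Euc N → ℝ}
    (hu : UpperSemicontinuousOn u S) (hv : LowerSemicontinuousOn v S)
    {B : ℝ} (hBu : ∀ x ∈ S, |u x| ≤ B) (hBv : ∀ x ∈ S, |v x| ≤ B)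
    (hL0 : ∀ x, 0 ≤ L x) {xh : Euc N} (hxh : xh ∈ S)
    (hpos : 0 ≤ u xh - v xh - L xh)
    {R : ℝ} (hR : ∀ x, R < ‖x‖ → 2 * B + 5 ≤ L x)
    {pen : Euc N → Euc N → ℝ} (hpc : Continuous (fun q : Euc N × Euc N => pen q.1 q.2))
    {ε e : ℝ} (hε : 0 < ε) (hε1 : ε ≤ 1) (he1 : e ≤ 1)
    (hlow : ∀ x y, ‖x - y‖ ^ 2 / ε ^ 2 + L x - e ≤ pen x y)
    (hup : pen xh xh ≤ L xh + e) :
    ∃ x ∈ S, ∃ y ∈ S, (∀ x' ∈ S, ∀ y' ∈ S, u x' - v y' - pen x' y' ≤ u x - v y - pen x y) ∧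
      u xh - v xh - L xh - 2 * e ≤ u x - v y - L x - ‖x - y‖ ^ 2 / ε ^ 2 := by
  have hB0 : 0 ≤ B := (abs_nonneg _).trans (hBu xh hxh)
  have husc : UpperSemicontinuousOn (fun q : Euc N × Euc N => u q.1 + (-(v q.2)) + -(pen q.1 q.2))
      (S ×ˢ S) := by
    refine UpperSemicontinuousOn.add (UpperSemicontinuousOn.add ?_ ?_) ?_
    · exact hu.comp continuous_fst.continuousOn (fun q hq => hq.1)
    · have : UpperSemicontinuousOn (fun x => - v x) S := hv.neg
      exact this.comp continuous_snd.continuousOn (fun q hq => hq.2)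
    · exact hpc.neg.continuousOn.upperSemicontinuousOn
  set R0 := max R ‖xh‖ + 2 * B + 5 with hR0
  have hxR0 : ‖xh‖ ≤ R0 := by have := le_max_right R ‖xh‖; linarith
  set Kc : Set (Euc N × Euc N) := (S ×ˢ S) ∩ closedBall 0 R0
  have hcomp : IsCompact Kc := (isCompact_closedBall _ _).inter_left (hS.prod hS)
  have hmem : (xh, xh) ∈ Kc := ⟨⟨hxh, hxh⟩, by simp [Prod.norm_def, hxR0]⟩
  obtain ⟨q, hq, hmax⟩ := (husc.mono inter_subset_left).exists_isMaxOn ⟨_, hmem⟩ hcomp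
  have h0 : u xh - v xh - pen xh xh ≤ u q.1 - v q.2 - pen q.1 q.2 := by
    have := hmax hmem
    simp only [mem_ofPred_eq] at this
    linarith
  refine ⟨q.1, hq.1.1, q.2, hq.1.2, ?_, ?_⟩
  · intro x' hx' y' hy'
    by_cases hin : (x', y') ∈ Kc
    · have := hmax hin
      simp only [mem_ofPred_eq] at this
      linarith
    · have h1 := hlow x' y'
      have h2 := (abs_le.1 (hBu _ hx')).2
      have h3 := (abs_le.1 (hBv _ hy')).1
      have h4 : 2 * B + 5 ≤ ‖x' - y'‖ ^ 2 / ε ^ 2 + L x' := by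
        by_cases hx : ‖x'‖ ≤ max R ‖xh‖
        · have hy : R0 < ‖y'‖ := by
            by_contra hc
            refine hin ⟨⟨hx', hy'⟩, ?_⟩
            simp only [mem_closedBall, dist_zero_right, Prod.norm_def, max_le_iff]
            exact ⟨by linarith, not_lt.1 hc⟩
          have h5 : 2 * B + 5 ≤ ‖x' - y'‖ := by
            have := norm_sub_norm_le y' x'
            rw [norm_sub_rev] at this
            linarith
          have h6 : ‖x' - y'‖ ^ 2 ≤ ‖x' - y'‖ ^ 2 / ε ^ 2 := by
            rw [le_div_iff₀ (by positivity)]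
            refine mul_le_of_le_one_right (by positivity) ?_
            exact pow_le_one₀ hε.le hε1
          have := hL0 x'
          nlinarith
        · have := hR x' ((le_max_left _ _).trans_lt (not_le.1 hx))
          have : 0 ≤ ‖x' - y'‖ ^ 2 / ε ^ 2 := by positivity
          linarith
      linarith
  · have := hlow q.1 q.2
    linarith

end

section
lemma usc_aesm {Ω : Set (Euc N)} {j : Euc N → Euc N → Euc N} {Aj : ℝ}
    (hJ0 : AssumptionJ0 Ω j Aj) {u : Euc N → ℝ} (hu : UpperSemicontinuousOn u (closure Ω))
    {x : Euc N} (hx : x ∈ closure Ω) :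
    AEStronglyMeasurable (fun z => u (x + j x z))
      (volume.restrict {z | x + j x z ∈ closure Ω}) := by
  have hT := inSet_meas hJ0 hx
  have hj : Continuous (j x) := (hJ0 x hx).1.continuous
  have h1 : Measurable ((closure Ω).domRestrict u) :=
    (upperSemicontinuousOn_iff_restrict.2 hu).measurable
  have h2 : Measurable (fun z : {z | x + j x z ∈ closure Ω} =>
      (⟨x + j x z.1, z.2⟩ : closure Ω)) := by
    refine Measurable.subtype_mk ?_
    exact (by fun_prop : Continuous fun z => x + j x z).measurable.comp measurable_subtype_coe
  exact (aemeasurable_restrict_of_measurable_subtype hT (h1.comp h2)).aestronglyMeasurable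

lemma Iout_intble (hN : 0 < N) {Ω : Set (Euc N)} {g : Euc N → Euc N → ℝ} {Cμ σ : ℝ}
    (hM : AssumptionM1 Ω g Cμ σ) {j : Euc N → Euc N → Euc N} {Aj : ℝ} (hJ0 : AssumptionJ0 Ω j Aj)
    {u : Euc N → ℝ} (hu : UpperSemicontinuousOn u (closure Ω)) {B : ℝ}
    (hB : ∀ x ∈ closure Ω, |u x| ≤ B) {x : Euc N} (hx : x ∈ closure Ω) {ξ : ℝ} (hξ : 0 < ξ) :
    IntegrableOn (fun z => (u (x + j x z) - u x) * g x z)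
      {z : Euc N | ξ ≤ ‖z‖ ∧ x + j x z ∈ closure Ω} := by
  obtain ⟨hCμ, hσ, hgm, hg0, hg⟩ := hM
  have hS : MeasurableSet {z : Euc N | ξ ≤ ‖z‖ ∧ x + j x z ∈ closure Ω} :=
    (far_meas ξ).inter (inSet_meas hJ0 hx)
  have hi : IntegrableOn (fun z => 2 * B * Cμ * kerN N σ z)
      {z : Euc N | ξ ≤ ‖z‖ ∧ x + j x z ∈ closure Ω} :=
    ((ker_int_far hN hσ hξ).mono_set (fun z hz => hz.1)).const_mul _
  refine Integrable.mono' hi ?_ ?_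
  · refine AEStronglyMeasurable.mul (AEStronglyMeasurable.sub ?_ aestronglyMeasurable_const)
      (hgm x).aestronglyMeasurable
    exact (usc_aesm hJ0 hu hx).mono_measure (Measure.restrict_mono_set _ (fun z hz => hz.2))
  · refine ae_restrict_of_forall_mem hS fun z hz => ?_
    rw [Real.norm_eq_abs, abs_mul, abs_of_nonneg (hg0 x hx z)]
    have h1 : |u (x + j x z) - u x| ≤ 2 * B := by
      have h1 := abs_le.1 (hB _ hz.2)
      have h2 := abs_le.1 (hB _ hx)
      rw [abs_le]; constructor <;> linarith
    rw [mul_assoc]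
    exact mul_le_mul h1 (hg x hx z) (hg0 x hx z) ((abs_nonneg _).trans h1)

lemma Iout_eq {Ω : Set (Euc N)} {j : Euc N → Euc N → Euc N} {Aj : ℝ} (hJ0 : AssumptionJ0 Ω j Aj)
    (g : Euc N → Euc N → ℝ) (u : Euc N → ℝ) {x : Euc N} (hx : x ∈ closure Ω) (ξ : ℝ) :
    Iout Ω j g ξ u x = ∫ z in {z : Euc N | ξ ≤ ‖z‖},
      {z | x + j x z ∈ closure Ω}.indicator (fun z => (u (x + j x z) - u x) * g x z) z := by
  rw [setIntegral_indicator (inSet_meas hJ0 hx)]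
  rfl

lemma Iout_bound (hN : 0 < N) {Ω : Set (Euc N)} {g : Euc N → Euc N → ℝ} {Cμ σ : ℝ}
    (hM : AssumptionM1 Ω g Cμ σ) {j : Euc N → Euc N → Euc N} {Aj : ℝ} (hJ0 : AssumptionJ0 Ω j Aj)
    {u : Euc N → ℝ} (hu : UpperSemicontinuousOn u (closure Ω)) {B : ℝ}
    (hB : ∀ x ∈ closure Ω, |u x| ≤ B) {x : Euc N} (hx : x ∈ closure Ω) {c1 : ℝ} (hc1 : 0 ≤ c1)
    (h1 : ∀ z, x + j x z ∈ closure Ω → u (x + j x z) - u x ≤ c1 * chi σ z)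
    {ξ : ℝ} (hξ : 0 < ξ) :
    Iout Ω j g ξ u x ≤ c1 * Cμ * ∫ z : Euc N, kk σ z := by
  have hI := Iout_intble hN hM hJ0 hu hB hx hξ
  obtain ⟨hCμ, hσ, hgm, hg0, hg⟩ := hM
  have hki := kk_int hN hσ
  have hS : MeasurableSet {z : Euc N | ξ ≤ ‖z‖ ∧ x + j x z ∈ closure Ω} :=
    (far_meas ξ).inter (inSet_meas hJ0 hx)
  unfold Iout
  rw [← integral_const_mul]
  refine (setIntegral_mono_on hI (hki.const_mul (c1 * Cμ)).integrableOn hS fun z hz => ?_).trans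
    (setIntegral_le_integral (hki.const_mul _) (Eventually.of_forall fun z => ?_))
  · have := mul_le_mul (h1 z hz.2) (hg x hx z) (hg0 x hx z) (mul_nonneg hc1 (chi_nonneg σ z))
    refine this.trans (le_of_eq ?_)
    simp only [kk, kerN]; ring
  · exact mul_nonneg (by positivity) (kk_nonneg σ z)

lemma int_comp (hN : 0 < N) {Ω : Set (Euc N)} {g : Euc N → Euc N → ℝ} {Cμ Dμ σ : ℝ}
    (hM : AssumptionM Ω g Cμ Dμ σ) {j : Euc N → Euc N → Euc N} {Aj : ℝ} (hJ0 : AssumptionJ0 Ω j Aj)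
    {u w : Euc N → ℝ} (hu : UpperSemicontinuousOn u (closure Ω))
    (hw : UpperSemicontinuousOn w (closure Ω)) {B : ℝ}
    (hBu : ∀ x ∈ closure Ω, |u x| ≤ B) (hBw : ∀ x ∈ closure Ω, |w x| ≤ B)
    {x y : Euc N} (hx : x ∈ closure Ω) (hy : y ∈ closure Ω) {c1 c2 : ℝ} (hc1 : 0 ≤ c1) (hc2 : 0 ≤ c2)
    (h1 : ∀ z, x + j x z ∈ closure Ω → u (x + j x z) - u x ≤ c1 * chi σ z)
    (h2 : ∀ z, y + j y z ∈ closure Ω → w (y + j y z) - w y ≤ c1 * chi σ z)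
    (h3 : ∀ z, x + j x z ∈ closure Ω → y + j y z ∈ closure Ω →
      (u (x + j x z) - u x) + (w (y + j y z) - w y) ≤ c2 * chi σ z)
    {η : ℝ} (hη : 0 < η) {ξ : ℝ} (hξ : 0 < ξ) :
    Iout Ω j g ξ u x + Iout Ω j g ξ w y ≤
      (c2 * Cμ + c1 * (Dμ * ‖x - y‖)) * (∫ z : Euc N, kk σ z)
      + c1 * Cμ * (∫ z in bad Ω j x y ∩ {z | ‖z‖ < η}, kk σ z)
      + 2 * B * Cμ * ∫ z in bad Ω j x y ∩ {z | η ≤ ‖z‖}, kerN N σ z := by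
  obtain ⟨hM1, hDμ, hgd⟩ := hM
  have hIu := Iout_intble hN hM1 hJ0 hu hBu hx hξ
  have hIw := Iout_intble hN hM1 hJ0 hw hBw hy hξ
  obtain ⟨hCμ, hσ, hgm, hg0, hg⟩ := hM1
  have hki := kk_int hN hσ
  have hB0 : 0 ≤ B := (abs_nonneg _).trans (hBu x hx)
  have hbm := bad_meas hJ0 hx hy
  have hbn : MeasurableSet (bad Ω j x y ∩ {z | ‖z‖ < η}) := hbm.inter (near_meas η)
  have hbf : MeasurableSet (bad Ω j x y ∩ {z | η ≤ ‖z‖}) := hbm.inter (far_meas η)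
  set c3 := c2 * Cμ + c1 * (Dμ * ‖x - y‖) with hc3
  have hc30 : 0 ≤ c3 := by positivity
  set Rf : Euc N → ℝ := fun z => c3 * kk σ z
    + (bad Ω j x y ∩ {z | ‖z‖ < η}).indicator (fun z => c1 * Cμ * kk σ z) z
    + (bad Ω j x y ∩ {z | η ≤ ‖z‖}).indicator (fun z => 2 * B * Cμ * kerN N σ z) z with hRf
  have i1 : Integrable (fun z : Euc N => c3 * kk σ z) := hki.const_mul _
  have i2 : Integrable ((bad Ω j x y ∩ {z | ‖z‖ < η}).indicator (fun z => c1 * Cμ * kk σ z)) :=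
    (hki.const_mul _).indicator hbn
  have i3 : Integrable ((bad Ω j x y ∩ {z | η ≤ ‖z‖}).indicator
      (fun z => 2 * B * Cμ * kerN N σ z)) :=
    (integrable_indicator_iff hbf).2
      (((ker_int_far hN hσ hη).mono_set inter_subset_right).const_mul _)
  have hRi : Integrable Rf := (i1.add i2).add i3
  have hRint : ∫ z, Rf z = c3 * (∫ z : Euc N, kk σ z)
      + c1 * Cμ * (∫ z in bad Ω j x y ∩ {z | ‖z‖ < η}, kk σ z)
      + 2 * B * Cμ * ∫ z in bad Ω j x y ∩ {z | η ≤ ‖z‖}, kerN N σ z := by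
    have e1 : ∫ z, Rf z = ((∫ z : Euc N, c3 * kk σ z) +
        ∫ z, (bad Ω j x y ∩ {z | ‖z‖ < η}).indicator (fun z => c1 * Cμ * kk σ z) z)
        + ∫ z, (bad Ω j x y ∩ {z | η ≤ ‖z‖}).indicator (fun z => 2 * B * Cμ * kerN N σ z) z := by
      rw [← integral_add i1 i2]
      exact integral_add (i1.add i2) i3
    rw [e1, integral_indicator hbn, integral_indicator hbf, integral_const_mul,
      integral_const_mul, integral_const_mul]
  rw [← hRint]
  have hR0 : ∀ z, 0 ≤ Rf z := by
    intro z
    refine add_nonneg (add_nonneg (mul_nonneg hc30 (kk_nonneg _ _)) ?_) ?_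
    · exact indicator_nonneg (fun z _ => mul_nonneg (by positivity) (kk_nonneg _ _)) z
    · exact indicator_nonneg (fun z _ => mul_nonneg (by positivity) (kerN_nonneg _ _)) z
  rw [Iout_eq hJ0 g u hx, Iout_eq hJ0 g w hy]
  have jx : IntegrableOn ({z | x + j x z ∈ closure Ω}.indicator
      (fun z => (u (x + j x z) - u x) * g x z)) {z : Euc N | ξ ≤ ‖z‖} := by
    have := hIu
    rw [IntegrableOn, integrable_indicator_iff (inSet_meas hJ0 hx), IntegrableOn,
      Measure.restrict_restrict (inSet_meas hJ0 hx), inter_comm]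
    exact hIu
  have jy : IntegrableOn ({z | y + j y z ∈ closure Ω}.indicator
      (fun z => (w (y + j y z) - w y) * g y z)) {z : Euc N | ξ ≤ ‖z‖} := by
    rw [IntegrableOn, integrable_indicator_iff (inSet_meas hJ0 hy), IntegrableOn,
      Measure.restrict_restrict (inSet_meas hJ0 hy), inter_comm]
    exact hIw
  rw [← integral_add jx jy]
  refine le_trans (setIntegral_mono_on (jx.add jy) hRi.integrableOn (far_meas ξ) fun z _ => ?_)
    (setIntegral_le_integral hRi (Eventually.of_forall hR0))
  -- pointwise
  have hcz := chi_nonneg σ z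
  have hkz := kerN_nonneg σ z
  have hgx0 := hg0 x hx z
  have hgy0 := hg0 y hy z
  have hgx : g x z ≤ Cμ * kerN N σ z := hg x hx z
  have hgy : g y z ≤ Cμ * kerN N σ z := hg y hy z
  have hd : |g x z - g y z| ≤ Dμ * ‖x - y‖ * kerN N σ z := hgd x hx y hy z
  have hkk : kk σ z = chi σ z * kerN N σ z := rfl
  have hone : ∀ (f : Euc N → ℝ) (a : Euc N), (∀ x ∈ closure Ω, |f x| ≤ B) → a ∈ closure Ω →
      ∀ G, 0 ≤ G → G ≤ Cμ * kerN N σ z →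
      a + j a z ∈ closure Ω → f (a + j a z) - f a ≤ c1 * chi σ z → z ∈ bad Ω j x y →
      (f (a + j a z) - f a) * G ≤ Rf z := by
    intro f a hf ha G hG hGle hain hfa hbad
    by_cases hz : ‖z‖ < η
    · have m1 : z ∈ bad Ω j x y ∩ {z | ‖z‖ < η} := ⟨hbad, hz⟩
      have m2 : z ∉ bad Ω j x y ∩ {z | η ≤ ‖z‖} := fun h => absurd h.2 (not_le.2 hz)
      simp only [hRf, indicator_of_mem m1, indicator_of_notMem m2]
      have := mul_le_mul hfa hGle hG (mul_nonneg hc1 hcz)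
      have h4 := mul_nonneg hc30 (kk_nonneg σ z)
      rw [hkk] at h4 ⊢
      nlinarith
    · have m1 : z ∉ bad Ω j x y ∩ {z | ‖z‖ < η} := fun h => hz h.2
      have m2 : z ∈ bad Ω j x y ∩ {z | η ≤ ‖z‖} := ⟨hbad, not_lt.1 hz⟩
      simp only [hRf, indicator_of_mem m2, indicator_of_notMem m1]
      have h5 : f (a + j a z) - f a ≤ 2 * B := by
        have h1 := abs_le.1 (hf _ hain)
        have h2 := abs_le.1 (hf _ ha)
        linarith
      have := mul_le_mul h5 hGle hG (by positivity)
      have h4 := mul_nonneg hc30 (kk_nonneg σ z)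
      nlinarith
  by_cases hxz : x + j x z ∈ closure Ω <;> by_cases hyz : y + j y z ∈ closure Ω
  · have mx : z ∈ {z | x + j x z ∈ closure Ω} := hxz
    have my : z ∈ {z | y + j y z ∈ closure Ω} := hyz
    have nb : z ∉ bad Ω j x y := fun h => h (by simp [hxz, hyz])
    have m1 : z ∉ bad Ω j x y ∩ {z | ‖z‖ < η} := fun h => nb h.1
    have m2 : z ∉ bad Ω j x y ∩ {z | η ≤ ‖z‖} := fun h => nb h.1
    simp only [hRf, indicator_of_mem mx, indicator_of_mem my, indicator_of_notMem m1,
      indicator_of_notMem m2, add_zero]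
    have a1 := h1 z hxz
    have a2 := h2 z hyz
    have a3 := h3 z hxz hyz
    set P := u (x + j x z) - u x
    set Q := w (y + j y z) - w y
    have hcc1 := mul_nonneg hc1 hcz
    have hcc2 := mul_nonneg hc2 hcz
    have hd' := abs_le.1 hd
    rw [hkk, hc3]
    rcases le_total (g y z) (g x z) with h | h
    · have t1 : (P + Q) * g y z ≤ (c2 * chi σ z) * (Cμ * kerN N σ z) := mul_le_mul a3 hgy hgy0 hcc2
      have t2 : P * (g x z - g y z) ≤ (c1 * chi σ z) * (Dμ * ‖x - y‖ * kerN N σ z) :=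
        mul_le_mul a1 hd'.2 (by linarith) hcc1
      linarith
    · have t1 : (P + Q) * g x z ≤ (c2 * chi σ z) * (Cμ * kerN N σ z) := mul_le_mul a3 hgx hgx0 hcc2
      have t2 : Q * (g y z - g x z) ≤ (c1 * chi σ z) * (Dμ * ‖x - y‖ * kerN N σ z) :=
        mul_le_mul a2 (by linarith) (by linarith) hcc1
      linarith
  · have mx : z ∈ {z | x + j x z ∈ closure Ω} := hxz
    have my : z ∉ {z | y + j y z ∈ closure Ω} := hyz
    rw [indicator_of_mem mx, indicator_of_notMem my, add_zero]
    exact hone u x hBu hx _ hgx0 hgx hxz (h1 z hxz) (fun h => hyz (h.1 hxz))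
  · have mx : z ∉ {z | x + j x z ∈ closure Ω} := hxz
    have my : z ∈ {z | y + j y z ∈ closure Ω} := hyz
    rw [indicator_of_mem my, indicator_of_notMem mx, zero_add]
    exact hone w y hBw hy _ hgy0 hgy hyz (h2 z hyz) (fun h => hxz (h.2 hyz))
  · have mx : z ∉ {z | x + j x z ∈ closure Ω} := hxz
    have my : z ∉ {z | y + j y z ∈ closure Ω} := hyz
    rw [indicator_of_notMem my, indicator_of_notMem mx, zero_add]
    exact hR0 z

end

section
lemma norm_gradient_eq (f : Euc N → ℝ) (x : Euc N) : ‖gradient f x‖ = ‖fderiv ℝ f x‖ := by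
  unfold gradient; exact LinearIsometryEquiv.norm_map _ _

lemma norm_gradient_sub_eq (f : Euc N → ℝ) (x y : Euc N) :
    ‖gradient f x - gradient f y‖ = ‖fderiv ℝ f x - fderiv ℝ f y‖ := by
  unfold gradient; rw [← map_sub]; exact LinearIsometryEquiv.norm_map _ _

lemma fderiv_eq_inner (f : Euc N → ℝ) (x a : Euc N) : fderiv ℝ f x a = ⟪gradient f x, a⟫ := by
  unfold gradient; rw [InnerProductSpace.toDual_symm_apply]

lemma norm_gradient_le {L : Euc N → ℝ} {lam : ℝ} (hl : 0 ≤ lam)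
    (h : ∀ x y, |L x - L y| ≤ lam * ‖x - y‖) (x : Euc N) : ‖gradient L x‖ ≤ lam := by
  rw [norm_gradient_eq]
  by_cases hd : DifferentiableAt ℝ L x
  · exact hd.hasFDerivAt.le_of_lip' hl (Eventually.of_forall fun y => by
      simpa [Real.norm_eq_abs] using h y x)
  · rw [fderiv_zero_of_not_differentiableAt hd]; simpa

/-- The penalisation. -/
def pen (D L : Euc N → ℝ) (ε K τ δ : ℝ) (x y : Euc N) : ℝ :=
  ‖x - y‖ ^ 2 / ε ^ 2 + K / ε * √((D x - D y) ^ 2 + τ ^ 2) + L x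
    - δ * ε * Real.sin (D x / ε) - δ * ε * Real.sin (D y / ε)

def slope (D : Euc N → ℝ) (ε K τ : ℝ) (x y : Euc N) : ℝ :=
  K / ε * ((D x - D y) / √((D x - D y) ^ 2 + τ ^ 2))

def px (D L : Euc N → ℝ) (ε K τ δ : ℝ) (x y : Euc N) : Euc N :=
  ((2 / ε ^ 2) • (x - y) + (gradient L x - (δ * Real.cos (D x / ε)) • gradient D x))
    + slope D ε K τ x y • gradient D x

def py (D : Euc N → ℝ) (ε K τ δ : ℝ) (x y : Euc N) : Euc N :=
  ((2 / ε ^ 2) • (x - y) + (δ * Real.cos (D y / ε)) • gradient D y)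
    + slope D ε K τ x y • gradient D y

lemma pen_cont {D L : Euc N → ℝ} (hD : Continuous D) (hL : Continuous L) (ε K τ δ : ℝ) :
    Continuous (fun q : Euc N × Euc N => pen D L ε K τ δ q.1 q.2) := by
  unfold pen
  have h1 : Continuous (fun q : Euc N × Euc N => D q.1) := hD.comp continuous_fst
  have h2 : Continuous (fun q : Euc N × Euc N => D q.2) := hD.comp continuous_snd
  have h3 : Continuous (fun q : Euc N × Euc N => L q.1) := hL.comp continuous_fst
  have h4 := Real.continuous_sin.comp (h1.div_const ε)
  have h5 := Real.continuous_sin.comp (h2.div_const ε)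
  have h6 := Real.continuous_sqrt.comp (((h1.sub h2).pow 2).add (continuous_const (y := τ ^ 2)))
  have h7 : Continuous (fun q : Euc N × Euc N => ‖q.1 - q.2‖ ^ 2 / ε ^ 2) := by fun_prop
  exact (((h7.add (h6.const_mul (K / ε))).add h3).sub (h4.const_mul (δ * ε))).sub
    (h5.const_mul (δ * ε))

lemma pen_low (D L : Euc N → ℝ) {ε K τ δ : ℝ} (hε : 0 < ε) (hK : 0 ≤ K) (hδ : 0 ≤ δ) (hτ : 0 ≤ τ)
    (x y : Euc N) :
    ‖x - y‖ ^ 2 / ε ^ 2 + L x - (2 * δ * ε + K / ε * τ) ≤ pen D L ε K τ δ x y := by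
  unfold pen
  have h1 : 0 ≤ K / ε * √((D x - D y) ^ 2 + τ ^ 2) := by positivity
  have h2 := mul_le_mul_of_nonneg_left (Real.sin_le_one (D x / ε)) (by positivity : 0 ≤ δ * ε)
  have h3 := mul_le_mul_of_nonneg_left (Real.sin_le_one (D y / ε)) (by positivity : 0 ≤ δ * ε)
  have h4 : 0 ≤ K / ε * τ := by positivity
  linarith

lemma pen_up (D L : Euc N → ℝ) {ε K τ δ : ℝ} (hε : 0 < ε) (hδ : 0 ≤ δ) (hτ : 0 ≤ τ)
    (x : Euc N) :
    pen D L ε K τ δ x x ≤ L x + (2 * δ * ε + K / ε * τ) := by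
  unfold pen
  have h2 := mul_le_mul_of_nonneg_left (Real.neg_one_le_sin (D x / ε)) (by positivity : 0 ≤ δ * ε)
  have h3 : √((D x - D x) ^ 2 + τ ^ 2) = τ := by
    rw [sub_self]; norm_num; exact Real.sqrt_sq hτ
  rw [h3, sub_self, norm_zero]
  norm_num
  linarith

lemma sq_pos_aux (t : ℝ) {τ : ℝ} (hτ : 0 < τ) : 0 < t ^ 2 + τ ^ 2 := by positivity

lemma sqrt_lip (s t : ℝ) {τ : ℝ} (hτ : 0 < τ) :
    √(s ^ 2 + τ ^ 2) - √(t ^ 2 + τ ^ 2) ≤ |s - t| := by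
  have h : √(s ^ 2 + τ ^ 2) ≤ √(t ^ 2 + τ ^ 2) + |s - t| := by
    rw [Real.sqrt_le_left (by positivity)]
    have h1 : |t| ≤ √(t ^ 2 + τ ^ 2) := Real.abs_le_sqrt (by nlinarith [sq_nonneg τ])
    have h2 := Real.sq_sqrt (sq_pos_aux t hτ).le
    have h3 : t * (s - t) ≤ |t| * |s - t| := (le_abs_self _).trans (abs_mul _ _).le
    have h4 := mul_le_mul_of_nonneg_right h1 (abs_nonneg (s - t))
    have h5 := sq_abs (s - t)
    nlinarith
  linarith

lemma pen_grad_x {D L : Euc N → ℝ} {ε K τ δ : ℝ} (hε : 0 < ε) (hτ : 0 < τ) {x y : Euc N}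
    (hD : DifferentiableAt ℝ D x) (hL : DifferentiableAt ℝ L x) :
    HasGradientAt (fun x' => pen D L ε K τ δ x' y) (px D L ε K τ δ x y) x := by
  rw [hasGradientAt_iff_hasFDerivAt]
  have a1 := ((hasFDerivAt_id (𝕜 := ℝ) x).sub_const y).norm_sq.mul_const (1 / ε ^ 2)
  have a2 := (((hD.hasFDerivAt.sub_const (D y)).pow 2).add_const (τ ^ 2)).sqrt
    (sq_pos_aux (D x - D y) hτ).ne'
  have a3 := a2.const_mul (K / ε)
  have a4 := ((hD.hasFDerivAt.mul_const (1 / ε)).sin).const_mul (δ * ε)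
  have a5 := ((a1.add a3).add hL.hasFDerivAt).sub a4
  have a6 := a5.sub_const (δ * ε * Real.sin (D y / ε))
  have hsq : √((D x - D y) ^ 2 + τ ^ 2) ≠ 0 := (Real.sqrt_pos.2 (sq_pos_aux _ hτ)).ne'
  refine (a6.congr_of_eventuallyEq ?_).congr_fderiv ?_
  · refine Eventually.of_forall fun x' => ?_
    simp [pen, div_eq_mul_inv]
  · ext a
    simp only [px, slope, InnerProductSpace.toDual_apply_apply, inner_add_left, inner_sub_left,
      real_inner_smul_left, ← fderiv_eq_inner]
    simp [inner_sub_left]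
    field_simp
    ring

lemma pen_grad_y {D L : Euc N → ℝ} {ε K τ δ : ℝ} (hε : 0 < ε) (hτ : 0 < τ) {x y : Euc N}
    (hD : DifferentiableAt ℝ D y) :
    HasGradientAt (fun y' => pen D L ε K τ δ x y') (-(py D ε K τ δ x y)) y := by
  rw [hasGradientAt_iff_hasFDerivAt]
  have a1 := ((hasFDerivAt_id (𝕜 := ℝ) y).const_sub x).norm_sq.mul_const (1 / ε ^ 2)
  have a2 := (((hD.hasFDerivAt.const_sub (D x)).pow 2).add_const (τ ^ 2)).sqrt
    (sq_pos_aux (D x - D y) hτ).ne'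
  have a3 := a2.const_mul (K / ε)
  have a4 := ((hD.hasFDerivAt.mul_const (1 / ε)).sin).const_mul (δ * ε)
  have a5 := (((a1.add a3).add_const (L x)).sub_const (δ * ε * Real.sin (D x / ε))).sub a4
  have hsq : √((D x - D y) ^ 2 + τ ^ 2) ≠ 0 := (Real.sqrt_pos.2 (sq_pos_aux _ hτ)).ne'
  refine (a5.congr_of_eventuallyEq ?_).congr_fderiv ?_
  · refine Eventually.of_forall fun x' => ?_
    simp [pen, div_eq_mul_inv]
  · ext a
    simp only [py, slope, map_neg, InnerProductSpace.toDual_apply_apply, inner_add_left,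
      inner_sub_left, real_inner_smul_left, ← fderiv_eq_inner, neg_apply]
    simp [inner_sub_left]
    field_simp
    ring

lemma pen_cd_x {D L : Euc N → ℝ} {ε K τ δ : ℝ} (hτ : 0 < τ) {U : Set (Euc N)} (y : Euc N)
    (hD : ContDiffOn ℝ 1 D U) (hL : ContDiff ℝ 1 L) :
    ContDiffOn ℝ 1 (fun x' => pen D L ε K τ δ x' y) U := by
  unfold pen
  have h1 : ContDiffOn ℝ 1 (fun x' : Euc N => ‖x' - y‖ ^ 2 / ε ^ 2) U :=
    (((contDiff_norm_sq ℝ).comp (contDiff_id.sub contDiff_const)).div_const _).contDiffOn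
  have h2 : ContDiffOn ℝ 1 (fun x' : Euc N => √((D x' - D y) ^ 2 + τ ^ 2)) U :=
    (((hD.sub contDiffOn_const).pow 2).add contDiffOn_const).sqrt
      (fun x' _ => (sq_pos_aux _ hτ).ne')
  have h3 : ContDiffOn ℝ 1 (fun x' : Euc N => Real.sin (D x' / ε)) U :=
    (Real.contDiff_sin.of_le le_top).comp_contDiffOn (hD.div_const ε)
  exact (((h1.add (contDiffOn_const.mul h2)).add hL.contDiffOn).sub (contDiffOn_const.mul h3)).sub
    contDiffOn_const

lemma pen_cd_y {D L : Euc N → ℝ} {ε K τ δ : ℝ} (hτ : 0 < τ) {U : Set (Euc N)} (x : Euc N)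
    (hD : ContDiffOn ℝ 1 D U) :
    ContDiffOn ℝ 1 (fun y' => pen D L ε K τ δ x y') U := by
  unfold pen
  have h1 : ContDiffOn ℝ 1 (fun y' : Euc N => ‖x - y'‖ ^ 2 / ε ^ 2) U :=
    (((contDiff_norm_sq ℝ).comp (contDiff_const.sub contDiff_id)).div_const _).contDiffOn
  have h2 : ContDiffOn ℝ 1 (fun y' : Euc N => √((D x - D y') ^ 2 + τ ^ 2)) U :=
    (((contDiffOn_const.sub hD).pow 2).add contDiffOn_const).sqrt
      (fun x' _ => (sq_pos_aux _ hτ).ne')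
  have h3 : ContDiffOn ℝ 1 (fun x' : Euc N => Real.sin (D x' / ε)) U :=
    (Real.contDiff_sin.of_le le_top).comp_contDiffOn (hD.div_const ε)
  exact (((h1.add (contDiffOn_const.mul h2)).add contDiffOn_const).sub contDiffOn_const).sub
    (contDiffOn_const.mul h3)

lemma sin_lip {ε : ℝ} (hε : 0 < ε) {δ : ℝ} (hδ : 0 ≤ δ) (s t : ℝ) :
    |δ * ε * Real.sin (s / ε) - δ * ε * Real.sin (t / ε)| ≤ δ * |s - t| := by
  rw [← mul_sub, abs_mul, abs_of_nonneg (by positivity : 0 ≤ δ * ε)]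
  have h1 : |Real.sin (s / ε) - Real.sin (t / ε)| ≤ |s / ε - t / ε| := by
    have := Real.lipschitzWith_sin.dist_le_mul (s / ε) (t / ε)
    simpa [Real.dist_eq] using this
  rw [← sub_div, abs_div, abs_of_pos hε] at h1
  calc δ * ε * |Real.sin (s / ε) - Real.sin (t / ε)| ≤ δ * ε * (|s - t| / ε) :=
        mul_le_mul_of_nonneg_left h1 (by positivity)
    _ = δ * |s - t| := by field_simp

lemma norm_inc (p a : Euc N) : ‖p + a‖ ^ 2 - ‖p‖ ^ 2 ≤ 2 * ‖p‖ * ‖a‖ + ‖a‖ ^ 2 := by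
  have := norm_add_le p a
  nlinarith [norm_nonneg p, norm_nonneg a, norm_nonneg (p + a)]

lemma pen_inc_x {D L : Euc N → ℝ} {ε K τ δ lam : ℝ} (hε : 0 < ε) (hε1 : ε ≤ 1) (hK : 0 ≤ K)
    (hδ : 0 ≤ δ) (hl : 0 ≤ lam) (hτ : 0 < τ) (hD : ∀ x y, |D x - D y| ≤ 2 * ‖x - y‖)
    (hL : ∀ x y, |L x - L y| ≤ lam * ‖x - y‖) {x y : Euc N} (hxy : ‖x - y‖ ≤ ε) (a : Euc N) :
    pen D L ε K τ δ (x + a) y - pen D L ε K τ δ x y ≤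
      (2 + 2 * K + lam + 2 * δ) * (‖a‖ / ε) + (‖a‖ / ε) ^ 2 := by
  unfold pen
  have e1 := norm_inc (x - y) a
  rw [show x - y + a = x + a - y by abel] at e1
  have e1' : ‖x + a - y‖ ^ 2 / ε ^ 2 - ‖x - y‖ ^ 2 / ε ^ 2 ≤ 2 * (‖a‖ / ε) + (‖a‖ / ε) ^ 2 := by
    rw [← sub_div, div_le_iff₀ (by positivity)]
    have : (2 * (‖a‖ / ε) + (‖a‖ / ε) ^ 2) * ε ^ 2 = 2 * ε * ‖a‖ + ‖a‖ ^ 2 := by field_simp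
    rw [this]
    nlinarith [norm_nonneg a]
  have e2 := sqrt_lip (D (x + a) - D y) (D x - D y) hτ
  have e3 := hD (x + a) x
  have e4 := hL (x + a) x
  have e5 := sin_lip hε hδ (D (x + a)) (D x)
  rw [add_sub_cancel_left] at e3 e4
  rw [show D (x + a) - D y - (D x - D y) = D (x + a) - D x by ring] at e2
  have e6 := mul_le_mul_of_nonneg_left (e2.trans e3) (by positivity : 0 ≤ K / ε)
  have e7 := mul_le_mul_of_nonneg_left e3 hδ
  have e8 := (abs_le.1 e5).1
  have e9 := (abs_le.1 e4).2
  have e10 : ‖a‖ ≤ ‖a‖ / ε := by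
    rw [le_div_iff₀ hε]; exact mul_le_of_le_one_right (norm_nonneg _) hε1
  have e11 := mul_le_mul_of_nonneg_left e10 (by positivity : 0 ≤ lam + 2 * δ)
  have e12 : K / ε * (2 * ‖a‖) = 2 * K * (‖a‖ / ε) := by ring
  linarith

lemma pen_inc_y {D L : Euc N → ℝ} {ε K τ δ lam : ℝ} (hε : 0 < ε) (hε1 : ε ≤ 1) (hK : 0 ≤ K)
    (hδ : 0 ≤ δ) (hl : 0 ≤ lam) (hτ : 0 < τ) (hD : ∀ x y, |D x - D y| ≤ 2 * ‖x - y‖)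
    {x y : Euc N} (hxy : ‖x - y‖ ≤ ε) (a : Euc N) :
    pen D L ε K τ δ x (y + a) - pen D L ε K τ δ x y ≤
      (2 + 2 * K + lam + 2 * δ) * (‖a‖ / ε) + (‖a‖ / ε) ^ 2 := by
  unfold pen
  have e1 := norm_inc (x - y) (-a)
  rw [show x - y + -a = x - (y + a) by abel, norm_neg] at e1
  have e1' : ‖x - (y + a)‖ ^ 2 / ε ^ 2 - ‖x - y‖ ^ 2 / ε ^ 2 ≤ 2 * (‖a‖ / ε) + (‖a‖ / ε) ^ 2 := by
    rw [← sub_div, div_le_iff₀ (by positivity)]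
    have : (2 * (‖a‖ / ε) + (‖a‖ / ε) ^ 2) * ε ^ 2 = 2 * ε * ‖a‖ + ‖a‖ ^ 2 := by field_simp
    rw [this]
    nlinarith [norm_nonneg a]
  have e2 := sqrt_lip (D x - D (y + a)) (D x - D y) hτ
  have e3 := hD (y + a) y
  have e5 := sin_lip hε hδ (D (y + a)) (D y)
  rw [add_sub_cancel_left] at e3
  rw [show D x - D (y + a) - (D x - D y) = -(D (y + a) - D y) by ring, abs_neg] at e2
  have e6 := mul_le_mul_of_nonneg_left (e2.trans e3) (by positivity : 0 ≤ K / ε)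
  have e7 := mul_le_mul_of_nonneg_left e3 hδ
  have e8 := (abs_le.1 e5).1
  have e10 : ‖a‖ ≤ ‖a‖ / ε := by
    rw [le_div_iff₀ hε]; exact mul_le_of_le_one_right (norm_nonneg _) hε1
  have e11 := mul_le_mul_of_nonneg_left e10 (by positivity : 0 ≤ 2 * δ)
  have e12 : K / ε * (2 * ‖a‖) = 2 * K * (‖a‖ / ε) := by ring
  have e13 : 0 ≤ lam * (‖a‖ / ε) := by positivity
  linarith

/-- Four-point estimate, valid for all jumps. -/
lemma four_all {D : Euc N → ℝ} {s : Euc N} {r CD : ℝ} (hD : GoodD D s r CD) {Cj Dj : ℝ}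
    (hCj : 0 < Cj) (hDj : 0 < Dj) :
    ∃ C4 ≥ 0, ∀ x y a b : Euc N, ∀ t : ℝ, 0 ≤ t → ‖x - s‖ < r / 2 → ‖y - s‖ < r / 2 →
      ‖a‖ ≤ Cj * t → ‖a - b‖ ≤ Dj * t * ‖x - y‖ →
      |(D (x + a) - D (y + b)) - (D x - D y)| ≤ C4 * t * ‖x - y‖ := by
  have hr := hD.r_pos
  have hCD := hD.CD_nonneg
  refine ⟨CD * Cj + 2 * Dj + 8 * Cj / r, by positivity, fun x y a b t ht hx hy ha hab => ?_⟩
  have hxy := norm_nonneg (x - y)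
  have hE : (CD * Cj + 2 * Dj + 8 * Cj / r) * t * ‖x - y‖
      = CD * (Cj * t) * ‖x - y‖ + 2 * (Dj * t * ‖x - y‖) + 8 * Cj / r * t * ‖x - y‖ := by ring
  rw [hE]
  have hn1 : 0 ≤ CD * (Cj * t) * ‖x - y‖ := by positivity
  have hn2 : 0 ≤ 8 * Cj / r * t * ‖x - y‖ := by positivity
  by_cases hat : ‖a‖ < r / 2
  · have h1 : x ∈ ball s r := by rw [mem_ball, dist_eq_norm]; linarith
    have h2 : y ∈ ball s r := by rw [mem_ball, dist_eq_norm]; linarith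
    have h3 : x + a ∈ ball s r := by
      rw [mem_ball, dist_eq_norm, show x + a - s = (x - s) + a by abel]
      have := norm_add_le (x - s) a; linarith
    have h4 : y + a ∈ ball s r := by
      rw [mem_ball, dist_eq_norm, show y + a - s = (y - s) + a by abel]
      have := norm_add_le (y - s) a; linarith
    have := hD.four (b := b) h1 h2 h3 h4
    rw [show D (x + a) - D (y + b) - (D x - D y) = D (x + a) - D x - (D (y + b) - D y) by ring]
    have h5 : CD * ‖a‖ * ‖x - y‖ ≤ CD * (Cj * t) * ‖x - y‖ := by gcongr
    linarith
  · have h1 := hD.lip (x + a) (y + b)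
    have h2 := hD.lip x y
    have h3 : ‖x + a - (y + b)‖ ≤ ‖x - y‖ + ‖a - b‖ := by
      rw [show x + a - (y + b) = (x - y) + (a - b) by abel]; exact norm_add_le _ _
    have h4 : r / 2 ≤ Cj * t := (not_lt.1 hat).trans ha
    have h5 : 4 * ‖x - y‖ ≤ 8 * Cj / r * t * ‖x - y‖ := by
      refine mul_le_mul_of_nonneg_right ?_ hxy
      rw [div_mul_eq_mul_div, le_div_iff₀ hr]; linarith
    have h6 := abs_sub (D (x + a) - D (y + b)) (D x - D y)
    linarith

lemma pen_inc_xy {D L : Euc N → ℝ} {ε K τ δ lam Cj Dj C4 η : ℝ} (hε : 0 < ε) (hK : 0 ≤ K)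
    (hδ : 0 ≤ δ) (hl : 0 ≤ lam) (hτ : 0 < τ) (hη : 0 ≤ η) (hη1 : η ≤ 1) (hC4 : 0 ≤ C4)
    (hCj : 0 < Cj) (hDj : 0 < Dj)
    (hD : ∀ x y, |D x - D y| ≤ 2 * ‖x - y‖)
    (hL : ∀ x y, |L x - L y| ≤ lam * ‖x - y‖) {x y : Euc N} (hxy : ‖x - y‖ ≤ η * ε)
    {a b : Euc N} {t : ℝ} (ht : 0 ≤ t) (ha : ‖a‖ ≤ Cj * t) (hb : ‖b‖ ≤ Cj * t)
    (hab : ‖a - b‖ ≤ Dj * t * ‖x - y‖)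
    (h4 : |(D (x + a) - D (y + b)) - (D x - D y)| ≤ C4 * t * ‖x - y‖) :
    pen D L ε K τ δ (x + a) (y + b) - pen D L ε K τ δ x y ≤
      (η * (2 * Dj + Dj ^ 2 + K * C4) + Cj * (lam + 4 * δ)) * (t + t ^ 2) := by
  unfold pen
  have e1 := norm_inc (x - y) (a - b)
  rw [show x - y + (a - b) = x + a - (y + b) by abel] at e1
  have hab' : ‖a - b‖ ≤ Dj * t * (η * ε) := hab.trans (by gcongr)
  have e1' : ‖x + a - (y + b)‖ ^ 2 / ε ^ 2 - ‖x - y‖ ^ 2 / ε ^ 2 ≤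
      η * (2 * Dj * t + Dj ^ 2 * t ^ 2) := by
    rw [← sub_div, div_le_iff₀ (by positivity)]
    refine e1.trans ?_
    have f1 : 2 * ‖x - y‖ * ‖a - b‖ ≤ 2 * (η * ε) * (Dj * t * (η * ε)) := by gcongr
    have f2 : ‖a - b‖ ^ 2 ≤ (Dj * t * (η * ε)) ^ 2 := by gcongr
    have f3 : η ^ 2 ≤ η := by nlinarith
    have f4 : 0 ≤ 2 * Dj * t + Dj ^ 2 * t ^ 2 := by positivity
    have f5 := mul_le_mul_of_nonneg_right f3 f4
    have f6 := mul_le_mul_of_nonneg_right f5 (sq_nonneg ε)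
    nlinarith
  have e2 := (sqrt_lip (D (x + a) - D (y + b)) (D x - D y) hτ).trans h4
  have e2' : C4 * t * ‖x - y‖ ≤ C4 * t * (η * ε) := by gcongr
  have e6 := mul_le_mul_of_nonneg_left (e2.trans e2') (by positivity : 0 ≤ K / ε)
  have e12 : K / ε * (C4 * t * (η * ε)) = η * (K * C4) * t := by field_simp
  have e3 := hD (x + a) x
  have e3' := hD (y + b) y
  have e4 := hL (x + a) x
  have e5 := (abs_le.1 (sin_lip hε hδ (D (x + a)) (D x))).1
  have e5' := (abs_le.1 (sin_lip hε hδ (D (y + b)) (D y))).1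
  rw [add_sub_cancel_left] at e3 e3' e4
  have e7 := mul_le_mul_of_nonneg_left e3 hδ
  have e7' := mul_le_mul_of_nonneg_left e3' hδ
  have e9 := (abs_le.1 e4).2
  have g1 := mul_le_mul_of_nonneg_left ha hl
  have g2 := mul_le_mul_of_nonneg_left ha hδ
  have g3 := mul_le_mul_of_nonneg_left hb hδ
  have k1 : 0 ≤ η * (2 * Dj + K * C4) * t ^ 2 := by positivity
  have k2 : 0 ≤ η * Dj ^ 2 * t := by positivity
  have k3 : 0 ≤ Cj * (lam + 4 * δ) * t ^ 2 := by positivity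
  nlinarith

end

section
/-- Quantitative form of the Bellman assumptions. -/
structure HamOK (Ω : Set (Euc N)) {A : Type} (b : Euc N → A → Euc N) (l : Euc N → A → ℝ)
    (H : Euc N → Euc N → ℝ) (Cb Cl Lb : ℝ) (om : ℝ → ℝ) : Prop where
  bel : IsBellman b l H
  Cb0 : 0 ≤ Cb
  hb : ∀ x α, ‖b x α‖ ≤ Cb
  Cl0 : 0 ≤ Cl
  hl : ∀ x α, |l x α| ≤ Cl
  Lb0 : 0 ≤ Lb
  bl : ∀ α, ∀ x ∈ closure Ω, ∀ y ∈ closure Ω, ‖b x α - b y α‖ ≤ Lb * ‖x - y‖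
  ll : ∀ α, ∀ x ∈ closure Ω, ∀ y ∈ closure Ω, |l x α - l y α| ≤ om ‖x - y‖

section ham
variable {Ω : Set (Euc N)} {A : Type} [Nonempty A] {b : Euc N → A → Euc N} {l : Euc N → A → ℝ}
    {H : Euc N → Euc N → ℝ} {Cb Cl Lb : ℝ} {om : ℝ → ℝ}

lemma HamOK.inner_le (h : HamOK Ω b l H Cb Cl Lb om) (x p : Euc N) (α : A) :
    |⟪b x α, p⟫| ≤ Cb * ‖p‖ :=
  (abs_real_inner_le_norm _ _).trans (mul_le_mul_of_nonneg_right (h.hb x α) (norm_nonneg _))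

lemma HamOK.low (h : HamOK Ω b l H Cb Cl Lb om) (x p : Euc N) (α : A) :
    -⟪b x α, p⟫ - l x α ≤ H x p := by
  rw [h.bel x p]
  refine le_ciSup (f := fun α : A => -⟪b x α, p⟫ - l x α) ⟨Cb * ‖p‖ + Cl, ?_⟩ α
  rintro _ ⟨α, rfl⟩
  have h1 := (abs_le.1 (h.inner_le x p α)).1
  have h2 := (abs_le.1 (h.hl x α)).1
  simp only
  linarith

lemma HamOK.up (h : HamOK Ω b l H Cb Cl Lb om) {x p : Euc N} {c : ℝ}
    (hc : ∀ α, -⟪b x α, p⟫ - l x α ≤ c) : H x p ≤ c := by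
  rw [h.bel x p]; exact ciSup_le hc

lemma HamOK.diff (h : HamOK Ω b l H Cb Cl Lb om) {x y p q : Euc N} (hx : x ∈ closure Ω)
    (hy : y ∈ closure Ω) :
    H y q ≤ H x p + Cb * ‖p - q‖ + Lb * ‖x - y‖ * ‖q‖ + om ‖x - y‖ := by
  refine h.up fun α => ?_
  have h1 := h.low x p α
  have h2 := (abs_le.1 (h.inner_le x (p - q) α)).2
  have h3 : |⟪b x α - b y α, q⟫| ≤ Lb * ‖x - y‖ * ‖q‖ :=
    (abs_real_inner_le_norm _ _).trans
      (mul_le_mul_of_nonneg_right (h.bl α x hx y hy) (norm_nonneg _))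
  have h4 := (abs_le.1 (h.ll α x hx y hy)).2
  have h3' := (abs_le.1 h3).2
  rw [inner_sub_right] at h2
  rw [inner_sub_left] at h3'
  linarith
end ham

def CoerLow (Ω : Set (Euc N)) (H : Euc N → Euc N → ℝ) (D : Euc N → ℝ) (xh : Euc N)
    (Cb Cl c r e : ℝ) : Prop :=
  ∀ x ∈ closure Ω, ‖x - xh‖ < r → ∀ t, 0 ≤ t → ∀ p,
    c * t - Cb * ‖p‖ - Cl ≤ H x (p + (e * t) • gradient D x)

def CoerUp (Ω : Set (Euc N)) (H : Euc N → Euc N → ℝ) (D : Euc N → ℝ) (xh : Euc N)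
    (Cb Cl c r e : ℝ) : Prop :=
  ∀ x ∈ closure Ω, ‖x - xh‖ < r → ∀ t, 0 ≤ t → ∀ p,
    H x (p + (e * t) • gradient D x) ≤ - (c * t) + Cb * ‖p‖ + Cl

def Coer (Ω : Set (Euc N)) (H : Euc N → Euc N → ℝ) (D : Euc N → ℝ) (xh : Euc N)
    (Cb Cl c r e : ℝ) : Prop :=
  CoerLow Ω H D xh Cb Cl c r e ∨ CoerUp Ω H D xh Cb Cl c r e

lemma Coer.mono {Ω : Set (Euc N)} {H : Euc N → Euc N → ℝ} {D : Euc N → ℝ} {xh : Euc N}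
    {Cb Cl c r e c' r' : ℝ} (h : Coer Ω H D xh Cb Cl c r e) (hc : c' ≤ c) (hr : r' ≤ r) :
    Coer Ω H D xh Cb Cl c' r' e := by
  rcases h with h | h
  · left
    intro x hx hxr t ht p
    have := h x hx (hxr.trans_le hr) t ht p
    have := mul_le_mul_of_nonneg_right hc ht
    linarith
  · right
    intro x hx hxr t ht p
    have := h x hx (hxr.trans_le hr) t ht p
    have := mul_le_mul_of_nonneg_right hc ht
    linarith

lemma coer_one {Ω : Set (Euc N)} {A : Type} [TopologicalSpace A] [CompactSpace A] [Nonempty A]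
    {b : Euc N → A → Euc N} {l : Euc N → A → ℝ}
    {H : Euc N → Euc N → ℝ} {Cb Cl Lb : ℝ} {om : ℝ → ℝ} (h : HamOK Ω b l H Cb Cl Lb om)
    {D : Euc N → ℝ} {xh : Euc N} {r CD : ℝ} (hD : GoodD D xh r CD) (hxh : xh ∈ closure Ω)
    (hbc : Continuous (b xh)) {e : ℝ} (he : |e| = 1)
    (hdich : (∃ α, e * ⟪b xh α, gradient D xh⟫ < 0) ∨ (∀ α, 0 < e * ⟪b xh α, gradient D xh⟫)) :
    ∃ c > 0, ∃ r' > 0, Coer Ω H D xh Cb Cl c r' e := by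
  set M := 2 * Lb + Cb * CD + 1 with hMdef
  have hCb := h.Cb0
  have hLb := h.Lb0
  have hCD := hD.CD_nonneg
  have hM : 0 < M := by positivity
  have hr := hD.r_pos
  have hvar : ∀ α, ∀ x ∈ closure Ω, ‖x - xh‖ < r →
      |e * ⟪b x α, gradient D x⟫ - e * ⟪b xh α, gradient D xh⟫| ≤ M * ‖x - xh‖ := by
    intro α x hx hxr
    rw [← mul_sub, abs_mul, he, one_mul]
    have e1 : ⟪b x α, gradient D x⟫ - ⟪b xh α, gradient D xh⟫
        = ⟪b x α - b xh α, gradient D x⟫ + ⟪b xh α, gradient D x - gradient D xh⟫ := by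
      rw [inner_sub_left, inner_sub_right]; ring
    rw [e1]
    refine (abs_add_le _ _).trans ?_
    have h1 : |⟪b x α - b xh α, gradient D x⟫| ≤ Lb * ‖x - xh‖ * 2 := by
      refine (abs_real_inner_le_norm _ _).trans ?_
      refine mul_le_mul (h.bl α x hx xh hxh) ?_ (norm_nonneg _) (by positivity)
      rw [norm_gradient_eq]; exact hD.norm_fderiv_le x
    have h2 : |⟪b xh α, gradient D x - gradient D xh⟫| ≤ Cb * (CD * ‖x - xh‖) := by
      refine (h.inner_le _ _ _).trans (mul_le_mul_of_nonneg_left ?_ hCb)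
      rw [norm_gradient_sub_eq]
      exact hD.dlip x (by rwa [mem_ball, dist_eq_norm]) xh (mem_ball_self hr)
    have := norm_nonneg (x - xh)
    rw [hMdef]; nlinarith
  have hexp : ∀ α x p t, ⟪b x α, p + (e * t) • gradient D x⟫
      = ⟪b x α, p⟫ + t * (e * ⟪b x α, gradient D x⟫) := by
    intro α x p t; rw [inner_add_right, real_inner_smul_right]; ring
  rcases hdich with ⟨α, hα⟩ | hα
  · set c := -(e * ⟪b xh α, gradient D xh⟫) / 2 with hc
    have hcp : 0 < c := by rw [hc]; linarith
    refine ⟨c, hcp, min r (c / M), by positivity, Or.inl ?_⟩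
    intro x hx hxr t ht p
    have h1 := hvar α x hx (hxr.trans_le (min_le_left _ _))
    have h2 := hxr.trans_le (min_le_right _ _)
    rw [lt_div_iff₀ hM] at h2
    have h3 : e * ⟪b x α, gradient D x⟫ ≤ -c := by
      have := (abs_le.1 h1).2; linarith
    have h4 := h.low x (p + (e * t) • gradient D x) α
    rw [hexp] at h4
    have h5 := (abs_le.1 (h.inner_le x p α)).2
    have h6 := (abs_le.1 (h.hl x α)).2
    have h7 := mul_le_mul_of_nonneg_left h3 ht
    linarith
  · have hcont : Continuous (fun α => e * ⟪b xh α, gradient D xh⟫) :=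
      continuous_const.mul (hbc.inner continuous_const)
    obtain ⟨α0, -, hmin⟩ := isCompact_univ.exists_isMinOn (univ_nonempty (α := A)) hcont.continuousOn
    set c := (e * ⟪b xh α0, gradient D xh⟫) / 2 with hc
    have hcp : 0 < c := by have := hα α0; rw [hc]; linarith
    refine ⟨c, hcp, min r (c / M), by positivity, Or.inr ?_⟩
    intro x hx hxr t ht p
    refine h.up fun α => ?_
    have h1 := hvar α x hx (hxr.trans_le (min_le_left _ _))
    have h2 := hxr.trans_le (min_le_right _ _)
    rw [lt_div_iff₀ hM] at h2
    have hm : e * ⟪b xh α0, gradient D xh⟫ ≤ e * ⟪b xh α, gradient D xh⟫ := hmin (mem_univ α)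
    have h3 : c ≤ e * ⟪b x α, gradient D x⟫ := by
      have := (abs_le.1 h1).1; linarith
    rw [hexp]
    have h5 := (abs_le.1 (h.inner_le x p α)).1
    have h6 := (abs_le.1 (h.hl x α)).1
    have h7 := mul_le_mul_of_nonneg_left h3 ht
    linarith

lemma gradient_sdist {Ω : Set (Euc N)} {n : Euc N → Euc N} (hn : IsExteriorNormal Ω n) {x : Euc N}
    (hx : x ∈ frontier Ω) : gradient (sdist Ω) x = - n x := (hn x hx).2.gradient

lemma coer_bdry {Ω : Set (Euc N)} {A : Type} [TopologicalSpace A] [CompactSpace A] [Nonempty A]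
    {b : Euc N → A → Euc N} {l : Euc N → A → ℝ} {n : Euc N → Euc N} (hn : IsExteriorNormal Ω n)
    {H : Euc N → Euc N → ℝ} {Cb Cl Lb : ℝ} {om : ℝ → ℝ} (h : HamOK Ω b l H Cb Cl Lb om)
    {xh : Euc N} {r CD : ℝ} (hD : GoodD (sdist Ω) xh r CD) (hxh : xh ∈ frontier Ω)
    (hbc : Continuous (b xh)) (hB : AssumptionB Ω n b) :
    ∃ c > 0, ∃ r' > 0, ∀ e : ℝ, e = 1 ∨ e = -1 → Coer Ω H (sdist Ω) xh Cb Cl c r' e := by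
  have hmem : xh ∈ GammaIn Ω n b ∪ GammaOut Ω n b ∪ GammaMix Ω n b := by rw [hB.1]; exact hxh
  have hcl := frontier_subset_closure hxh
  have hg : ∀ α, ⟪b xh α, gradient (sdist Ω) xh⟫ = - ⟪b xh α, n xh⟫ := by
    intro α; rw [gradient_sdist hn hxh, inner_neg_right]
  have d1 : (∃ α, (1:ℝ) * ⟪b xh α, gradient (sdist Ω) xh⟫ < 0) ∨
      (∀ α, 0 < (1:ℝ) * ⟪b xh α, gradient (sdist Ω) xh⟫) := by
    simp only [hg, one_mul]
    rcases hmem with (hm | hm) | hm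
    · right; intro α; have := hm.2 α; linarith
    · left; obtain ⟨α⟩ := (inferInstance : Nonempty A); have := hm.2 α; exact ⟨α, by linarith⟩
    · left; obtain ⟨-, α1, α2, h1, h2⟩ := hm; exact ⟨α2, by linarith⟩
  have d2 : (∃ α, (-1:ℝ) * ⟪b xh α, gradient (sdist Ω) xh⟫ < 0) ∨
      (∀ α, 0 < (-1:ℝ) * ⟪b xh α, gradient (sdist Ω) xh⟫) := by
    simp only [hg]
    rcases hmem with (hm | hm) | hm
    · left; obtain ⟨α⟩ := (inferInstance : Nonempty A); have := hm.2 α; exact ⟨α, by linarith⟩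
    · right; intro α; have := hm.2 α; linarith
    · left; obtain ⟨-, α1, α2, h1, h2⟩ := hm; exact ⟨α1, by linarith⟩
  obtain ⟨c1, hc1, r1, hr1, k1⟩ := coer_one h hD hcl hbc (by norm_num) d1
  obtain ⟨c2, hc2, r2, hr2, k2⟩ := coer_one h hD hcl hbc (by norm_num) d2
  refine ⟨min c1 c2, by positivity, min r1 r2, by positivity, ?_⟩
  rintro e (rfl | rfl)
  · exact k1.mono (min_le_left _ _) (min_le_left _ _)
  · exact k2.mono (min_le_right _ _) (min_le_right _ _)

/-- Local boundary data around `xh`. -/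
structure Loc (Ω : Set (Euc N)) (n : Euc N → Euc N) (D : Euc N → ℝ) (xh : Euc N) (r CD : ℝ) :
    Prop where
  good : GoodD D xh r CD
  nn : ∀ x ∈ closure Ω, 0 ≤ D x
  fr : ∀ x ∈ frontier Ω, ‖x - xh‖ < r → D x = 0 ∧ gradient D x = - n x ∧ ‖n x‖ = 1

lemma loc_bdry {hN : 0 < N} {Ω : Set (Euc N)} (hΩ : IsW2Domain hN Ω) {n : Euc N → Euc N}
    (hn : IsExteriorNormal Ω n) {xh : Euc N} (hxh : xh ∈ frontier Ω) :
    ∃ r CD, Loc Ω n (sdist Ω) xh r CD := by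
  obtain ⟨r, CD, h⟩ := goodD_sdist hΩ hxh
  exact ⟨r, CD, h, fun x hx => sdist_nonneg hx, fun x hx _ =>
    ⟨sdist_frontier hΩ.1 hx, gradient_sdist hn hx, (hn x hx).1⟩⟩

lemma loc_int {Ω : Set (Euc N)} (hΩo : IsOpen Ω) (n : Euc N → Euc N) {xh : Euc N} (hxh : xh ∈ Ω) :
    ∃ r CD, Loc Ω n (fun _ => 0) xh r CD := by
  obtain ⟨r, hr, hrU⟩ := Metric.isOpen_iff.1 hΩo _ hxh
  refine ⟨r, 0, ⟨hr, le_rfl, by intro x y; simp, contDiffOn_const, by intro x _ y _; simp⟩,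
    fun _ _ => le_rfl, fun x hx hxr => ?_⟩
  have h1 : x ∈ Ω := hrU (by rwa [mem_ball, dist_eq_norm])
  rw [hΩo.frontier_eq] at hx
  exact absurd h1 hx.2

section neu
variable {Ω : Set (Euc N)} {n : Euc N → Euc N} {D L : Euc N → ℝ} {xh : Euc N} {r CD : ℝ}

lemma slope_nonpos {ε K τ : ℝ} (hε : 0 < ε) (hK : 0 ≤ K) {x y : Euc N}
    (h : D x ≤ D y) : slope D ε K τ x y ≤ 0 := by
  unfold slope
  exact mul_nonpos_of_nonneg_of_nonpos (by positivity)
    (div_nonpos_of_nonpos_of_nonneg (by linarith) (Real.sqrt_nonneg _))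

lemma slope_nonneg {ε K τ : ℝ} (hε : 0 < ε) (hK : 0 ≤ K) {x y : Euc N}
    (h : D y ≤ D x) : 0 ≤ slope D ε K τ x y := by
  unfold slope
  exact mul_nonneg (by positivity) (div_nonneg (by linarith) (Real.sqrt_nonneg _))

lemma slope_abs_le {ε K τ : ℝ} (hε : 0 < ε) (hK : 0 ≤ K) (hτ : 0 < τ) (x y : Euc N) :
    |slope D ε K τ x y| ≤ K / ε := by
  unfold slope
  rw [abs_mul, abs_of_nonneg (by positivity : 0 ≤ K / ε), abs_div,
    abs_of_pos (Real.sqrt_pos.2 (sq_pos_aux _ hτ))]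
  refine mul_le_of_le_one_right (by positivity) ?_
  rw [div_le_one (Real.sqrt_pos.2 (sq_pos_aux _ hτ))]
  exact Real.abs_le_sqrt (by nlinarith [sq_nonneg τ])

lemma slope_abs_ge {ε K τ : ℝ} (hε : 0 < ε) (hK : 0 ≤ K) (hτ : 0 < τ) {x y : Euc N}
    (h : τ < |D x - D y|) : K / ε / 2 ≤ |slope D ε K τ x y| := by
  unfold slope
  have hs := Real.sqrt_pos.2 (sq_pos_aux (D x - D y) hτ)
  rw [abs_mul, abs_of_nonneg (by positivity : 0 ≤ K / ε), abs_div, abs_of_pos hs]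
  rw [div_eq_mul_one_div]
  refine mul_le_mul_of_nonneg_left ?_ (by positivity)
  rw [div_le_div_iff₀ (by norm_num) hs, one_mul, Real.sqrt_le_left (by positivity)]
  have := sq_abs (D x - D y)
  nlinarith

lemma neumann_x (h : Loc Ω n D xh r CD) {ε K τ lam η : ℝ} (hε : 0 < ε) (hK : 0 ≤ K)
    (hl : 0 ≤ lam) (hη : 2 * CD * η ^ 2 < lam)
    (hL : ∀ x y, |L x - L y| ≤ lam * ‖x - y‖) {x y : Euc N} (hy : y ∈ closure Ω)
    (hxr : ‖x - xh‖ < r) (hyr : ‖y - xh‖ < r) (hxy : ‖x - y‖ ≤ η * ε) (hx : x ∈ frontier Ω) :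
    0 < ⟪px D L ε K τ (2 * lam) x y, n x⟫ := by
  obtain ⟨h0, hg, h1⟩ := h.fr x hx hxr
  have hDy := h.nn y hy
  have hCD := h.good.CD_nonneg
  have ht := h.good.taylor (x := x) (y := y) (by rwa [mem_ball, dist_eq_norm])
    (by rwa [mem_ball, dist_eq_norm])
  rw [fderiv_eq_inner, hg, inner_neg_left, norm_sub_rev y x, h0] at ht
  have hs : slope D ε K τ x y ≤ 0 := slope_nonpos hε hK (by linarith)
  have hLn : -lam ≤ ⟪gradient L x, n x⟫ := by
    have := (abs_le.1 (abs_real_inner_le_norm (gradient L x) (n x))).1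
    rw [h1, mul_one] at this
    linarith [norm_gradient_le hl hL x]
  have hnn : ⟪n x, n x⟫ = 1 := by rw [real_inner_self_eq_norm_sq, h1]; norm_num
  unfold px
  rw [hg, h0]
  simp only [inner_add_left, inner_sub_left, real_inner_smul_left, inner_neg_left, hnn, zero_div,
    Real.cos_zero]
  have hin : -(CD * ‖x - y‖ ^ 2) ≤ ⟪x, n x⟫ - ⟪y, n x⟫ := by
    have := (abs_le.1 ht).2
    rw [inner_sub_right, real_inner_comm, real_inner_comm x] at this
    linarith
  have hsq : ‖x - y‖ ^ 2 ≤ η ^ 2 * ε ^ 2 := by rw [← mul_pow]; gcongr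
  have hin2 : -(2 * CD * η ^ 2) ≤ 2 / ε ^ 2 * (⟪x, n x⟫ - ⟪y, n x⟫) := by
    have e1 : -(CD * (η ^ 2 * ε ^ 2)) ≤ ⟪x, n x⟫ - ⟪y, n x⟫ := by
      have := mul_le_mul_of_nonneg_left hsq hCD; linarith
    have e2 := mul_le_mul_of_nonneg_left e1 (by positivity : 0 ≤ 2 / ε ^ 2)
    refine le_trans (le_of_eq ?_) e2
    field_simp
  linarith

lemma neumann_y (h : Loc Ω n D xh r CD) {ε K τ lam η : ℝ} (hε : 0 < ε) (hK : 0 ≤ K)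
    (hl : 0 ≤ lam) (hη : 2 * CD * η ^ 2 < lam) {x y : Euc N} (hx : x ∈ closure Ω)
    (hxr : ‖x - xh‖ < r) (hyr : ‖y - xh‖ < r) (hxy : ‖x - y‖ ≤ η * ε) (hy : y ∈ frontier Ω) :
    0 < ⟪-(py D ε K τ (2 * lam) x y), n y⟫ := by
  obtain ⟨h0, hg, h1⟩ := h.fr y hy hyr
  have hDx := h.nn x hx
  have hCD := h.good.CD_nonneg
  have ht := h.good.taylor (x := y) (y := x) (by rwa [mem_ball, dist_eq_norm])
    (by rwa [mem_ball, dist_eq_norm])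
  rw [fderiv_eq_inner, hg, inner_neg_left, h0] at ht
  have hs : 0 ≤ slope D ε K τ x y := slope_nonneg hε hK (by linarith)
  have hnn : ⟪n y, n y⟫ = 1 := by rw [real_inner_self_eq_norm_sq, h1]; norm_num
  unfold py
  rw [hg, h0]
  simp only [inner_add_left, inner_sub_left, real_inner_smul_left, inner_neg_left, hnn, zero_div,
    Real.cos_zero]
  have hin : ⟪x, n y⟫ - ⟪y, n y⟫ ≤ CD * ‖x - y‖ ^ 2 := by
    have := (abs_le.1 ht).2
    rw [inner_sub_right, real_inner_comm, real_inner_comm y] at this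
    linarith
  have hsq : ‖x - y‖ ^ 2 ≤ η ^ 2 * ε ^ 2 := by rw [← mul_pow]; gcongr
  have hin2 : 2 / ε ^ 2 * (⟪x, n y⟫ - ⟪y, n y⟫) ≤ 2 * CD * η ^ 2 := by
    have e1 : ⟪x, n y⟫ - ⟪y, n y⟫ ≤ CD * (η ^ 2 * ε ^ 2) := by
      have := mul_le_mul_of_nonneg_left hsq hCD; linarith
    have e2 := mul_le_mul_of_nonneg_left e1 (by positivity : 0 ≤ 2 / ε ^ 2)
    refine e2.trans (le_of_eq ?_)
    field_simp
  linarith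
end neu

end

section
lemma inc_chi {σ : ℝ} (hσ : σ ∈ Ioo (0:ℝ) 1) {ε : ℝ} (hε : 0 < ε) (hε1 : ε ≤ 1) {B A1 Cj P : ℝ}
    (hB : 0 ≤ B) (hA : 0 ≤ A1) (hCj : 0 < Cj) {a z : Euc N} (ha : ‖a‖ ≤ Cj * ‖z‖)
    (h1 : P ≤ 2 * B) (h2 : P ≤ A1 * (‖a‖ / ε) + (‖a‖ / ε) ^ 2) :
    P ≤ (2 * B + A1 * Cj + Cj ^ 2) * ε ^ (-((1 + σ) / 2)) * chi σ z := by
  have hm := min_div_le (N := N) hσ hε hε1 z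
  have hC : 0 ≤ 2 * B + A1 * Cj + Cj ^ 2 := by positivity
  have key : P ≤ (2 * B + A1 * Cj + Cj ^ 2) * min 1 (‖z‖ / ε) := by
    have ht0 : 0 ≤ ‖z‖ / ε := by positivity
    rcases le_total 1 (‖z‖ / ε) with h | h
    · rw [min_eq_left h]
      have := mul_nonneg hA hCj.le
      nlinarith [sq_nonneg Cj]
    · rw [min_eq_right h]
      have h3 : ‖a‖ / ε ≤ Cj * (‖z‖ / ε) := by
        rw [← mul_div_assoc]; exact div_le_div_of_nonneg_right ha hε.le
      have h30 : 0 ≤ ‖a‖ / ε := by positivity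
      have h4 : (‖a‖ / ε) ^ 2 ≤ Cj ^ 2 * (‖z‖ / ε) := by
        calc (‖a‖ / ε) ^ 2 ≤ (Cj * (‖z‖ / ε)) ^ 2 := by gcongr
          _ = Cj ^ 2 * ((‖z‖ / ε) * (‖z‖ / ε)) := by ring
          _ ≤ Cj ^ 2 * ((‖z‖ / ε) * 1) := by gcongr
          _ = _ := by ring
      have h5 := mul_le_mul_of_nonneg_left h3 hA
      have h6 := mul_nonneg hB ht0
      nlinarith
  calc P ≤ _ := key
    _ ≤ (2 * B + A1 * Cj + Cj ^ 2) * (ε ^ (-((1 + σ) / 2)) * chi σ z) := by gcongr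
    _ = _ := by ring

lemma inc_theta {σ : ℝ} (hσ : σ ∈ Ioo (0:ℝ) 1) {B θ P : ℝ}
    (hB : 0 ≤ B) (hθ : 0 ≤ θ) (hθ1 : θ ≤ 1) {z : Euc N}
    (h1 : P ≤ 4 * B) (h2 : P ≤ θ * (‖z‖ + ‖z‖ ^ 2)) :
    P ≤ (4 * B + 1) * (2 * θ ^ (σ / 4)) * chi σ z := by
  have hm := min_theta_le (N := N) hσ hθ hθ1 z
  have key : P ≤ (4 * B + 1) * min 1 (θ * (‖z‖ + ‖z‖ ^ 2)) := by
    have ht0 : 0 ≤ θ * (‖z‖ + ‖z‖ ^ 2) := by positivity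
    rcases le_total 1 (θ * (‖z‖ + ‖z‖ ^ 2)) with h | h
    · rw [min_eq_left h]; linarith
    · rw [min_eq_right h]
      have := mul_nonneg hB ht0
      linarith
  calc P ≤ _ := key
    _ ≤ (4 * B + 1) * (2 * θ ^ (σ / 4) * chi σ z) := by gcongr
    _ = _ := by ring

lemma cos_smul_le {δ t : ℝ} (hδ : 0 ≤ δ) {w : Euc N} (hw : ‖w‖ ≤ 2) :
    ‖(δ * Real.cos t) • w‖ ≤ 2 * δ := by
  rw [norm_smul, Real.norm_eq_abs, abs_mul, abs_of_nonneg hδ]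
  have h1 := Real.abs_cos_le_one t
  calc δ * |Real.cos t| * ‖w‖ ≤ δ * 1 * 2 := by gcongr
    _ = 2 * δ := by ring

lemma first_le {ε η : ℝ} (hε : 0 < ε) {x y : Euc N} (hxy : ‖x - y‖ ≤ η * ε) :
    ‖(2 / ε ^ 2) • (x - y)‖ ≤ 2 * η / ε := by
  rw [norm_smul, Real.norm_eq_abs, abs_of_nonneg (by positivity)]
  calc 2 / ε ^ 2 * ‖x - y‖ ≤ 2 / ε ^ 2 * (η * ε) := by gcongr
    _ = 2 * η / ε := by field_simp

section
variable {D L : Euc N → ℝ} {s : Euc N} {r CD : ℝ} {ε K τ δ lam η : ℝ} {x y : Euc N}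

lemma grad_le_two (hD : GoodD D s r CD) (x : Euc N) : ‖gradient D x‖ ≤ 2 := by
  rw [norm_gradient_eq]; exact hD.norm_fderiv_le x

lemma basex_le (hD : GoodD D s r CD) (hε : 0 < ε) (hδ : 0 ≤ δ) (hl : 0 ≤ lam)
    (hL : ∀ x y, |L x - L y| ≤ lam * ‖x - y‖) (hxy : ‖x - y‖ ≤ η * ε) :
    ‖(2 / ε ^ 2) • (x - y) + (gradient L x - (δ * Real.cos (D x / ε)) • gradient D x)‖
      ≤ 2 * η / ε + (lam + 2 * δ) := by
  refine (norm_add_le _ _).trans (add_le_add (first_le hε hxy) ?_)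
  exact (norm_sub_le _ _).trans (add_le_add (norm_gradient_le hl hL x)
    (cos_smul_le hδ (grad_le_two hD x)))

lemma basey_le (hD : GoodD D s r CD) (hε : 0 < ε) (hδ : 0 ≤ δ) (hl : 0 ≤ lam)
    (hxy : ‖x - y‖ ≤ η * ε) :
    ‖(2 / ε ^ 2) • (x - y) + (δ * Real.cos (D y / ε)) • gradient D y‖
      ≤ 2 * η / ε + (lam + 2 * δ) := by
  refine (norm_add_le _ _).trans (add_le_add (first_le hε hxy) ?_)
  have := cos_smul_le (t := D y / ε) hδ (grad_le_two hD y)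
  linarith

lemma py_le (hD : GoodD D s r CD) (hε : 0 < ε) (hK : 0 ≤ K) (hτ : 0 < τ) (hδ : 0 ≤ δ)
    (hxy : ‖x - y‖ ≤ η * ε) :
    ‖py D ε K τ δ x y‖ ≤ 2 * η / ε + 2 * δ + K / ε * 2 := by
  unfold py
  refine (norm_add_le _ _).trans (add_le_add ?_ ?_)
  · exact (norm_add_le _ _).trans (add_le_add (first_le hε hxy)
      (cos_smul_le hδ (grad_le_two hD y)))
  · rw [norm_smul, Real.norm_eq_abs]
    have := slope_abs_le (D := D) hε hK hτ x y
    have := grad_le_two hD y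
    gcongr

lemma pxy_le (hD : GoodD D s r CD) (hε : 0 < ε) (hK : 0 ≤ K) (hτ : 0 < τ) (hδ : 0 ≤ δ)
    (hl : 0 ≤ lam) (hL : ∀ x y, |L x - L y| ≤ lam * ‖x - y‖)
    (hxr : ‖x - s‖ < r) (hyr : ‖y - s‖ < r)
    (hxy : ‖x - y‖ ≤ η * ε) :
    ‖px D L ε K τ δ x y - py D ε K τ δ x y‖ ≤ lam + 4 * δ + K * CD * η := by
  have e : px D L ε K τ δ x y - py D ε K τ δ x y =
      (gradient L x - (δ * Real.cos (D x / ε)) • gradient D x)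
      - (δ * Real.cos (D y / ε)) • gradient D y
      + slope D ε K τ x y • (gradient D x - gradient D y) := by
    unfold px py; module
  rw [e]
  have h1 := norm_gradient_le hl hL x
  have h2 := cos_smul_le (t := D x / ε) hδ (grad_le_two hD x)
  have h3 := cos_smul_le (t := D y / ε) hδ (grad_le_two hD y)
  have h4 : ‖slope D ε K τ x y • (gradient D x - gradient D y)‖ ≤ K * CD * η := by
    rw [norm_smul, Real.norm_eq_abs, norm_gradient_sub_eq]
    have a1 := slope_abs_le (D := D) hε hK hτ x y
    have a2 := hD.dlip x (by rwa [mem_ball, dist_eq_norm]) y (by rwa [mem_ball, dist_eq_norm])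
    have := hD.CD_nonneg
    calc _ ≤ K / ε * (CD * (η * ε)) := by
            apply mul_le_mul a1 (a2.trans (by gcongr)) (norm_nonneg _) (by positivity)
      _ = _ := by field_simp
  have t1 := norm_add_le ((gradient L x - (δ * Real.cos (D x / ε)) • gradient D x)
      - (δ * Real.cos (D y / ε)) • gradient D y) (slope D ε K τ x y • (gradient D x - gradient D y))
  have t2 := norm_sub_le (gradient L x - (δ * Real.cos (D x / ε)) • gradient D x)
      ((δ * Real.cos (D y / ε)) • gradient D y)
  have t3 := norm_sub_le (gradient L x) ((δ * Real.cos (D x / ε)) • gradient D x)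
  linarith

lemma coer_gap {Ω : Set (Euc N)} {H : Euc N → Euc N → ℝ} {Cb Cl c r' T M : ℝ}
    (hcoer : ∀ e : ℝ, e = 1 ∨ e = -1 → Coer Ω H D s Cb Cl c r' e) (hc : 0 < c) (hKc : K * c = 4)
    (hCb : 0 ≤ Cb) (hε : 0 < ε) (hK : 0 ≤ K) (hτ : 0 < τ)
    (hx : x ∈ closure Ω) (hy : y ∈ closure Ω) (hxr : ‖x - s‖ < r') (hyr : ‖y - s‖ < r')
    (hbx : ‖(2 / ε ^ 2) • (x - y) + (gradient L x - (δ * Real.cos (D x / ε)) • gradient D x)‖ ≤ M)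
    (hby : ‖(2 / ε ^ 2) • (x - y) + (δ * Real.cos (D y / ε)) • gradient D y‖ ≤ M)
    (hHx : H x (px D L ε K τ δ x y) ≤ T) (hHy : -T ≤ H y (py D ε K τ δ x y))
    (hsmall : ε * (T + Cl + Cb * M) < 2) : |D x - D y| ≤ τ := by
  by_contra hcon
  push Not at hcon
  have hs := slope_abs_ge hε hK hτ hcon
  set q := slope D ε K τ x y with hq
  obtain ⟨e, he, hqe⟩ : ∃ e : ℝ, (e = 1 ∨ e = -1) ∧ q = e * |q| := by
    rcases le_total 0 q with h | h
    · exact ⟨1, Or.inl rfl, by rw [abs_of_nonneg h]; ring⟩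
    · exact ⟨-1, Or.inr rfl, by rw [abs_of_nonpos h]; ring⟩
  have h2 : 2 / ε ≤ c * |q| := by
    calc 2 / ε = c * (K / ε / 2) := by
            rw [show c * (K / ε / 2) = (K * c) / ε / 2 by ring, hKc]; ring
      _ ≤ _ := by gcongr
  have h3 : T + Cl + Cb * M < 2 / ε := by rw [lt_div_iff₀ hε]; linarith
  rcases hcoer e he with h | h
  · have := h x hx hxr |q| (abs_nonneg _)
      ((2 / ε ^ 2) • (x - y) + (gradient L x - (δ * Real.cos (D x / ε)) • gradient D x))
    rw [← hqe] at this
    have e1 := mul_le_mul_of_nonneg_left hbx hCb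
    have e2 : H x (px D L ε K τ δ x y) ≤ T := hHx
    unfold px at e2
    rw [← hq] at e2
    linarith
  · have := h y hy hyr |q| (abs_nonneg _)
      ((2 / ε ^ 2) • (x - y) + (δ * Real.cos (D y / ε)) • gradient D y)
    rw [← hqe] at this
    have e1 := mul_le_mul_of_nonneg_left hby hCb
    have e2 := hHy
    unfold py at e2
    rw [← hq] at e2
    linarith

end


end

section
set_option maxHeartbeats 2000000 in
/-- The estimate at a maximum point of the doubled function. -/
lemma core_point (hN : 0 < N) {Ω : Set (Euc N)} (hΩo : IsOpen Ω) {n : Euc N → Euc N}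
    {g : Euc N → Euc N → ℝ} {Cμ Dμ σ : ℝ} (hM : AssumptionM Ω g Cμ Dμ σ)
    {j : Euc N → Euc N → Euc N} {Aj : ℝ} (hJ0 : AssumptionJ0 Ω j Aj)
    {Cj' Cj Dj : ℝ} (hJ1 : AssumptionJ1 Ω j Cj' Cj Dj)
    {A : Type} {b : Euc N → A → Euc N} {l : Euc N → A → ℝ} {H : Euc N → Euc N → ℝ}
    [Nonempty A]
    {Cb Cl Lb : ℝ} {om : ℝ → ℝ} (hH : HamOK Ω b l H Cb Cl Lb om)
    {u v : Euc N → ℝ} (hu : UpperSemicontinuousOn u (closure Ω))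
    (hv : LowerSemicontinuousOn v (closure Ω)) {B : ℝ} (hB : 0 ≤ B)
    (hBu : ∀ x ∈ closure Ω, |u x| ≤ B) (hBv : ∀ x ∈ closure Ω, |v x| ≤ B)
    (hsub : IsSubSol Ω j g n Cj (statF H) u) (hsup : IsSuperSol Ω j g n Cj (statF H) v)
    {D L : Euc N → ℝ} {xh : Euc N} {r CD : ℝ} (hloc : Loc Ω n D xh r CD)
    {C5 ηb r1 : ℝ} (hηb : 0 < ηb) (hC5 : 0 ≤ C5)
    {lam : ℝ} (hl : 0 < lam) (hθ1 : lam * (1 + 9 * Cj) ≤ 1)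
    (hL : ContDiff ℝ 1 L) (hLl : ∀ x y, |L x - L y| ≤ lam * ‖x - y‖)
    {K : ℝ} (hK : 0 ≤ K) {C4 : ℝ} (hC4 : 0 ≤ C4)
    (h4 : ∀ x y a b : Euc N, ∀ t : ℝ, 0 ≤ t → ‖x - xh‖ < r / 2 → ‖y - xh‖ < r / 2 →
      ‖a‖ ≤ Cj * t → ‖a - b‖ ≤ Dj * t * ‖x - y‖ →
      |(D (x + a) - D (y + b)) - (D x - D y)| ≤ C4 * t * ‖x - y‖)
    {c r' : ℝ}
    (hcoer : (∀ x y, D x = D y) ∨ (0 < c ∧ K * c = 4 ∧ ∀ e : ℝ, e = 1 ∨ e = -1 →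
      Coer Ω H D xh Cb Cl c r' e))
    {η : ℝ} (hη : 0 < η) (hη1 : η ≤ 1) (hηr : η ≤ r / 2) (hηr' : η ≤ r') (hηr1 : η ≤ r1)
    (hη2 : 2 * CD * η ^ 2 < lam) (hη3 : η * (2 * Dj + Dj ^ 2 + K * C4) ≤ lam)
    (hη4 : Cb * (K * CD * η) ≤ lam) (hη5 : Lb * (η * (2 + 2 * K + 4 * lam)) ≤ lam)
    (hη6 : 2 * Cb * η ≤ 1)
    {κ : ℝ} (hκ : 2 * B * Cμ * κ ≤ lam)
    (hfar : ∀ x ∈ closure Ω, ∀ y ∈ closure Ω, ‖x - xh‖ < η → ‖y - xh‖ < η →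
      ∫ z in bad Ω j x y ∩ {z | ηb ≤ ‖z‖}, kerN N σ z ≤ κ)
    {ε τ C1 : ℝ} (hε : 0 < ε) (hε1 : ε ≤ 1) (hτ : 0 < τ)
    (hC1 : C1 = 2 * B + (2 + 2 * K + lam + 2 * (2 * lam)) * Cj + Cj ^ 2)
    (hnear : ∀ x ∈ closure Ω, ∀ y ∈ closure Ω, ‖x - xh‖ < r1 → ‖y - xh‖ < r1 →
      ‖x - y‖ ≤ ε → |D x - D y| ≤ τ →
      ∫ z in bad Ω j x y ∩ {z | ‖z‖ < ηb}, kk σ z ≤ C5 * ε)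
    (hom : ∀ t, t ≤ ε → om t ≤ lam)
    (he1 : C1 * Dμ * (∫ z : Euc N, kk σ z) * (ε ^ (-((1 + σ) / 2)) * ε) ≤ lam)
    (he2 : C1 * Cμ * C5 * (ε ^ (-((1 + σ) / 2)) * ε) ≤ lam)
    (he3 : ε * (lam + B + Cl + Cb * (lam + 2 * (2 * lam)))
      + C1 * Cμ * (∫ z : Euc N, kk σ z) * (ε ^ (-((1 + σ) / 2)) * ε) < 1)
    {x y : Euc N} (hx : x ∈ closure Ω) (hy : y ∈ closure Ω)
    (hmax : ∀ x' ∈ closure Ω, ∀ y' ∈ closure Ω,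
      u x' - v y' - pen D L ε K τ (2 * lam) x' y' ≤ u x - v y - pen D L ε K τ (2 * lam) x y)
    (hxη : ‖x - xh‖ < η) (hyη : ‖y - xh‖ < η) (hxy : ‖x - y‖ ≤ η * ε) :
    u x - v y ≤ 8 * lam + 9 * Cb * lam +
      (4 * B + 1) * (2 * (lam * (1 + 9 * Cj)) ^ (σ / 4)) * Cμ * ∫ z : Euc N, kk σ z := by
  obtain ⟨hM1, hDμ, hgl⟩ := id hM
  obtain ⟨hCμ, hσ, -, -, -⟩ := id hM1
  obtain ⟨-, hCj, hDj, hj, hjl⟩ := id hJ1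
  have hD := hloc.good
  have hr := hD.r_pos
  have hIk : 0 ≤ ∫ z : Euc N, kk σ z := integral_nonneg fun z => kk_nonneg σ z
  set Ik := ∫ z : Euc N, kk σ z with hIkdef
  have hδ : (0:ℝ) ≤ 2 * lam := by positivity
  have hxr2 : ‖x - xh‖ < r / 2 := hxη.trans_le hηr
  have hyr2 : ‖y - xh‖ < r / 2 := hyη.trans_le hηr
  have hxr : ‖x - xh‖ < r := by linarith
  have hyr : ‖y - xh‖ < r := by linarith
  have hxyε : ‖x - y‖ ≤ ε := hxy.trans (by nlinarith)
  have hC1p : 0 ≤ C1 := by rw [hC1]; positivity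
  set E := ε ^ (-((1 + σ) / 2)) with hE
  have hE0 : 0 ≤ E := by positivity
  have hw : UpperSemicontinuousOn (fun x => - v x) (closure Ω) := hv.neg
  have hBw : ∀ x ∈ closure Ω, |(fun x => - v x) x| ≤ B := fun x hx => by
    simpa using hBv x hx
  -- one-variable increments
  have h1 : ∀ z, x + j x z ∈ closure Ω → u (x + j x z) - u x ≤ C1 * E * chi σ z := by
    intro z hz
    rw [hC1]
    refine inc_chi hσ hε hε1 hB (by positivity) hCj (hj x hx z).2 ?_ ?_
    · have a1 := abs_le.1 (hBu _ hz); have a2 := abs_le.1 (hBu _ hx); linarith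
    · have := hmax _ hz _ hy
      have h' := pen_inc_x (D := D) (L := L) (τ := τ) hε hε1 hK hδ hl.le hτ hD.lip hLl hxyε (j x z)
      linarith
  have h2 : ∀ z, y + j y z ∈ closure Ω →
      (fun x => - v x) (y + j y z) - (fun x => - v x) y ≤ C1 * E * chi σ z := by
    intro z hz
    rw [hC1]
    refine inc_chi hσ hε hε1 hB (by positivity) hCj (hj y hy z).2 ?_ ?_
    · have a1 := abs_le.1 (hBv _ hz); have a2 := abs_le.1 (hBv _ hy)
      simp only; linarith
    · have := hmax _ hx _ hz
      have h' := pen_inc_y (D := D) (L := L) (τ := τ) hε hε1 hK hδ hl.le hτ hD.lip hxyε (j y z)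
      simp only; linarith
  have hΘ0 : 0 ≤ lam * (1 + 9 * Cj) := by positivity
  have h3 : ∀ z, x + j x z ∈ closure Ω → y + j y z ∈ closure Ω →
      (u (x + j x z) - u x) + ((fun x => - v x) (y + j y z) - (fun x => - v x) y) ≤
        (4 * B + 1) * (2 * (lam * (1 + 9 * Cj)) ^ (σ / 4)) * chi σ z := by
    intro z hzx hzy
    refine inc_theta hσ hB hΘ0 hθ1 ?_ ?_
    · have a1 := abs_le.1 (hBv _ hzy); have a2 := abs_le.1 (hBv _ hy)
      have a3 := abs_le.1 (hBu _ hzx); have a4 := abs_le.1 (hBu _ hx)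
      simp only; linarith
    · have := hmax _ hzx _ hzy
      have hab := hjl x hx y hy z
      have h' := pen_inc_xy (D := D) (L := L) (τ := τ) hε hK hδ hl.le hτ hη.le hη1 hC4 hCj hDj
        hD.lip hLl hxy (norm_nonneg z) (hj x hx z).2 (hj y hy z).2 hab
        (h4 x y _ _ _ (norm_nonneg z) hxr2 hyr2 (hj x hx z).2 hab)
      have ht : 0 ≤ ‖z‖ + ‖z‖ ^ 2 := by positivity
      have h'' : (η * (2 * Dj + Dj ^ 2 + K * C4) + Cj * (lam + 4 * (2 * lam))) * (‖z‖ + ‖z‖ ^ 2)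
          ≤ lam * (1 + 9 * Cj) * (‖z‖ + ‖z‖ ^ 2) := by
        apply mul_le_mul_of_nonneg_right _ ht
        linarith
      simp only; linarith
  -- viscosity inequalities
  obtain ⟨ξ1, hξ1, hS⟩ := sub_ineq hN hM1 hJ0 hJ1 hΩo hsub hx (φ := fun x' => pen D L ε K τ (2 * lam) x' y)
    (ρ := r / 2) (by linarith)
    (pen_cd_x hτ y (hD.cd.mono (by
      intro w hw
      rw [mem_ball, dist_eq_norm] at hw ⊢
      calc ‖w - xh‖ = ‖(w - x) + (x - xh)‖ := by congr 1; abel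
        _ ≤ ‖w - x‖ + ‖x - xh‖ := norm_add_le _ _
        _ < r := by linarith)) hL)
    (pen_grad_x hε hτ (hD.diffAt (by rwa [mem_ball, dist_eq_norm]))
      (hL.differentiable one_ne_zero x))
    (by
      intro x' _ hx'
      have := hmax x' hx' y hy
      linarith)
    (fun hfr => neumann_x hloc hε hK hl.le hη2 hLl hy hxr hyr hxy hfr) hl
  obtain ⟨ξ2, hξ2, hT⟩ := sub_ineq hN hM1 hJ0 hJ1 hΩo (super_to_sub hsup) hy
    (φ := fun y' => pen D L ε K τ (2 * lam) x y')
    (ρ := r / 2) (by linarith)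
    (pen_cd_y hτ x (hD.cd.mono (by
      intro w hw
      rw [mem_ball, dist_eq_norm] at hw ⊢
      calc ‖w - xh‖ = ‖(w - y) + (y - xh)‖ := by congr 1; abel
        _ ≤ ‖w - y‖ + ‖y - xh‖ := norm_add_le _ _
        _ < r := by linarith)))
    (pen_grad_y hε hτ (hD.diffAt (by rwa [mem_ball, dist_eq_norm])))
    (by
      intro y' _ hy'
      have := hmax x hx y' hy'
      linarith)
    (fun hfr => neumann_y hloc hε hK hl.le hη2 hx hxr hyr hxy hfr) hl
  have hξ : 0 < min ξ1 ξ2 / 2 := by have := lt_min hξ1 hξ2; linarith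
  have hS' := hS _ hξ (by have := min_le_left ξ1 ξ2; linarith)
  have hT' := hT _ hξ (by have := min_le_right ξ1 ξ2; linarith)
  set ξ := min ξ1 ξ2 / 2 with hξdef
  simp only [neg_neg] at hT'
  set P := px D L ε K τ (2 * lam) x y with hP
  set Q := py D ε K τ (2 * lam) x y with hQ
  -- coercivity
  have hgap : |D x - D y| ≤ τ := by
    rcases hcoer with h0 | ⟨hc, hKc, hco⟩
    · rw [h0 x y, sub_self, abs_zero]; exact hτ.le
    · have b1 := Iout_bound hN hM1 hJ0 hu hBu hx (by positivity) h1 hξ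
      have b2 := Iout_bound hN hM1 hJ0 hw hBw hy (by positivity) h2 hξ
      have a1 := abs_le.1 (hBu _ hx)
      have a2 := abs_le.1 (hBv _ hy)
      refine coer_gap (L := L) (δ := 2 * lam) (T := lam + B + C1 * E * Cμ * Ik) hco hc hKc hH.Cb0 hε hK hτ hx hy
        (hxη.trans_le hηr') (hyη.trans_le hηr') (basex_le hD hε hδ hl.le hLl hxy)
        (basey_le hD hε hδ hl.le hxy) (by linarith) (by linarith) ?_
      have e1 : ε * (lam + B + C1 * E * Cμ * Ik + Cl + Cb * (2 * η / ε + (lam + 2 * (2 * lam))))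
          = (ε * (lam + B + Cl + Cb * (lam + 2 * (2 * lam))) + C1 * Cμ * Ik * (E * ε))
            + 2 * Cb * η := by field_simp; ring
      rw [e1]; linarith
  -- Hamiltonian
  have hHd := hH.diff (p := P) (q := Q) hx hy
  have hPQ : Cb * ‖P - Q‖ ≤ 9 * Cb * lam + lam := by
    have := pxy_le hD hε hK hτ hδ hl.le hLl hxr hyr hxy
    have := mul_le_mul_of_nonneg_left this hH.Cb0
    calc _ ≤ _ := this
      _ = 9 * Cb * lam + Cb * (K * CD * η) := by ring
      _ ≤ _ := by linarith
  have hQb : Lb * ‖x - y‖ * ‖Q‖ ≤ lam := by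
    have hq := py_le hD hε hK hτ hδ hxy
    refine le_trans ?_ hη5
    rw [mul_assoc]
    refine mul_le_mul_of_nonneg_left ?_ hH.Lb0
    calc ‖x - y‖ * ‖Q‖ ≤ (η * ε) * (2 * η / ε + 2 * (2 * lam) + K / ε * 2) := by
          apply mul_le_mul hxy hq (norm_nonneg _) (by positivity)
      _ = η * (2 * η + 4 * lam * ε + 2 * K) := by field_simp; ring
      _ ≤ η * (2 + 2 * K + 4 * lam) := by
          apply mul_le_mul_of_nonneg_left _ hη.le
          nlinarith
  have homb := hom _ hxyε
  -- nonlocal terms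
  have hI := int_comp hN hM hJ0 hu hw hBu hBw hx hy (c1 := C1 * E)
    (c2 := (4 * B + 1) * (2 * (lam * (1 + 9 * Cj)) ^ (σ / 4))) (by positivity) (by positivity)
    h1 h2 h3 hηb hξ
  rw [← hIkdef] at hI
  have n1 := hnear x hx y hy (hxη.trans_le hηr1) (hyη.trans_le hηr1) hxyε hgap
  have n2 := hfar x hx y hy hxη hyη
  have m1 : C1 * E * Cμ * (∫ z in bad Ω j x y ∩ {z | ‖z‖ < ηb}, kk σ z) ≤ lam := by
    calc _ ≤ C1 * E * Cμ * (C5 * ε) := by gcongr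
      _ = C1 * Cμ * C5 * (E * ε) := by ring
      _ ≤ lam := he2
  have m2 : 2 * B * Cμ * (∫ z in bad Ω j x y ∩ {z | ηb ≤ ‖z‖}, kerN N σ z) ≤ lam := by
    calc _ ≤ 2 * B * Cμ * κ := by gcongr
      _ ≤ lam := hκ
  have m3 : C1 * E * (Dμ * ‖x - y‖) * Ik ≤ lam := by
    calc _ ≤ C1 * E * (Dμ * ε) * Ik := by gcongr
      _ = C1 * Dμ * Ik * (E * ε) := by ring
      _ ≤ lam := he1
  have m4 : ((4 * B + 1) * (2 * (lam * (1 + 9 * Cj)) ^ (σ / 4)) * Cμ + C1 * E * (Dμ * ‖x - y‖)) * Ik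
      = (4 * B + 1) * (2 * (lam * (1 + 9 * Cj)) ^ (σ / 4)) * Cμ * Ik
        + C1 * E * (Dμ * ‖x - y‖) * Ik := by ring
  linarith


end

section
lemma ev_small {f : ℝ → ℝ} (hf : ContinuousAt f 0) {c : ℝ} (h : f 0 < c) :
    ∀ᶠ t in 𝓝[>] (0:ℝ), f t ≤ c := by
  have := hf.eventually_lt_const h
  exact (this.filter_mono nhdsWithin_le_nhds).mono fun t ht => le_of_lt ht

lemma ev_small' {f : ℝ → ℝ} (hf : ContinuousAt f 0) {c : ℝ} (h : f 0 < c) :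
    ∀ᶠ t in 𝓝[>] (0:ℝ), f t < c := by
  have := hf.eventually_lt_const h
  exact nhdsWithin_le_nhds this

set_option maxHeartbeats 1000000 in
lemma core (hN : 0 < N) {Ω : Set (Euc N)} (hΩo : IsOpen Ω) (hfr : volume (frontier Ω) = 0)
    {n : Euc N → Euc N}
    {g : Euc N → Euc N → ℝ} {Cμ Dμ σ : ℝ} (hM : AssumptionM Ω g Cμ Dμ σ)
    {j : Euc N → Euc N → Euc N} {Aj : ℝ} (hJ0 : AssumptionJ0 Ω j Aj)
    {Cj' Cj Dj : ℝ} (hJ1 : AssumptionJ1 Ω j Cj' Cj Dj)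
    {A : Type} {b : Euc N → A → Euc N} {l : Euc N → A → ℝ} {H : Euc N → Euc N → ℝ}
    [Nonempty A]
    {Cb Cl Lb : ℝ} {om : ℝ → ℝ} (hH : HamOK Ω b l H Cb Cl Lb om) (hmod : IsModulus om)
    {u v : Euc N → ℝ} (hu : UpperSemicontinuousOn u (closure Ω))
    (hv : LowerSemicontinuousOn v (closure Ω)) {B : ℝ} (hB : 0 ≤ B)
    (hBu : ∀ x ∈ closure Ω, |u x| ≤ B) (hBv : ∀ x ∈ closure Ω, |v x| ≤ B)
    (hsub : IsSubSol Ω j g n Cj (statF H) u) (hsup : IsSuperSol Ω j g n Cj (statF H) v)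
    {D L : Euc N → ℝ} {xh : Euc N} {r CD : ℝ} (hloc : Loc Ω n D xh r CD)
    {C5 ηb r1 : ℝ} (hηb : 0 < ηb) (hr1 : 0 < r1) (hC5 : 0 ≤ C5)
    (hnear : BadNear Ω j σ D xh C5 ηb r1)
    {lam : ℝ} (hl : 0 < lam) (hθ1 : lam * (1 + 9 * Cj) ≤ 1)
    (hL : ContDiff ℝ 1 L) (hLl : ∀ x y, |L x - L y| ≤ lam * ‖x - y‖)
    (hcoer : (∀ x y, D x = D y) ∨ ∃ c > 0, ∃ r' > 0, ∀ e : ℝ, e = 1 ∨ e = -1 →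
      Coer Ω H D xh Cb Cl c r' e)
    (hL0 : ∀ x, 0 ≤ L x) (hxh : xh ∈ closure Ω)
    (hstrict : ∀ x ∈ closure Ω, x ≠ xh → u x - v x - L x < u xh - v xh - L xh)
    (hpos : 0 ≤ u xh - v xh - L xh)
    {R : ℝ} (hR : ∀ x, R < ‖x‖ → 2 * B + 5 ≤ L x) :
    u xh - v xh - L xh ≤ 9 * lam + 9 * Cb * lam +
      (4 * B + 1) * (2 * (lam * (1 + 9 * Cj)) ^ (σ / 4)) * Cμ * ∫ z : Euc N, kk σ z := by
  obtain ⟨hM1, hDμ, hgl⟩ := id hM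
  obtain ⟨hCμ, hσ, -, -, -⟩ := id hM1
  obtain ⟨-, hCj, hDj, hj, hjl⟩ := id hJ1
  have hD := hloc.good
  have hr := hD.r_pos
  -- normalised coercivity data
  obtain ⟨K, c, r', hK, hr', hco⟩ : ∃ K c r' : ℝ, 0 ≤ K ∧ 0 < r' ∧
      ((∀ x y, D x = D y) ∨ (0 < c ∧ K * c = 4 ∧ ∀ e : ℝ, e = 1 ∨ e = -1 →
      Coer Ω H D xh Cb Cl c r' e)) := by
    rcases hcoer with h | ⟨c, hc, r', hr', h⟩
    · exact ⟨1, 1, 1, zero_le_one, one_pos, Or.inl h⟩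
    · exact ⟨4 / c, c, r', by positivity, hr', Or.inr ⟨hc, by field_simp, h⟩⟩
  obtain ⟨C4, hC4, h4⟩ := four_all hD hCj hDj
  set C1 := 2 * B + (2 + 2 * K + lam + 2 * (2 * lam)) * Cj + Cj ^ 2 with hC1
  set κ := lam / (2 * B * Cμ + 1) with hκdef
  have hκ : 0 < κ := by positivity
  have hκ' : 2 * B * Cμ * κ ≤ lam := by
    rw [hκdef, mul_div_assoc', div_le_iff₀ (by positivity)]
    nlinarith
  obtain ⟨r2, hr2, hfar⟩ := bad_far hN hJ0 hJ1 hΩo hσ hfr hxh hηb hκ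
  obtain ⟨η, ⟨hη0, g1, g2, g3, g4, g5⟩, k1, k2, k3, k4, k5, k6⟩ :
      ∃ η : ℝ, (0 < η ∧ η ≤ 1 ∧ η ≤ r / 2 ∧ η ≤ r' ∧ η ≤ r1 ∧ η ≤ r2) ∧
        2 * CD * η ^ 2 < lam ∧ η * (2 * Dj + Dj ^ 2 + K * C4) ≤ lam ∧
        Cb * (K * CD * η) ≤ lam ∧ Lb * (η * (2 + 2 * K + 4 * lam)) ≤ lam ∧
        2 * Cb * η ≤ 1 ∧ η ≤ lam := by
    have e0 : ∀ᶠ t in 𝓝[>] (0:ℝ), 0 < t := self_mem_nhdsWithin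
    have e1 : ∀ c : ℝ, 0 < c → ∀ᶠ t in 𝓝[>] (0:ℝ), t ≤ c := fun c hc =>
      ev_small (f := fun t => t) continuousAt_id hc
    have e2 : ∀ᶠ t in 𝓝[>] (0:ℝ), 2 * CD * t ^ 2 < lam :=
      ev_small' (f := fun t => 2 * CD * t ^ 2) (by fun_prop) (by simpa using hl)
    have e3 : ∀ᶠ t in 𝓝[>] (0:ℝ), t * (2 * Dj + Dj ^ 2 + K * C4) ≤ lam :=
      ev_small (f := fun t => t * (2 * Dj + Dj ^ 2 + K * C4)) (by fun_prop) (by simpa using hl)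
    have e4 : ∀ᶠ t in 𝓝[>] (0:ℝ), Cb * (K * CD * t) ≤ lam :=
      ev_small (f := fun t => Cb * (K * CD * t)) (by fun_prop) (by simpa using hl)
    have e5 : ∀ᶠ t in 𝓝[>] (0:ℝ), Lb * (t * (2 + 2 * K + 4 * lam)) ≤ lam :=
      ev_small (f := fun t => Lb * (t * (2 + 2 * K + 4 * lam))) (by fun_prop) (by simpa using hl)
    have e6 : ∀ᶠ t in 𝓝[>] (0:ℝ), 2 * Cb * t ≤ 1 :=
      ev_small (f := fun t => 2 * Cb * t) (by fun_prop) (by simp)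
    exact ((e0.and ((e1 1 one_pos).and ((e1 (r / 2) (by linarith)).and ((e1 r' hr').and
      ((e1 r1 hr1).and (e1 r2 hr2)))))).and (e2.and (e3.and (e4.and (e5.and (e6.and
      (e1 lam hl))))))).exists
  obtain ⟨e0, he0, he01, hdoub⟩ := doubling isClosed_closure hu hv hL.continuous hBu hBv hL0 hxh
    hstrict hpos hR hη0
  set Ik := ∫ z : Euc N, kk σ z with hIkdef
  have hγ : 0 < 1 - (1 + σ) / 2 := by have := hσ.2; linarith
  obtain ⟨ε, hε, q1, q2, q3, q4, q5, q6⟩ : ∃ ε : ℝ, 0 < ε ∧ ε ≤ e0 ∧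
      2 * (2 * (2 * lam) * ε + K * ε) ≤ e0 ∧ om ε ≤ lam ∧
      C1 * Dμ * Ik * ε ^ (1 - (1 + σ) / 2) ≤ lam ∧
      C1 * Cμ * C5 * ε ^ (1 - (1 + σ) / 2) ≤ lam ∧
      ε * (lam + B + Cl + Cb * (lam + 2 * (2 * lam)))
        + C1 * Cμ * Ik * ε ^ (1 - (1 + σ) / 2) < 1 := by
    have hz : (0:ℝ) ^ (1 - (1 + σ) / 2) = 0 := Real.zero_rpow hγ.ne'
    have hc : ContinuousAt (fun t : ℝ => t ^ (1 - (1 + σ) / 2)) 0 :=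
      Real.continuousAt_rpow_const 0 _ (Or.inr hγ.le)
    have e0' : ∀ᶠ t in 𝓝[>] (0:ℝ), 0 < t := self_mem_nhdsWithin
    have e1 : ∀ᶠ t in 𝓝[>] (0:ℝ), t ≤ e0 := ev_small (f := fun t => t) continuousAt_id he0
    have e2 : ∀ᶠ t in 𝓝[>] (0:ℝ), 2 * (2 * (2 * lam) * t + K * t) ≤ e0 :=
      ev_small (f := fun t => 2 * (2 * (2 * lam) * t + K * t)) (by fun_prop) (by simpa using he0)
    have e3 : ∀ᶠ t in 𝓝[>] (0:ℝ), om t ≤ lam :=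
      (hmod.2.2.eventually_lt_const hl).mono fun t ht => ht.le
    have e4 : ∀ᶠ t in 𝓝[>] (0:ℝ), C1 * Dμ * Ik * t ^ (1 - (1 + σ) / 2) ≤ lam :=
      ev_small (f := fun t => C1 * Dμ * Ik * t ^ (1 - (1 + σ) / 2)) (continuousAt_const.mul hc)
        (by simpa [hz] using hl)
    have e5 : ∀ᶠ t in 𝓝[>] (0:ℝ), C1 * Cμ * C5 * t ^ (1 - (1 + σ) / 2) ≤ lam :=
      ev_small (f := fun t => C1 * Cμ * C5 * t ^ (1 - (1 + σ) / 2)) (continuousAt_const.mul hc)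
        (by simpa [hz] using hl)
    have e6 := ev_small' (f := fun t => t * (lam + B + Cl + Cb * (lam + 2 * (2 * lam)))
        + C1 * Cμ * Ik * t ^ (1 - (1 + σ) / 2)) (c := 1)
        ((continuousAt_id.mul continuousAt_const).add (continuousAt_const.mul hc))
        (by simp [hz])
    exact (e0'.and (e1.and (e2.and (e3.and (e4.and (e5.and e6)))))).exists
  have hε1 : ε ≤ 1 := q1.trans he01
  have hpow : ε ^ (-((1 + σ) / 2)) * ε = ε ^ (1 - (1 + σ) / 2) := by
    nth_rewrite 2 [← Real.rpow_one ε]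
    rw [← Real.rpow_add hε]; congr 1; ring
  obtain ⟨τ0, hτ0, hnr⟩ := hnear ε hε hε1
  set τ := min (ε ^ 2) τ0 with hτdef
  have hτ : 0 < τ := lt_min (by positivity) hτ0
  have hτε : K / ε * τ ≤ K * ε := by
    calc K / ε * τ ≤ K / ε * ε ^ 2 := by
          have := min_le_left (ε ^ 2) τ0
          gcongr
      _ = K * ε := by field_simp
  have hδ : (0:ℝ) ≤ 2 * lam := by positivity
  set e := 2 * (2 * lam) * ε + K / ε * τ with hedef
  have he2 : 2 * e ≤ e0 := by linarith
  have he1 : e ≤ 1 := by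
    have : 0 ≤ e := by positivity
    linarith
  have hDc : Continuous D := hD.continuous
  obtain ⟨x, hx, y, hy, hmax, hlow⟩ := exists_max isClosed_closure hu hv hBu hBv hL0 hxh hpos hR
    (pen_cont hDc hL.continuous ε K τ (2 * lam)) hε hε1 he1
    (pen_low D L hε hK hδ hτ.le) (pen_up D L hε hδ hτ.le xh)
  obtain ⟨d1, d2, d3, d4⟩ := hdoub ε (2 * e) hε q1 he2 x hx y hy hlow
  have fin := core_point hN hΩo hM hJ0 hJ1 hH hu hv hB hBu hBv hsub hsup hloc hηb hC5 hl hθ1 hL hLl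
    hK hC4 h4 hco hη0 g1 g2 g3 g4 k1 k2 k3 k4 k5 hκ'
    (fun x hx y hy h1 h2 => hfar x hx y hy (h1.trans_le g5) (h2.trans_le g5)) hε hε1 hτ hC1
    (fun x hx y hy h1 h2 h3 h4 => hnr x hx y hy h1 h2 h3 (h4.trans (min_le_right _ _)))
    (fun t ht => (hmod.2.1 ht).trans q3)
    (by rw [hpow]; exact q4) (by rw [hpow]; exact q5) (by rw [hpow]; exact q6)
    hx hy hmax d1 d2 d3
  linarith

theorem main_aux
    (hN : 0 < N) (Ω : Set (Euc N)) (hΩ : IsW2Domain hN Ω)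
    (n : Euc N → Euc N) (hn : IsExteriorNormal Ω n)
    (g : Euc N → Euc N → ℝ) (Cμ Dμ σ : ℝ) (hM : AssumptionM Ω g Cμ Dμ σ)
    (j : Euc N → Euc N → Euc N) (Aj : ℝ) (hJ0 : AssumptionJ0 Ω j Aj)
    (Cj' Cj Dj : ℝ) (hJ1 : AssumptionJ1 Ω j Cj' Cj Dj)
    {A : Type} [MetricSpace A] [CompactSpace A] [Nonempty A]
    (b : Euc N → A → Euc N) (l : Euc N → A → ℝ) (H : Euc N → Euc N → ℝ)
    (hHam : StatBellmanOK Ω n b l H)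
    (u v : Euc N → ℝ)
    (hu : UpperSemicontinuousOn u (closure Ω)) (hub : BddOn u (closure Ω))
    (hv : LowerSemicontinuousOn v (closure Ω)) (hvb : BddOn v (closure Ω))
    (hsub : IsSubSol Ω j g n Cj (statF H) u) (hsup : IsSuperSol Ω j g n Cj (statF H) v) :
    ∀ x ∈ closure Ω, u x ≤ v x := by
  intro x1 hx1
  by_contra hcon
  push Not at hcon
  obtain ⟨⟨hbc, ⟨Mb, hMb⟩, hlc, ⟨Ml, hMl⟩⟩, hBel, ⟨om, hmod, hom⟩, ⟨Lb, hLb, hbl⟩, hAB⟩ := hHam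
  have hH : HamOK Ω b l H (max Mb 0) (max Ml 0) Lb om :=
    ⟨hBel, le_max_right _ _, fun x α => (hMb x α).trans (le_max_left _ _), le_max_right _ _,
      fun x α => (hMl x α).trans (le_max_left _ _), hLb.le, hbl, hom⟩
  obtain ⟨Mu, hMu⟩ := hub
  obtain ⟨Mv, hMv⟩ := hvb
  set B := max Mu Mv with hBdef
  have hBu : ∀ x ∈ closure Ω, |u x| ≤ B := fun x hx => (hMu x hx).trans (le_max_left _ _)
  have hBv : ∀ x ∈ closure Ω, |v x| ≤ B := fun x hx => (hMv x hx).trans (le_max_right _ _)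
  have hB : 0 ≤ B := (abs_nonneg _).trans (hBu x1 hx1)
  obtain ⟨hM1, hDμ, hgl⟩ := id hM
  obtain ⟨hCμ, hσ, -, -, -⟩ := id hM1
  obtain ⟨-, hCj, hDj, hj, hjl⟩ := id hJ1
  have hfr := frontier_null hΩ hn
  set Cb := max Mb 0 with hCb
  obtain ⟨lam, hl, hθ1, hsmall⟩ : ∃ lam : ℝ, 0 < lam ∧ lam * (1 + 9 * Cj) ≤ 1 ∧
      9 * lam + 9 * Cb * lam +
      (4 * B + 1) * (2 * (lam * (1 + 9 * Cj)) ^ (σ / 4)) * Cμ * (∫ z : Euc N, kk σ z)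
        < (u x1 - v x1) / 2 := by
    have hσ4 : 0 < σ / 4 := by have := hσ.1; linarith
    have e0 : ∀ᶠ t in 𝓝[>] (0:ℝ), 0 < t := self_mem_nhdsWithin
    have e1 : ∀ᶠ t in 𝓝[>] (0:ℝ), t * (1 + 9 * Cj) ≤ 1 :=
      ev_small (f := fun t => t * (1 + 9 * Cj)) (by fun_prop) (by simp)
    have e2 := ev_small' (f := fun lam => 9 * lam + 9 * Cb * lam +
      (4 * B + 1) * (2 * (lam * (1 + 9 * Cj)) ^ (σ / 4)) * Cμ * (∫ z : Euc N, kk σ z))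
      (c := (u x1 - v x1) / 2)
      (by
        have : Continuous (fun lam : ℝ => (lam * (1 + 9 * Cj)) ^ (σ / 4)) :=
          (Real.continuous_rpow_const hσ4.le).comp (by fun_prop)
        fun_prop)
      (by simp [Real.zero_rpow hσ4.ne']; linarith)
    exact (e0.and (e1.and e2)).exists
  have hw : UpperSemicontinuousOn (fun x => u x - v x) (closure Ω) := by
    have := hu.add hv.neg
    simpa [sub_eq_add_neg] using this
  obtain ⟨xh, hxh, L, hL, hLl, hL0, hstrict, hhalf, R, hR⟩ := exists_L isClosed_closure hw
    (B := 2 * B) (fun x hx => by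
      have a1 := abs_le.1 (hBu x hx); have a2 := abs_le.1 (hBv x hx)
      rw [abs_le]; constructor <;> linarith) hx1 (by simpa using hcon) hl
  have hpos : 0 ≤ u xh - v xh - L xh := by linarith
  by_cases hin : xh ∈ Ω
  · obtain ⟨r, CD, hloc⟩ := loc_int hΩ.1 n hin
    obtain ⟨C5, hC5, ηb, hηb, r1, hr1, hnear⟩ := badNear_int hJ1 hΩ.1 (σ := σ) hin (fun _ => 0)
    have := core hN hΩ.1 hfr hM hJ0 hJ1 hH hmod hu hv hB hBu hBv hsub hsup hloc hηb hr1 hC5 hnear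
      hl hθ1 hL hLl (Or.inl fun _ _ => rfl) hL0 hxh hstrict hpos hR
    linarith
  · have hf : xh ∈ frontier Ω := by rw [hΩ.1.frontier_eq]; exact ⟨hxh, hin⟩
    obtain ⟨r, CD, hloc⟩ := loc_bdry hΩ hn hf
    obtain ⟨C5, hC5, ηb, hηb, r1, hr1, hnear⟩ := badNear_bdry hΩ hn hJ0 hJ1 hσ hf
    have hco := coer_bdry hn hH hloc.good hf (by fun_prop) hAB
    have := core hN hΩ.1 hfr hM hJ0 hJ1 hH hmod hu hv hB hBu hBv hsub hsup hloc hηb hr1 hC5 hnear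
      hl hθ1 hL hLl (Or.inr hco) hL0 hxh hstrict hpos hR
    linarith


end

/-- **Comparison principle (Bellman case).**  If `Ω` is of class `W^{2,∞}`, the measures
satisfy (M), the jump function satisfies (J0), (J1), and `H` is a Bellman Hamiltonian
satisfying (C), (L), (B), then any bounded usc viscosity subsolution `u` and bounded lsc
viscosity supersolution `v` of `u - I[u] + H(x, Du) = 0` in `Ω`, with generalized
Neumann boundary condition `∂u/∂n = 0` on `∂Ω`, satisfy `u ≤ v` on `closure Ω`. -/
theorem comparison_bellman
    (hN : 0 < N) (Ω : Set (Euc N)) (hΩ : IsW2Domain hN Ω)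
    (n : Euc N → Euc N) (hn : IsExteriorNormal Ω n)
    (g : Euc N → Euc N → ℝ) (Cμ Dμ σ : ℝ) (hM : AssumptionM Ω g Cμ Dμ σ)
    (j : Euc N → Euc N → Euc N) (Aj : ℝ) (hJ0 : AssumptionJ0 Ω j Aj)
    (Cj' Cj Dj : ℝ) (hJ1 : AssumptionJ1 Ω j Cj' Cj Dj)
    {A : Type} [MetricSpace A] [CompactSpace A] [Nonempty A]
    (b : Euc N → A → Euc N) (l : Euc N → A → ℝ) (H : Euc N → Euc N → ℝ)
    (hHam : StatBellmanOK Ω n b l H)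
    (u v : Euc N → ℝ)
    (hub : BddOn u (closure Ω)) (husc : UpperSemicontinuousOn u (closure Ω))
    (hsub : IsSubSol Ω j g n Cj (statF H) u)
    (hvb : BddOn v (closure Ω)) (hlsc : LowerSemicontinuousOn v (closure Ω))
    (hsup : IsSuperSol Ω j g n Cj (statF H) v) :
    ∀ x ∈ closure Ω, u x ≤ v x := by
  exact main_aux hN Ω hΩ n hn g Cμ Dμ σ hM j Aj hJ0 Cj' Cj Dj hJ1 b l H hHam u v
    husc hub hlsc hvb hsub hsup

end Censored

end
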